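/- arXiv:2403.20243 — 4 statements merged into one kernel-verified Lean document; each statement's English description precedes it below -/
import Mathlib

section
/- Let E be a separable Banach space, let μ be a centered Gaussian probability measure on E with full topological support, and let V : E → ℝ be Borel measurable. Suppose there is an open set U₀ ⊆ E on which V is continuously Fréchet differentiable, and a point f ∈ U₀ at which the Fréchet derivative d_f V is nonzero. Then there exists an open neighborhood O ⊆ U₀ of f such that the measure B ↦ μ(O ∩ V⁻¹(B)) on the Borel sets B ⊆ ℝ (the pushforward under V of the restriction of μ to O) is absolutely continuous with respect to Lebesgue measure on ℝ. -/
open MeasureTheory ProbabilityTheory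

lemma aux_null (g g' : ℝ → ℝ) (s N : Set ℝ) (hs : IsOpen s) (hconv : Convex ℝ s)
    (hg : ∀ t ∈ s, HasDerivAt g (g' t) t) (hpos : ∀ t ∈ s, 0 < g' t)
    (hN : volume N = 0) : volume (s ∩ g ⁻¹' N) = 0 := by
  have hmono : StrictMonoOn g s := by
    refine strictMonoOn_of_deriv_pos hconv
      (fun t ht => (hg t ht).continuousAt.continuousWithinAt) fun t ht => ?_
    have ht' := interior_subset ht
    rw [(hg t ht').deriv]; exact hpos t ht'
  have h1 := lintegral_image_eq_lintegral_abs_deriv_mul hs.measurableSet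
    (fun t ht => (hg t ht).hasDerivWithinAt) hmono.injOn
    (Set.indicator (toMeasurable volume N) 1)
  have h0 : ∫⁻ x in g '' s, (toMeasurable volume N).indicator (1 : ℝ → ENNReal) x = 0 := by
    refine le_antisymm ((setLIntegral_le_lintegral _ _).trans ?_) zero_le
    rw [lintegral_indicator_one (measurableSet_toMeasurable _ _), measure_toMeasurable, hN]
  have hgs : ContinuousOn g s := fun t ht => (hg t ht).continuousAt.continuousWithinAt
  have hgm : AEMeasurable g (volume.restrict s) := hgs.aemeasurable hs.measurableSet
  have hg'm : AEMeasurable g' (volume.restrict s) := by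
    refine (measurable_deriv g).aemeasurable.congr ?_
    filter_upwards [ae_restrict_mem hs.measurableSet] with t ht using (hg t ht).deriv
  rw [h0] at h1
  have h2 := (lintegral_eq_zero_iff' (by
    refine (hg'm.norm.ennreal_ofReal).mul ?_
    exact (measurable_one.indicator (measurableSet_toMeasurable _ _)).comp_aemeasurable hgm)).1
      h1.symm
  rw [Filter.EventuallyEq, ae_restrict_iff' hs.measurableSet] at h2
  refine measure_mono_null ?_ (ae_iff.1 h2)
  rintro t ⟨hts, htN⟩
  have hm : g t ∈ toMeasurable volume N := subset_toMeasurable _ _ htN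
  simp [hts, hm, (hpos t hts).ne']

lemma aux_decomp {E : Type*} [NormedAddCommGroup E] [NormedSpace ℝ E] [CompleteSpace E]
    [SecondCountableTopology E] [MeasurableSpace E] [BorelSpace E]
    (μ : Measure E) [IsProbabilityMeasure μ]
    (hGauss : ∀ L : E →L[ℝ] ℝ, ∃ v : NNReal, μ.map L = gaussianReal 0 v)
    (hSupp : ∀ U : Set E, IsOpen U → U.Nonempty → 0 < μ U)
    (L : E →L[ℝ] ℝ) (hL : L ≠ 0) :
    ∃ (k : E) (v : NNReal) (P : E →L[ℝ] E), v ≠ 0 ∧ L k = 1 ∧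
      μ = (μ.prod (gaussianReal 0 v)).map (fun p => P p.1 + p.2 • k) := by
  have hG : IsGaussian μ := isGaussian_of_map_eq_gaussianReal fun L => ⟨0, hGauss L⟩
  have hmean : ∀ M : E →L[ℝ] ℝ, ∫ x, M x ∂μ = 0 := fun M => by
    obtain ⟨v, hv⟩ := hGauss M
    have := integral_map (μ := μ) (φ := M) (by fun_prop) (f := fun x : ℝ => x) (by fun_prop)
    rw [← this, hv, integral_id_gaussianReal]
  have hvar : ∀ M : E →L[ℝ] ℝ, Var[M; μ] = ∫ x, M x ^ 2 ∂μ := fun M =>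
    variance_of_integral_eq_zero (by fun_prop) (hmean M)
  have hcf : ∀ M : E →L[ℝ] ℝ, charFunDual μ M = Complex.exp (-((∫ x, M x ^ 2 ∂μ : ℝ) : ℂ) / 2) := by
    intro M
    rw [IsGaussian.charFunDual_eq, hvar, integral_complex_ofReal, hmean]
    congr 1; simp; ring
  have hmem : ∀ M : E →L[ℝ] ℝ, MemLp M 2 μ := fun M => IsGaussian.memLp_dual μ M 2 (by simp)
  obtain ⟨v, hv⟩ := hGauss L
  have hLv : ∫ x, L x ^ 2 ∂μ = v := by
    have := integral_map (μ := μ) (φ := L) (by fun_prop) (f := fun x : ℝ => x ^ 2) (by fun_prop)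
    rw [← this, hv, ← variance_of_integral_eq_zero (X := fun x : ℝ => x) (by fun_prop)
      integral_id_gaussianReal, variance_fun_id_gaussianReal]
  have hv0 : v ≠ 0 := by
    rintro rfl
    obtain ⟨x, hx⟩ : ∃ x, L x ≠ 0 := by
      by_contra! h
      exact hL (by ext x; simpa using h x)
    have h1 := hSupp (L ⁻¹' {0}ᶜ) (isOpen_compl_singleton.preimage L.continuous) ⟨x, hx⟩
    rw [← Measure.map_apply (by fun_prop) (measurableSet_singleton _).compl, hv] at h1
    simp at h1
  have hint : Integrable (fun x => L x • x) μ :=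
    memLp_one_iff_integrable.1
      (MemLp.smul (p := 2) (q := 2) (r := 1) (IsGaussian.memLp_id μ 2 (by simp)) (hmem L))
  set h : E := ∫ x, L x • x ∂μ with hh
  have hMh : ∀ M : E →L[ℝ] ℝ, M h = ∫ x, L x * M x ∂μ := fun M => by
    rw [hh, ← M.integral_comp_comm hint]; simp
  have hv0' : (v : ℝ) ≠ 0 := by exact_mod_cast hv0
  set k : E := (v : ℝ)⁻¹ • h with hk
  have hMk : ∀ M : E →L[ℝ] ℝ, ∫ x, L x * M x ∂μ = v * M k := fun M => by
    rw [← hMh, hk]; simp [hv0']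
  let P : E →L[ℝ] E := ContinuousLinearMap.id ℝ E - L.smulRight k
  refine ⟨k, v, P, hv0, ?_, ?_⟩
  · have := hMk L
    simp_rw [← pow_two] at this
    rw [hLv] at this
    exact mul_left_cancel₀ hv0' (by linarith)
  let T : E × ℝ →L[ℝ] E := P.comp (.fst ℝ E ℝ) + (ContinuousLinearMap.snd ℝ E ℝ).smulRight k
  have hT : (fun p : E × ℝ => P p.1 + p.2 • k) = T := by ext p; simp [T]
  rw [hT]
  have : IsProbabilityMeasure ((μ.prod (gaussianReal 0 v)).map T) :=
    Measure.isProbabilityMeasure_map (by fun_prop)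
  refine Measure.ext_of_charFunDual ?_
  ext M
  rw [charFunDual_map, charFunDual_prod, hcf, hcf, IsGaussian.charFunDual_eq,
    integral_complex_ofReal, integral_continuousLinearMap_gaussianReal,
    variance_continuousLinearMap_gaussianReal, ← Complex.exp_add]
  have e1 : ∀ x, ((M.comp T).comp (.inl ℝ E ℝ)) x = M x - M k * L x := by
    intro x; simp [T, P]; ring
  have e2 : ((M.comp T).comp (.inr ℝ E ℝ)) 1 = M k := by simp [T]
  have e3 : ∫ x, ((M.comp T).comp (.inl ℝ E ℝ)) x ^ 2 ∂μ
      = (∫ x, M x ^ 2 ∂μ) - v * M k ^ 2 := by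
    have i1 : Integrable (fun x => M x ^ 2) μ := (hmem M).integrable_sq
    have i2 : Integrable (fun x => L x ^ 2) μ := (hmem L).integrable_sq
    have i3 : Integrable (fun x => L x * M x) μ := (hmem L).integrable_mul (hmem M)
    have : ∀ x, ((M.comp T).comp (.inl ℝ E ℝ)) x ^ 2
        = M x ^ 2 - 2 * M k * (L x * M x) + M k ^ 2 * L x ^ 2 := by
      intro x; rw [e1]; ring
    simp_rw [this]
    have i4 : Integrable (fun x => M x ^ 2 - 2 * M k * (L x * M x)) μ :=
      i1.sub (i3.const_mul _)
    rw [integral_add i4 (i2.const_mul _), integral_sub i1 (i3.const_mul _), integral_const_mul, integral_const_mul, hMk, hLv]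
    ring
  rw [e3, e2]
  congr 1
  have e4 : max (M k ^ 2) 0 = M k ^ 2 := max_eq_left (sq_nonneg _)
  have e5 : M (T (0, 0)) = 0 := by
    rw [show ((0, 0) : E × ℝ) = 0 from rfl, map_zero, map_zero]
  simp [e4, e5]
  ring

/-- Let `E` be a separable Banach space, `μ` a centered Gaussian probability
measure on `E` with full topological support, and `V : E → ℝ` Borel measurable. If `V` is `C¹`
on an open set `U₀` and its Fréchet derivative at some `f ∈ U₀` is nonzero, then there is an
open neighborhood `O ⊆ U₀` of `f` such that the pushforward under `V` of the restriction of `μ`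
to `O` is absolutely continuous with respect to Lebesgue measure. -/
theorem stmt0 {E : Type*} [NormedAddCommGroup E] [NormedSpace ℝ E] [CompleteSpace E]
    [SecondCountableTopology E] [MeasurableSpace E] [BorelSpace E]
    (μ : Measure E) [IsProbabilityMeasure μ]
    (hGauss : ∀ L : E →L[ℝ] ℝ, ∃ v : NNReal, μ.map L = gaussianReal 0 v)
    (hSupp : ∀ U : Set E, IsOpen U → U.Nonempty → 0 < μ U)
    (V : E → ℝ) (hV : Measurable V)
    (U₀ : Set E) (hU₀ : IsOpen U₀) (hC1 : ContDiffOn ℝ 1 V U₀)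
    (f : E) (hf : f ∈ U₀) (hder : fderiv ℝ V f ≠ 0) :
    ∃ O : Set E, IsOpen O ∧ f ∈ O ∧ O ⊆ U₀ ∧
      (μ.restrict O).map V ≪ (volume : Measure ℝ) := by
  obtain ⟨k, v, P, hv, hk, hμ⟩ := aux_decomp μ hGauss hSupp _ hder
  have hcont : ContinuousAt (fun x => fderiv ℝ V x k) f :=
    (((hC1.continuousOn_fderiv_of_isOpen hU₀ le_rfl).continuousAt
      (hU₀.mem_nhds hf)).clm_apply continuousAt_const)
  have hev : ∀ᶠ x in nhds f, x ∈ U₀ ∧ 0 < fderiv ℝ V x k :=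
    (hU₀.eventually_mem hf).and
      (hcont.eventually (lt_mem_nhds (by simp [hk])))
  obtain ⟨r, hr, hball⟩ := Metric.eventually_nhds_iff_ball.1 hev
  refine ⟨Metric.ball f r, Metric.isOpen_ball, Metric.mem_ball_self hr,
    fun x hx => (hball x hx).1, ?_⟩
  refine Measure.AbsolutelyContinuous.mk fun N hNm hN => ?_
  have hms : MeasurableSet (V ⁻¹' N ∩ Metric.ball f r) := (hV hNm).inter measurableSet_ball
  have hmT : Measurable (fun p : E × ℝ => P p.1 + p.2 • k) := by fun_prop
  rw [Measure.map_apply hV hNm, Measure.restrict_apply (hV hNm), hμ,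
    Measure.map_apply hmT hms, Measure.measure_prod_null (hmT hms)]
  refine Filter.Eventually.of_forall fun x => ?_
  refine gaussianReal_absolutelyContinuous 0 hv ?_
  have hpath : ∀ t : ℝ, HasDerivAt (fun t : ℝ => P x + t • k) k t := fun t => by
    simpa using ((hasDerivAt_id t).smul_const k).const_add (P x)
  refine measure_mono_null ?_ (aux_null (fun t : ℝ => V (P x + t • k))
    (fun t => fderiv ℝ V (P x + t • k) k)
    ((fun t : ℝ => P x + t • k) ⁻¹' Metric.ball f r) N
    (Metric.isOpen_ball.preimage (by fun_prop)) ?_ ?_ ?_ hN)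
  · rintro t ⟨h1, h2⟩
    exact ⟨h2, h1⟩
  · have := (convex_ball f r).affine_preimage (AffineMap.lineMap (P x) (P x + k) : ℝ →ᵃ[ℝ] E)
    have e : (fun t : ℝ => P x + t • k) = (AffineMap.lineMap (P x) (P x + k) : ℝ →ᵃ[ℝ] E) := by
      funext t
      simp [AffineMap.lineMap_apply, add_comm]
    rw [e]
    exact this
  · intro t ht
    have hd : DifferentiableAt ℝ V (P x + t • k) :=
      (hC1.differentiableOn one_ne_zero).differentiableAt (hU₀.mem_nhds (hball _ ht).1)
    exact hd.hasFDerivAt.comp_hasDerivAt t (hpath t)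
  · intro t ht
    exact (hball _ ht).2
end

section
/- Let m ≥ 2 and let f, h : ℝ^m → ℝ be of class C². Assume Z := f⁻¹(0) is compact and ∇f(x) ≠ 0 for every x ∈ Z. Then there exist ε > 0 and a bounded open set U ⊆ ℝ^m with Z ⊆ U such that the function φ(t) := ℋ^{m−1}({x ∈ U : f(x) + t·h(x) = 0}), defined for |t| < ε, is finite and has derivative at t = 0 equal to ∫_Z h(x)·(Hess_x f(ν(x),ν(x)) − Δf(x))/‖∇f(x)‖² dℋ^{m−1}(x), where ν(x) = ∇f(x)/‖∇f(x)‖. -/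
open MeasureTheory

/-- The Hessian bilinear form of `f : ℝ^m → ℝ` at `x`, evaluated at `(v, w)`. -/
noncomputable def hessianApply {m : ℕ} (f : EuclideanSpace ℝ (Fin m) → ℝ)
    (x v w : EuclideanSpace ℝ (Fin m)) : ℝ :=
  fderiv ℝ (fun y => fderiv ℝ f y) x v w

/-- The Laplacian of `f : ℝ^m → ℝ` at `x`, i.e. the trace of the Hessian. -/
noncomputable def laplacianApply {m : ℕ} (f : EuclideanSpace ℝ (Fin m) → ℝ)
    (x : EuclideanSpace ℝ (Fin m)) : ℝ :=
  ∑ i : Fin m, hessianApply f x (EuclideanSpace.single i 1) (EuclideanSpace.single i 1)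

section
open Set Filter Topology
open scoped ENNReal NNReal
set_option linter.unusedSectionVars false
set_option linter.unusedVariables false

theorem invNear {X : Type*} [NormedAddCommGroup X] [NormedSpace ℝ X] [CompleteSpace X]
    (F : X → X) (hF : ContDiff ℝ 1 F) (C : Set X) (hC : IsCompact C) (hinj : InjOn F C)
    (hd : ∀ c ∈ C, ∃ e : X ≃L[ℝ] X, fderiv ℝ F c = e) :
    ∃ W : Set X, IsOpen W ∧ C ⊆ W ∧ InjOn F W ∧ IsOpen (F '' W) ∧
      ∃ g : X → X, ContDiffOn ℝ 1 g (F '' W) ∧ ∀ w ∈ W, g (F w) = w := by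
  have hstrict : ∀ x, ∀ e : X ≃L[ℝ] X, fderiv ℝ F x = e → HasStrictFDerivAt F (e : X →L[ℝ] X) x := by
    intro x e he
    rw [← he]
    exact hF.contDiffAt.hasStrictFDerivAt (by norm_num)
  obtain ⟨T, hT, hTinj⟩ := hinj.exists_mem_nhdsSet hC (fun x _ => hF.continuous.continuousAt)
    (fun x hx => by
      obtain ⟨e, he⟩ := hd x hx
      have h := hstrict x e he
      refine ⟨(h.toOpenPartialHomeomorph F).source,
        (h.toOpenPartialHomeomorph F).open_source.mem_nhds h.mem_toOpenPartialHomeomorph_source, ?_⟩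
      exact (h.toOpenPartialHomeomorph F).injOn)
  let V : Set X := {x | ∃ e : X ≃L[ℝ] X, fderiv ℝ F x = e}
  have hVo : IsOpen V := by
    have : V = (fderiv ℝ F) ⁻¹' (range ((↑) : (X ≃L[ℝ] X) → (X →L[ℝ] X))) := by
      ext x; simp [V, eq_comm]
    rw [this]
    exact (ContinuousLinearEquiv.isOpen).preimage (hF.continuous_fderiv (by norm_num))
  obtain ⟨W0, hW0, hCW0, hW0T⟩ := mem_nhdsSet_iff_exists.1 hT
  have hopen : ∀ S ⊆ W0 ∩ V, IsOpen S → IsOpen (F '' S) := by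
    intro S hS hSo
    rw [isOpen_iff_mem_nhds]
    rintro _ ⟨x, hx, rfl⟩
    obtain ⟨e, he⟩ := (hS hx).2
    have h := hstrict x e he
    rw [← h.map_nhds_eq_of_equiv]
    exact image_mem_map (hSo.mem_nhds hx)
  have hinjW : InjOn F (W0 ∩ V) := hTinj.mono (inter_subset_left.trans hW0T)
  refine ⟨W0 ∩ V, hW0.inter hVo, fun c hc => ⟨hCW0 hc, hd c hc⟩, hinjW,
    hopen _ subset_rfl (hW0.inter hVo), ?_⟩
  rcases isEmpty_or_nonempty X with hX | hX
  · exact ⟨id, contDiff_id.contDiffOn, fun w => (hX.false w).elim⟩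
  refine ⟨Function.invFunOn F (W0 ∩ V), ?_, fun w hw => hinjW.leftInvOn_invFunOn hw⟩
  rintro _ ⟨x, hx, rfl⟩
  obtain ⟨e, he⟩ := hx.2
  apply ContDiffAt.contDiffWithinAt
  have h := hstrict x e he
  have h1 : HasFDerivAt F (e : X →L[ℝ] X) x := h.hasFDerivAt
  have h2 := hF.contDiffAt.to_localInverse h1 (by norm_num : (1:WithTop ℕ∞) ≠ 0)
  refine h2.congr_of_eventuallyEq ?_
  have h3 := h.eventually_right_inverse
  have h4 : Tendsto (hF.contDiffAt.localInverse h1 (by norm_num : (1:WithTop ℕ∞) ≠ 0)) (𝓝 (F x)) (𝓝 x) := by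
    have := h2.continuousAt
    unfold ContinuousAt at this
    rwa [ContDiffAt.localInverse_apply_image] at this
  filter_upwards [h3, h4 ((hW0.inter hVo).mem_nhds hx)] with y hy hy2
  have : F (hF.contDiffAt.localInverse h1 (by norm_num : (1:WithTop ℕ∞) ≠ 0) y) = y := hy
  conv_lhs => rw [← this]
  exact hinjW.leftInvOn_invFunOn hy2
theorem hcomp {X Y Z : Type*} [MetricSpace X] [MetricSpace Y] [MetricSpace Z]
    [MeasurableSpace Y] [BorelSpace Y] [MeasurableSpace Z] [BorelSpace Z]
    (a : X → Y) (b : X → Z) (S : Set X) (K : ℝ) (hK : 0 ≤ K) (n : ℕ)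
    (h : ∀ x ∈ S, ∀ y ∈ S, dist (a x) (a y) ≤ K * dist (b x) (b y)) :
    μH[(n : ℝ)] (a '' S) ≤ ENNReal.ofReal (K ^ n) * μH[(n : ℝ)] (b '' S) := by
  rcases S.eq_empty_or_nonempty with rfl | ⟨x0, hx0⟩
  · simp
  have : Nonempty X := ⟨x0⟩
  set g := Function.invFunOn b S
  have hg : ∀ z ∈ b '' S, g z ∈ S ∧ b (g z) = z := fun z hz =>
    ⟨Function.invFunOn_mem hz, Function.invFunOn_eq hz⟩
  have hL : LipschitzOnWith K.toNNReal (a ∘ g) (b '' S) := by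
    refine LipschitzOnWith.of_dist_le_mul fun u hu v hv => ?_
    have := h _ (hg u hu).1 _ (hg v hv).1
    rw [(hg u hu).2, (hg v hv).2] at this
    simpa [Real.coe_toNNReal K hK] using this
  have himg : a '' S = (a ∘ g) '' (b '' S) := by
    ext y; constructor
    · rintro ⟨x, hx, rfl⟩
      refine ⟨b x, ⟨x, hx, rfl⟩, ?_⟩
      have h1 := hg (b x) ⟨x, hx, rfl⟩
      have := h _ h1.1 _ hx
      rw [h1.2, dist_self, mul_zero] at this
      exact dist_le_zero.1 this
    · rintro ⟨z, hz, rfl⟩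
      exact ⟨g z, (hg z hz).1, rfl⟩
  rw [himg]
  refine (hL.hausdorffMeasure_image_le (by positivity)).trans ?_
  rw [ENNReal.rpow_natCast, ENNReal.ofReal_pow hK]
  rfl

section
variable {E : Type*} [NormedAddCommGroup E] [InnerProductSpace ℝ E] [FiniteDimensional ℝ E]
  [MeasurableSpace E] [BorelSpace E]

theorem finLoc (n : ℕ) (Z : Set E) (x0 : E) (P : Submodule ℝ E) (hP : Module.finrank ℝ P = n)
    (V : Set E) (hV : V ∈ 𝓝 x0)
    (ha : ∀ x ∈ Z ∩ V, ∀ y ∈ Z ∩ V, ‖x - y‖ ≤ 2 * ‖P.orthogonalProjectionOnto (x - y)‖) :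
    ∃ V' ∈ 𝓝 x0, μH[(n : ℝ)] (Z ∩ V') < ∞ := by
  refine ⟨V ∩ Metric.ball x0 1, inter_mem hV (Metric.ball_mem_nhds _ one_pos), ?_⟩
  have h := hcomp (id : E → E) P.orthogonalProjectionOnto (Z ∩ (V ∩ Metric.ball x0 1)) 2 (by norm_num) n
    (fun x hx y hy => by
      have := ha x ⟨hx.1, hx.2.1⟩ y ⟨hy.1, hy.2.1⟩
      rw [map_sub] at this
      simpa [dist_eq_norm] using this)
  rw [image_id] at h
  refine h.trans_lt (ENNReal.mul_lt_top ENNReal.ofReal_lt_top ?_)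
  subst hP
  apply Bornology.IsBounded.measure_lt_top
  exact P.lipschitzWith_orthogonalProjectionOnto.isBounded_image
    (Metric.isBounded_ball.subset (inter_subset_right.trans inter_subset_right))

theorem areaLoc (n : ℕ) (Z : Set E) (x0 : E) (P : Submodule ℝ E) (hP : Module.finrank ℝ P = n)
    (Φ : E → E) (B : P →L[ℝ] P) (K : ℝ) (hK : 0 ≤ K)
    (hB : ∀ v, ‖v‖ ≤ 2 * ‖B v‖)
    (ha : ∀ δ > 0, ∃ V ∈ 𝓝 x0, ∀ x ∈ Z ∩ V, ∀ y ∈ Z ∩ V,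
      ‖(x - y) - P.orthogonalProjectionOnto (x - y)‖ ≤ δ * ‖x - y‖)
    (hb : ∀ δ > 0, ∃ V ∈ 𝓝 x0, ∀ x ∈ Z ∩ V, ∀ y ∈ Z ∩ V,
      ‖P.orthogonalProjectionOnto (Φ x - Φ y) - B (P.orthogonalProjectionOnto (x - y))‖
        ≤ δ * ‖x - y‖)
    (hc : ∃ V ∈ 𝓝 x0, ∀ x ∈ Z ∩ V, ∀ y ∈ Z ∩ V,
      ‖Φ x - Φ y‖ ≤ K * ‖P.orthogonalProjectionOnto (Φ x - Φ y)‖)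
    (κ : ℝ) (hκ : 1 < κ) :
    ∃ V ∈ 𝓝 x0, ∀ S ⊆ Z ∩ V,
      μH[(n : ℝ)] (Φ '' S) ≤ ENNReal.ofReal (κ * K ^ n * |B.det|) * μH[(n : ℝ)] S ∧
      ENNReal.ofReal |B.det| * μH[(n : ℝ)] S ≤ ENNReal.ofReal κ * μH[(n : ℝ)] (Φ '' S) := by
  obtain ⟨ρ, hρ1, hρ⟩ : ∃ ρ : ℝ, 1 < ρ ∧ ρ ^ (2 * n) < κ := by
    have h1 : Tendsto (fun ρ : ℝ => ρ ^ (2 * n)) (𝓝[>] 1) (𝓝 1) := by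
      have : ContinuousAt (fun ρ : ℝ => ρ ^ (2 * n)) 1 := by fun_prop
      have h2 := this.tendsto
      simp only [one_pow] at h2
      exact h2.mono_left nhdsWithin_le_nhds
    obtain ⟨ρ, h2, h3⟩ := ((h1.eventually (gt_mem_nhds hκ)).and self_mem_nhdsWithin).exists
    exact ⟨ρ, h3, h2⟩
  have hρ0 : 0 < ρ := by linarith
  set δ : ℝ := (1 - 1 / ρ) / (2 * ρ) with hδ
  have hq : 0 < 1 - 1 / ρ := by
    rw [sub_pos, div_lt_one hρ0]; exact hρ1
  have hδ0 : 0 < δ := by positivity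
  have hδ1 : 2 * δ * ρ = 1 - 1 / ρ := by rw [hδ]; field_simp
  have hδ2 : δ ≤ 1 - 1 / ρ := by
    rw [← hδ1]; nlinarith
  have hq2 : (1 - 1 / ρ) * ρ = ρ - 1 := by field_simp
  obtain ⟨V1, hV1, h1⟩ := ha δ hδ0
  obtain ⟨V2, hV2, h2⟩ := hb δ hδ0
  obtain ⟨V3, hV3, h3⟩ := hc
  refine ⟨V1 ∩ (V2 ∩ V3), inter_mem hV1 (inter_mem hV2 hV3), fun S hS => ?_⟩
  set p := P.orthogonalProjectionOnto
  have e1 : ∀ x ∈ S, ∀ y ∈ S, ‖x - y‖ ≤ ρ * ‖p (x - y)‖ := by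
    intro x hx y hy
    have a1 := h1 x ⟨(hS hx).1, (hS hx).2.1⟩ y ⟨(hS hy).1, (hS hy).2.1⟩
    have a2 : ‖x - y‖ ≤ ‖(x - y) - p (x - y)‖ + ‖(p (x - y) : E)‖ := by
      simpa using norm_add_le ((x - y) - p (x - y) : E) (p (x - y) : E)
    have a3 : ‖(p (x - y) : E)‖ = ‖p (x - y)‖ := rfl
    have a4 : δ * ‖x - y‖ ≤ (1 - 1 / ρ) * ‖x - y‖ := by gcongr
    have a5 : (1 / ρ) * ‖x - y‖ ≤ ‖p (x - y)‖ := by linarith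
    calc ‖x - y‖ = ρ * ((1 / ρ) * ‖x - y‖) := by field_simp
      _ ≤ _ := by gcongr
  have e2 : ∀ x ∈ S, ∀ y ∈ S, ‖p (Φ x - Φ y) - B (p (x - y))‖ ≤ (1 - 1 / ρ) * ‖B (p (x - y))‖ := by
    intro x hx y hy
    have a1 := h2 x ⟨(hS hx).1, (hS hx).2.2.1⟩ y ⟨(hS hy).1, (hS hy).2.2.1⟩
    calc _ ≤ _ := a1
      _ ≤ δ * (ρ * (2 * ‖B (p (x - y))‖)) := by
        gcongr
        exact (e1 x hx y hy).trans (by gcongr; exact hB _)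
      _ = _ := by rw [← hδ1]; ring
  have e3 : ∀ x ∈ S, ∀ y ∈ S, ‖p (Φ x - Φ y)‖ ≤ ρ * ‖B (p (x - y))‖ := by
    intro x hx y hy
    have a1 := e2 x hx y hy
    have a2 := norm_sub_norm_le (p (Φ x - Φ y)) (B (p (x - y)))
    have a3 : 1 - 1 / ρ ≤ ρ - 1 := by rw [← hq2]; nlinarith
    nlinarith [norm_nonneg (B (p (x - y)))]
  have e4 : ∀ x ∈ S, ∀ y ∈ S, ‖B (p (x - y))‖ ≤ ρ * ‖p (Φ x - Φ y)‖ := by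
    intro x hx y hy
    have a1 := e2 x hx y hy
    have a2 := norm_sub_norm_le (B (p (x - y))) (p (Φ x - Φ y))
    rw [norm_sub_rev] at a2
    have a5 : (1 / ρ) * ‖B (p (x - y))‖ ≤ ‖p (Φ x - Φ y)‖ := by linarith
    calc ‖B (p (x - y))‖ = ρ * ((1 / ρ) * ‖B (p (x - y))‖) := by field_simp
      _ ≤ _ := by gcongr
  have m1 : μH[(n : ℝ)] S ≤ ENNReal.ofReal (ρ ^ n) * μH[(n : ℝ)] (p '' S) := by
    have := hcomp (id : E → E) p S ρ hρ0.le n (fun x hx y hy => by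
      have := e1 x hx y hy
      rw [map_sub] at this
      simpa [dist_eq_norm] using this)
    rwa [image_id] at this
  have m2 : μH[(n : ℝ)] (p '' S) ≤ μH[(n : ℝ)] S :=
    hausdorffMeasure_orthogonalProjectionOnto_le P n S (by positivity)
  have m2' : μH[(n : ℝ)] (p '' (Φ '' S)) ≤ μH[(n : ℝ)] (Φ '' S) :=
    hausdorffMeasure_orthogonalProjectionOnto_le P n _ (by positivity)
  have m3 : μH[(n : ℝ)] (Φ '' S) ≤ ENNReal.ofReal (K ^ n) * μH[(n : ℝ)] ((p ∘ Φ) '' S) := by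
    refine hcomp Φ (p ∘ Φ) S K hK n (fun x hx y hy => ?_)
    have := h3 x ⟨(hS hx).1, (hS hx).2.2.2⟩ y ⟨(hS hy).1, (hS hy).2.2.2⟩
    rw [map_sub] at this
    simpa [dist_eq_norm] using this
  have m4 : μH[(n : ℝ)] ((p ∘ Φ) '' S) ≤ ENNReal.ofReal (ρ ^ n) * μH[(n : ℝ)] ((B ∘ p) '' S) := by
    refine hcomp (p ∘ Φ) (B ∘ p) S ρ hρ0.le n (fun x hx y hy => ?_)
    have := e3 x hx y hy
    rw [map_sub, map_sub, map_sub] at this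
    simpa only [dist_eq_norm, Function.comp] using this
  have m5 : μH[(n : ℝ)] ((B ∘ p) '' S) ≤ ENNReal.ofReal (ρ ^ n) * μH[(n : ℝ)] ((p ∘ Φ) '' S) := by
    refine hcomp (B ∘ p) (p ∘ Φ) S ρ hρ0.le n (fun x hx y hy => ?_)
    have := e4 x hx y hy
    rw [map_sub, map_sub, map_sub] at this
    simpa only [dist_eq_norm, Function.comp] using this
  have m6 : μH[(n : ℝ)] ((B ∘ p) '' S) = ENNReal.ofReal |B.det| * μH[(n : ℝ)] (p '' S) := by
    rw [image_comp]
    subst hP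
    exact Measure.addHaar_image_continuousLinearMap _ B (p '' S)
  have hpn : ρ ^ n ≤ κ := by
    refine le_trans ?_ hρ.le
    exact pow_le_pow_right₀ hρ1.le (by omega)
  constructor
  · calc _ ≤ _ := m3
      _ ≤ ENNReal.ofReal (K ^ n) * (ENNReal.ofReal (ρ ^ n) * (ENNReal.ofReal |B.det| * μH[(n : ℝ)] S)) := by
        gcongr
        refine m4.trans ?_
        rw [m6]; gcongr
      _ ≤ ENNReal.ofReal (K ^ n) * (ENNReal.ofReal κ * (ENNReal.ofReal |B.det| * μH[(n : ℝ)] S)) := by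
        gcongr
      _ = _ := by
        rw [ENNReal.ofReal_mul (by positivity), ENNReal.ofReal_mul (by positivity)]
        ring
  · calc _ ≤ ENNReal.ofReal |B.det| * (ENNReal.ofReal (ρ ^ n) * μH[(n : ℝ)] (p '' S)) := by gcongr
      _ = ENNReal.ofReal (ρ ^ n) * μH[(n : ℝ)] ((B ∘ p) '' S) := by rw [m6]; ring
      _ ≤ ENNReal.ofReal (ρ ^ n) * (ENNReal.ofReal (ρ ^ n) * μH[(n : ℝ)] (Φ '' S)) := by
        gcongr
        refine m5.trans ?_
        rw [image_comp]
        gcongr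
      _ = ENNReal.ofReal (ρ ^ (2 * n)) * μH[(n : ℝ)] (Φ '' S) := by
        rw [← mul_assoc, ← ENNReal.ofReal_mul (by positivity)]
        congr 2; ring
      _ ≤ _ := by gcongr

/-- gluing, upper bound -/
theorem glueUpper (μ : Measure E) (Z : Set E) (hZ : IsCompact Z) (Φ : E → E) (b : E → ℝ≥0∞)
    (h : ∀ x ∈ Z, ∃ V ∈ 𝓝 x, ∀ S ⊆ Z ∩ V, MeasurableSet S → μ (Φ '' S) ≤ ∫⁻ x in S, b x ∂μ) :
    μ (Φ '' Z) ≤ ∫⁻ x in Z, b x ∂μ := by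
  have key : ∃ T, Z ⊆ T ∧ MeasurableSet T ∧ ∀ S ⊆ Z ∩ T, MeasurableSet S →
      μ (Φ '' S) ≤ ∫⁻ x in S, b x ∂μ := by
    refine hZ.induction_on (p := fun A => ∃ T, A ⊆ T ∧ MeasurableSet T ∧ ∀ S ⊆ Z ∩ T,
      MeasurableSet S → μ (Φ '' S) ≤ ∫⁻ x in S, b x ∂μ) ?_ ?_ ?_ ?_
    · refine ⟨∅, subset_rfl, MeasurableSet.empty, fun S hS _ => ?_⟩
      have : S = ∅ := by simpa using hS
      simp [this]
    · rintro s t hst ⟨T, hT, h1⟩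
      exact ⟨T, hst.trans hT, h1⟩
    · rintro s t ⟨T, hT, hTm, h1⟩ ⟨T', hT', hTm', h2⟩
      refine ⟨T ∪ T', union_subset_union hT hT', hTm.union hTm', fun S hS hSm => ?_⟩
      have hS1 : S ∩ T ⊆ Z ∩ T := fun x hx => ⟨(hS hx.1).1, hx.2⟩
      have hS2 : S \ T ⊆ Z ∩ T' := fun x hx => ⟨(hS hx.1).1, (hS hx.1).2.resolve_left hx.2⟩
      calc μ (Φ '' S) = μ (Φ '' (S ∩ T) ∪ Φ '' (S \ T)) := by
            rw [← image_union, inter_union_sdiff]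
        _ ≤ _ := measure_union_le _ _
        _ ≤ ∫⁻ x in S ∩ T, b x ∂μ + ∫⁻ x in S \ T, b x ∂μ :=
            add_le_add (h1 _ hS1 (hSm.inter hTm)) (h2 _ hS2 (hSm.diff hTm))
        _ = _ := lintegral_inter_add_sdiff _ _ hTm
    · intro x hx
      obtain ⟨V, hV, h1⟩ := h x hx
      obtain ⟨O, hOV, hO, hxO⟩ := mem_nhds_iff.1 hV
      exact ⟨O, mem_nhdsWithin_of_mem_nhds (hO.mem_nhds hxO), O, subset_rfl, hO.measurableSet,
        fun S hS => h1 S (hS.trans (inter_subset_inter_right _ hOV))⟩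
  obtain ⟨T, hT, _, h1⟩ := key
  exact h1 Z (subset_inter subset_rfl hT) hZ.isClosed.measurableSet

theorem glueLower (μ : Measure E) (Z : Set E) (hZ : IsCompact Z) (Φ : E → E) (b : E → ℝ≥0∞)
    (hΦ : ContinuousOn Φ Z) (hinj : InjOn Φ Z)
    (h : ∀ x ∈ Z, ∃ V ∈ 𝓝 x, ∀ S ⊆ Z ∩ V, MeasurableSet S → ∫⁻ x in S, b x ∂μ ≤ μ (Φ '' S)) :
    ∫⁻ x in Z, b x ∂μ ≤ μ (Φ '' Z) := by
  have key : ∃ T, Z ⊆ T ∧ MeasurableSet T ∧ ∀ S ⊆ Z ∩ T, MeasurableSet S →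
      ∫⁻ x in S, b x ∂μ ≤ μ (Φ '' S) := by
    refine hZ.induction_on (p := fun A => ∃ T, A ⊆ T ∧ MeasurableSet T ∧ ∀ S ⊆ Z ∩ T,
      MeasurableSet S → ∫⁻ x in S, b x ∂μ ≤ μ (Φ '' S)) ?_ ?_ ?_ ?_
    · refine ⟨∅, subset_rfl, MeasurableSet.empty, fun S hS _ => ?_⟩
      have : S = ∅ := by simpa using hS
      simp [this]
    · rintro s t hst ⟨T, hT, h1⟩
      exact ⟨T, hst.trans hT, h1⟩
    · rintro s t ⟨T, hT, hTm, h1⟩ ⟨T', hT', hTm', h2⟩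
      refine ⟨T ∪ T', union_subset_union hT hT', hTm.union hTm', fun S hS hSm => ?_⟩
      have hS1 : S ∩ T ⊆ Z ∩ T := fun x hx => ⟨(hS hx.1).1, hx.2⟩
      have hS2 : S \ T ⊆ Z ∩ T' := fun x hx => ⟨(hS hx.1).1, (hS hx.1).2.resolve_left hx.2⟩
      have hS2' : S \ T ⊆ Z := hS2.trans inter_subset_left
      have hm : MeasurableSet (Φ '' (S \ T)) :=
        (hSm.diff hTm).image_of_continuousOn_injOn (hΦ.mono hS2') (hinj.mono hS2')
      have hdisj : Disjoint (Φ '' (S ∩ T)) (Φ '' (S \ T)) := by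
        rw [disjoint_left]
        rintro _ ⟨x, hx, rfl⟩ ⟨y, hy, hxy⟩
        have : y = x := hinj (hS2' hy) (hS1 hx).1 hxy
        exact hy.2 (this ▸ hx.2)
      calc ∫⁻ x in S, b x ∂μ = ∫⁻ x in S ∩ T, b x ∂μ + ∫⁻ x in S \ T, b x ∂μ :=
            (lintegral_inter_add_sdiff _ _ hTm).symm
        _ ≤ μ (Φ '' (S ∩ T)) + μ (Φ '' (S \ T)) :=
            add_le_add (h1 _ hS1 (hSm.inter hTm)) (h2 _ hS2 (hSm.diff hTm))
        _ = μ (Φ '' (S ∩ T) ∪ Φ '' (S \ T)) := (measure_union hdisj hm).symm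
        _ = μ (Φ '' S) := by rw [← image_union, inter_union_sdiff]
    · intro x hx
      obtain ⟨V, hV, h1⟩ := h x hx
      obtain ⟨O, hOV, hO, hxO⟩ := mem_nhds_iff.1 hV
      exact ⟨O, mem_nhdsWithin_of_mem_nhds (hO.mem_nhds hxO), O, subset_rfl, hO.measurableSet,
        fun S hS => h1 S (hS.trans (inter_subset_inter_right _ hOV))⟩
  obtain ⟨T, hT, _, h1⟩ := key
  exact h1 Z (subset_inter subset_rfl hT) hZ.isClosed.measurableSet
end
section

theorem matDet (n : ℕ) : ∀ η > 0, ∃ δ > 0, ∀ M : Fin n → Fin n → ℝ, ‖M‖ < δ →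
    |(1 + Matrix.of M).det - 1 - (Matrix.of M).trace| ≤ η * ‖M‖ := by
  intro η hη
  let D : (Fin n → Fin n → ℝ) → ℝ := fun M => (1 + Matrix.of M).det
  have hD : DifferentiableAt ℝ D 0 := by
    simp only [D, Matrix.det_apply, Matrix.add_apply, Matrix.of_apply]
    fun_prop
  obtain ⟨L, hL⟩ := hD
  have hLtr : ∀ M, L M = (Matrix.of M).trace := by
    intro M
    have h1 : HasDerivAt (fun t : ℝ => t • M) M 0 := by
      simpa using (hasDerivAt_id (0:ℝ)).smul_const M
    have hL' : HasFDerivAt D L ((0:ℝ) • M) := by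
      simpa using hL
    have h2 : HasDerivAt (D ∘ (fun t : ℝ => t • M)) (L M) 0 := hL'.comp_hasDerivAt (0:ℝ) h1
    have h3 : HasDerivAt (D ∘ (fun t : ℝ => t • M)) (Matrix.of M).trace 0 := by
      let q := (1 + (Polynomial.X : Polynomial ℝ) • (Matrix.of M).map Polynomial.C).det.divX.divX
      have : D ∘ (fun t : ℝ => t • M) =
          fun t => 1 + (Matrix.of M).trace * t + q.eval t * t ^ 2 := by
        funext t
        exact Matrix.det_one_add_smul t (Matrix.of M)
      rw [this]
      have h4 : HasDerivAt (fun t : ℝ => 1 + (Matrix.of M).trace * t + q.eval t * t ^ 2)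
        (0 + (Matrix.of M).trace * 1 + (q.derivative.eval 0 * 0 ^ 2 + q.eval 0 * ((2:ℕ) * 0 ^ (2-1)))) 0 :=
        (((hasDerivAt_const _ _).add ((hasDerivAt_id (0:ℝ)).const_mul _))).add
          ((q.hasDerivAt 0).mul (hasDerivAt_pow 2 0))
      simpa using h4
    exact h2.unique h3
  have := (hasFDerivAt_iff_isLittleO.1 hL).def hη
  rw [Metric.eventually_nhds_iff] at this
  obtain ⟨δ, hδ, h⟩ := this
  refine ⟨δ, hδ, fun M hM => ?_⟩
  have := h (y := M) (by simpa using hM)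
  have hD0 : D 0 = 1 := by simp [D]
  rw [sub_zero, hLtr, hD0] at this
  exact this

theorem detExp {E : Type*} [NormedAddCommGroup E] [InnerProductSpace ℝ E] [FiniteDimensional ℝ E]
    (n : ℕ) (C η : ℝ) (hη : 0 < η) : ∃ δ > 0, ∀ P : Submodule ℝ E, Module.finrank ℝ P = n →
      ∀ X : P →L[ℝ] P, ‖X‖ ≤ C → ∀ s : ℝ, |s| < δ →
      |(ContinuousLinearMap.id ℝ P + s • X).det - 1 - s * LinearMap.trace ℝ P X| ≤ η * |s| := by
  set C' := max C 1
  have hC' : 0 < C' := lt_of_lt_of_le one_pos (le_max_right _ _)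
  obtain ⟨δ, hδ, h⟩ := matDet n (η / C') (by positivity)
  refine ⟨δ / C', by positivity, fun P hP X hX s hs => ?_⟩
  subst hP
  let b := stdOrthonormalBasis ℝ P
  let M' := LinearMap.toMatrix b.toBasis b.toBasis (X : P →ₗ[ℝ] P)
  let M : Fin (Module.finrank ℝ P) → Fin (Module.finrank ℝ P) → ℝ := fun i j => M' i j
  have hMM : Matrix.of (s • M) = s • M' := rfl
  have hM : ‖M‖ ≤ C' := by
    rw [pi_norm_le_iff_of_nonneg hC'.le]
    intro i
    rw [pi_norm_le_iff_of_nonneg hC'.le]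
    intro j
    have : M i j = inner ℝ (b i) (X (b j)) := by
      simp [M, M', LinearMap.toMatrix_apply, b.repr_apply_apply]
    rw [this]
    calc _ ≤ ‖b i‖ * ‖X (b j)‖ := norm_inner_le_norm _ _
      _ ≤ 1 * (‖X‖ * ‖b j‖) := by
        rw [b.norm_eq_one]; gcongr; exact X.le_opNorm _
      _ ≤ C' := by
        rw [b.norm_eq_one]; simp; exact hX.trans (le_max_left _ _)
  have hsM : ‖s • M‖ ≤ |s| * C' := by
    rw [norm_smul]; gcongr; rfl
  have h1 := h (s • M) (hsM.trans_lt (by rwa [lt_div_iff₀ hC'] at hs))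
  rw [hMM] at h1
  have h2 : (1 + s • M').det = (ContinuousLinearMap.id ℝ P + s • X).det := by
    rw [ContinuousLinearMap.det, ← LinearMap.det_toMatrix b.toBasis]
    congr 1
    have : ((ContinuousLinearMap.id ℝ P + s • X : P →L[ℝ] P) : P →ₗ[ℝ] P)
      = LinearMap.id + s • (X : P →ₗ[ℝ] P) := rfl
    rw [this, map_add, map_smul, LinearMap.toMatrix_id]
  have h3 : (s • M').trace = s * LinearMap.trace ℝ P X := by
    rw [Matrix.trace_smul, LinearMap.trace_eq_matrix_trace ℝ b.toBasis]; rfl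
  rw [h2, h3] at h1
  calc _ ≤ _ := h1
    _ ≤ η / C' * (|s| * C') := by gcongr
    _ = _ := by field_simp
end

/-- trace of the compression -/
theorem traceCompr {E : Type*} [NormedAddCommGroup E] [InnerProductSpace ℝ E] [FiniteDimensional ℝ E]
    (N : E) (H : E →L[ℝ] E) :
    LinearMap.trace ℝ _ ((((ℝ ∙ N)ᗮ.orthogonalProjectionOnto ∘L H ∘L (ℝ ∙ N)ᗮ.subtypeL :
      (ℝ ∙ N)ᗮ →L[ℝ] (ℝ ∙ N)ᗮ) : (ℝ ∙ N)ᗮ →ₗ[ℝ] (ℝ ∙ N)ᗮ)) =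
    LinearMap.trace ℝ E (H : E →ₗ[ℝ] E) - inner ℝ (‖N‖⁻¹ • N) (H (‖N‖⁻¹ • N)) := by
  have h0 : ((((ℝ ∙ N)ᗮ.orthogonalProjectionOnto ∘L H ∘L (ℝ ∙ N)ᗮ.subtypeL :
      (ℝ ∙ N)ᗮ →L[ℝ] (ℝ ∙ N)ᗮ) : (ℝ ∙ N)ᗮ →ₗ[ℝ] (ℝ ∙ N)ᗮ)) =
    (((ℝ ∙ N)ᗮ.orthogonalProjectionOnto ∘L H : E →L[ℝ] (ℝ ∙ N)ᗮ) : E →ₗ[ℝ] (ℝ ∙ N)ᗮ) ∘ₗ (ℝ ∙ N)ᗮ.subtype := rfl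
  rw [h0, LinearMap.trace_comp_comm']
  have h1 : ((ℝ ∙ N)ᗮ.subtype ∘ₗ (((ℝ ∙ N)ᗮ.orthogonalProjectionOnto ∘L H : E →L[ℝ] (ℝ ∙ N)ᗮ) : E →ₗ[ℝ] (ℝ ∙ N)ᗮ))
     = (H : E →ₗ[ℝ] E) - ((innerₛₗ ℝ (‖N‖⁻¹ • N)) ∘ₗ (H : E →ₗ[ℝ] E)).smulRight (‖N‖⁻¹ • N) := by
    ext v
    simp only [LinearMap.comp_apply, LinearMap.sub_apply, LinearMap.smulRight_apply,
      Submodule.subtype_apply, ContinuousLinearMap.coe_coe, ContinuousLinearMap.comp_apply,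
      innerₛₗ_apply_apply]
    rw [Submodule.coe_orthogonalProjectionOnto_apply, Submodule.starProjection_orthogonal_val,
      Submodule.starProjection_singleton, inner_smul_left, smul_smul]
    congr 2
    simp
    ring
  rw [h1, map_sub, LinearMap.trace_smulRight]
  rfl

theorem projN {E : Type*} [NormedAddCommGroup E] [InnerProductSpace ℝ E] [FiniteDimensional ℝ E]
    (N : E) (hN : N ≠ 0) (w : E) :
   ‖w - (ℝ ∙ N)ᗮ.orthogonalProjectionOnto w‖ = |inner ℝ N w| / ‖N‖ := by
  rw [Submodule.coe_orthogonalProjectionOnto_apply, Submodule.starProjection_orthogonal_val,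
      Submodule.starProjection_singleton]
  have : ‖N‖ ≠ 0 := by simpa using hN
  simp only [sub_sub_cancel, norm_smul, norm_div, Real.norm_eq_abs]
  simp
  field_simp

section
variable {E : Type*} [NormedAddCommGroup E] [InnerProductSpace ℝ E] [FiniteDimensional ℝ E]

theorem equivOfInj {X : Type*} [NormedAddCommGroup X] [NormedSpace ℝ X] [FiniteDimensional ℝ X]
    (T : X →L[ℝ] X) (h : ∀ v, T v = 0 → v = 0) : ∃ e : X ≃L[ℝ] X, T = e := by
  have hi : Function.Injective (T : X →ₗ[ℝ] X) := (injective_iff_map_eq_zero _).2 h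
  refine ⟨(LinearEquiv.ofInjectiveEndo (T : X →ₗ[ℝ] X) hi).toContinuousLinearEquiv, ?_⟩
  ext v
  simp

theorem gradInner (f : E → ℝ) (x v : E) : inner ℝ (gradient f x) v = fderiv ℝ f x v := by
  simp [gradient]

theorem gradContDiff (f : E → ℝ) (hf : ContDiff ℝ 2 f) : ContDiff ℝ 1 (gradient f) := by
  unfold gradient
  exact ((InnerProductSpace.toDual ℝ E).symm.toContinuousLinearEquiv.contDiff).comp
    (hf.fderiv_right (by norm_num))

theorem derivA (N : E → E) (hN : ContDiff ℝ 1 N) (z : E) :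
    HasFDerivAt (fun q : E × ℝ => q.1 + q.2 • N q.1)
      (ContinuousLinearMap.fst ℝ E ℝ + (ContinuousLinearMap.snd ℝ E ℝ).smulRight (N z)) (z, 0) := by
  have h1 : HasFDerivAt (fun q : E × ℝ => N q.1)
      ((fderiv ℝ N z) ∘L ContinuousLinearMap.fst ℝ E ℝ) (z, 0) :=
    ((hN.differentiable (by norm_num) z).hasFDerivAt).comp (z, (0:ℝ)) hasFDerivAt_fst
  have h2 := (hasFDerivAt_fst (𝕜 := ℝ) (p := (z, (0:ℝ)))).add
    ((hasFDerivAt_snd (𝕜 := ℝ) (p := (z, (0:ℝ)))).smul h1)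
  have h3 : (ContinuousLinearMap.fst ℝ E ℝ + (ContinuousLinearMap.snd ℝ E ℝ).smulRight (N z)) =
    (ContinuousLinearMap.fst ℝ E ℝ +
      ((z, (0:ℝ)).2 • fderiv ℝ N z ∘SL ContinuousLinearMap.fst ℝ E ℝ +
        (ContinuousLinearMap.snd ℝ E ℝ).smulRight (N (z, (0:ℝ)).1))) := by
    simp
  rw [h3]
  exact h2

theorem tube {Z : Set E} (hZ : IsCompact Z) {A : Type*} [TopologicalSpace A] (a : A)
    (O : Set (A × E)) (hO : ∀ x ∈ Z, O ∈ 𝓝 (a, x)) : ∀ᶠ t in 𝓝 a, ∀ x ∈ Z, (t, x) ∈ O :=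
  hZ.eventually_forall_of_forall_eventually (P := fun t x => (t, x) ∈ O) fun x hx => hO x hx

theorem geomS (f h : E → ℝ) (hf : ContDiff ℝ 2 f) (hh : ContDiff ℝ 2 h)
    (hZ : IsCompact (f ⁻¹' {0})) (hreg : ∀ x ∈ f ⁻¹' {0}, gradient f x ≠ 0) :
    ∃ (s : ℝ × E → ℝ) (O : Set (ℝ × E)) (W : Set (ℝ × E × ℝ)), IsOpen O ∧ IsOpen W ∧
      (∀ x ∈ f ⁻¹' {0}, ((0 : ℝ), x) ∈ O ∧ s (0, x) = 0 ∧ ((0 : ℝ), x, (0 : ℝ)) ∈ W) ∧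
      ContDiffOn ℝ 1 s O ∧
      (∀ t x, (t, x) ∈ O →
        f (x + s (t, x) • gradient f x) + t * h (x + s (t, x) • gradient f x) = f x) ∧
      (∀ t x r, (t, x, r) ∈ W → f (x + r • gradient f x) + t * h (x + r • gradient f x) = f x →
        r = s (t, x)) := by
  set N := gradient f with hNdef
  have hN : ContDiff ℝ 1 N := gradContDiff f hf
  have hf1 : ContDiff ℝ 1 f := hf.of_le (by norm_num)
  have hh1 : ContDiff ℝ 1 h := hh.of_le (by norm_num)
  let L : ℝ × E × ℝ → ℝ × E × ℝ := fun q =>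
    (q.1, q.2.1, f (q.2.1 + q.2.2 • N q.2.1) + q.1 * h (q.2.1 + q.2.2 • N q.2.1) - f q.2.1)
  have hL : ContDiff ℝ 1 L := by
    have hA : ContDiff ℝ 1 (fun q : ℝ × E × ℝ => q.2.1 + q.2.2 • N q.2.1) := by fun_prop
    have := hf1.comp hA
    have := hh1.comp hA
    fun_prop
  let C : Set (ℝ × E × ℝ) := (fun x : E => ((0 : ℝ), x, (0 : ℝ))) '' (f ⁻¹' {0})
  have hC : IsCompact C := hZ.image (by fun_prop)
  have hL0 : ∀ x, L (0, x, 0) = (0, x, 0) := by intro x; simp [L]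
  obtain ⟨W, hWo, hCW, hWinj, hLW, g, hg, hgL⟩ := invNear L hL C hC (by
    rintro _ ⟨x, hx, rfl⟩ _ ⟨y, hy, rfl⟩ hxy
    simpa [hL0] using hxy) (by
    rintro _ ⟨z, hz, rfl⟩
    apply equivOfInj
    have hA := (derivA N hN z).comp ((0 : ℝ), z, (0 : ℝ)) (hasFDerivAt_snd (𝕜 := ℝ))
    have hA0 : ((fun q : E × ℝ => q.1 + q.2 • N q.1) ∘ Prod.snd) ((0 : ℝ), z, (0 : ℝ)) = z := by simp
    have hfA := HasFDerivAt.comp ((0 : ℝ), z, (0 : ℝ)) (g := f) (g' := fderiv ℝ f z) (by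
      rw [hA0]; exact (hf1.differentiable (by norm_num) z).hasFDerivAt) hA
    have hhA := HasFDerivAt.comp ((0 : ℝ), z, (0 : ℝ)) (g := h) (g' := fderiv ℝ h z) (by
      rw [hA0]; exact (hh1.differentiable (by norm_num) z).hasFDerivAt) hA
    have hfx : HasFDerivAt (fun q : ℝ × E × ℝ => f q.2.1) _ ((0 : ℝ), z, (0 : ℝ)) :=
      HasFDerivAt.comp ((0 : ℝ), z, (0 : ℝ)) (g := f)
        (hf1.differentiable (by norm_num) z).hasFDerivAt
        (hasFDerivAt_fst.comp ((0 : ℝ), z, (0 : ℝ)) (hasFDerivAt_snd (𝕜 := ℝ)))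
    have hfst : HasFDerivAt (fun q : ℝ × E × ℝ => q.1) _ ((0 : ℝ), z, (0 : ℝ)) := hasFDerivAt_fst (𝕜 := ℝ)
    have hx : HasFDerivAt (fun q : ℝ × E × ℝ => q.2.1) _ ((0 : ℝ), z, (0 : ℝ)) :=
      (hasFDerivAt_fst.comp ((0 : ℝ), z, (0 : ℝ)) (hasFDerivAt_snd (𝕜 := ℝ)))
    have hD : HasFDerivAt L _ ((0 : ℝ), z, (0 : ℝ)) :=
      hfst.prodMk (hx.prodMk ((hfA.add (hfst.mul hhA)).sub hfx))
    rw [hD.fderiv]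
    rintro ⟨τ, v, r⟩ h0
    simp only [ContinuousLinearMap.prod_apply, Prod.mk_eq_zero] at h0
    obtain ⟨h1, h2, h3⟩ := h0
    have h1 : τ = 0 := h1
    have h2 : v = 0 := h2
    subst h1 h2
    simp at h3
    have : fderiv ℝ f z (N z) ≠ 0 := by
      rw [← gradInner f z (N z), ← hNdef]
      exact inner_self_ne_zero.2 (hreg z hz)
    have hr : r = 0 := by tauto
    simp [hr])
  refine ⟨fun p => (g (p.1, p.2, 0)).2.2, {p | (p.1, p.2, (0:ℝ)) ∈ L '' W}, W,
    hLW.preimage (by fun_prop), hWo, ?_, ?_, ?_, ?_⟩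
  · intro x hx
    have hxW : ((0 : ℝ), x, (0 : ℝ)) ∈ W := hCW ⟨x, hx, rfl⟩
    refine ⟨⟨_, hxW, hL0 x⟩, ?_, hxW⟩
    have := hgL _ hxW
    rw [hL0] at this
    simp [this]
  · have h1 : ContDiffOn ℝ 1 (fun p : ℝ × E => g (p.1, p.2, 0)) {p | (p.1, p.2, (0:ℝ)) ∈ L '' W} :=
      hg.comp (by fun_prop) (fun p hp => hp)
    exact (contDiff_snd.comp contDiff_snd).comp_contDiffOn h1
  · rintro t x ⟨⟨t', x', r⟩, hw, hLw⟩
    have h1 := hgL _ hw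
    rw [hLw] at h1
    simp only [h1]
    simp only [L, Prod.mk.injEq] at hLw
    obtain ⟨rfl, rfl, h3⟩ := hLw
    linarith
  · intro t x r hw h1
    have h2 := hgL _ hw
    have h3 : L (t, x, r) = (t, x, 0) := by simp [L, h1]
    rw [h3] at h2
    simp [h2]

theorem tubNbhd (f : E → ℝ) (hf : ContDiff ℝ 2 f) 
    (hZ : IsCompact (f ⁻¹' {0})) (hreg : ∀ x ∈ f ⁻¹' {0}, gradient f x ≠ 0) :
    ∃ (W : Set (E × ℝ)), IsOpen W ∧ (∀ x ∈ f ⁻¹' {0}, (x, (0 : ℝ)) ∈ W) ∧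
      (∀ x ∈ f ⁻¹' {0}, ∀ y ∈ f ⁻¹' {0}, ∀ a b : ℝ, (x, a) ∈ W → (y, b) ∈ W → 
        x + a • gradient f x = y + b • gradient f y → x = y) ∧
      ∀ ε > 0, ∃ U : Set E, IsOpen U ∧ f ⁻¹' {0} ⊆ U ∧ ∀ y ∈ U, ∃ x ∈ f ⁻¹' {0}, ∃ r : ℝ, |r| < ε ∧
        y = x + r • gradient f x := by
  set N := gradient f with hNdef
  have hN : ContDiff ℝ 1 N := gradContDiff f hf
  have hf1 : ContDiff ℝ 1 f := hf.of_le (by norm_num)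
  let K : E × ℝ → E × ℝ := fun q => (q.1 + q.2 • N q.1, f q.1)
  have hK : ContDiff ℝ 1 K := by fun_prop
  let C : Set (E × ℝ) := (fun x : E => (x, (0 : ℝ))) '' (f ⁻¹' {0})
  have hC : IsCompact C := hZ.image (by fun_prop)
  have hK0 : ∀ x ∈ f ⁻¹' {0}, K (x, 0) = (x, 0) := by intro x hx; simpa [K] using hx
  obtain ⟨W, hWo, hCW, hWinj, hKW, g, hg, hgK⟩ := invNear K hK C hC (by
    rintro _ ⟨x, hx, rfl⟩ _ ⟨y, hy, rfl⟩ hxy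
    simpa [hK0 x hx, hK0 y hy] using hxy) (by
    rintro _ ⟨z, hz, rfl⟩
    apply equivOfInj
    have hA := (derivA N hN z)
    have hfx : HasFDerivAt (fun q : E × ℝ => f q.1) _ (z, (0 : ℝ)) :=
      HasFDerivAt.comp (z, (0 : ℝ)) (g := f)
        (hf1.differentiable (by norm_num) z).hasFDerivAt (hasFDerivAt_fst (𝕜 := ℝ))
    have hD : HasFDerivAt K _ (z, (0 : ℝ)) := hA.prodMk hfx
    rw [hD.fderiv]
    rintro ⟨v, r⟩ h0
    simp at h0
    obtain ⟨h1, h2⟩ := h0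
    have hv : v = -(r • N z) := eq_neg_of_add_eq_zero_left h1
    have : fderiv ℝ f z (N z) ≠ 0 := by
      rw [← gradInner f z (N z), ← hNdef]
      exact inner_self_ne_zero.2 (hreg z hz)
    rw [hv] at h2
    simp at h2
    have hr : r = 0 := by tauto
    simp [hr, hv])
  refine ⟨W, hWo, fun x hx => hCW ⟨x, hx, rfl⟩, ?_, ?_⟩
  · intro x hx y hy a b ha hb hxy
    have hx' : f x = 0 := hx
    have hy' : f y = 0 := hy
    have := hWinj ha hb (by simp [K, hxy, hx', hy'])
    exact congrArg Prod.fst this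
  · intro ε hε
    have hcont : ContinuousOn (fun y => (g (y, 0)).2) {y | (y, (0:ℝ)) ∈ K '' W} :=
      continuous_snd.comp_continuousOn (hg.continuousOn.comp (by fun_prop) (fun y hy => hy))
    have hop : IsOpen {y | (y, (0:ℝ)) ∈ K '' W} := hKW.preimage (by fun_prop)
    refine ⟨_, hcont.isOpen_inter_preimage hop (Metric.isOpen_ball (x := (0:ℝ)) (ε := ε)), ?_, ?_⟩
    · intro x hx
      have hxW : (x, (0 : ℝ)) ∈ W := hCW ⟨x, hx, rfl⟩
      refine ⟨⟨_, hxW, hK0 x hx⟩, ?_⟩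
      have := hgK _ hxW
      rw [hK0 x hx] at this
      simp [this, hε]
    · rintro y ⟨⟨⟨x, r⟩, hw, hKw⟩, hy⟩
      have h1 := hgK _ hw
      rw [hKw] at h1
      simp only [mem_preimage, h1, Metric.mem_ball, dist_zero_right, Real.norm_eq_abs] at hy
      simp only [K, Prod.mk.injEq] at hKw
      exact ⟨x, hKw.2, r, hy, hKw.1.symm⟩

theorem geom (f h : E → ℝ) (hf : ContDiff ℝ 2 f) (hh : ContDiff ℝ 2 h)
    (hZ : IsCompact (f ⁻¹' {0})) (hreg : ∀ x ∈ f ⁻¹' {0}, gradient f x ≠ 0) :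
    ∃ (s : ℝ × E → ℝ) (O : Set (ℝ × E)) (U : Set E) (ε : ℝ), IsOpen O ∧ 0 < ε ∧ IsOpen U ∧
      Bornology.IsBounded U ∧ f ⁻¹' {0} ⊆ U ∧ ContDiffOn ℝ 1 s O ∧
      (∀ x ∈ f ⁻¹' {0}, s (0, x) = 0) ∧
      ∀ t : ℝ, |t| < ε → (∀ x ∈ f ⁻¹' {0}, (t, x) ∈ O) ∧
        InjOn (fun x => x + s (t, x) • gradient f x) (f ⁻¹' {0}) ∧
        {x ∈ U | f x + t * h x = 0} = (fun x => x + s (t, x) • gradient f x) '' (f ⁻¹' {0}) := by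
  obtain ⟨s, O, W, hO, hW, h1, hs, h2, h3⟩ := geomS f h hf hh hZ hreg
  obtain ⟨W', hW', g1, g2, g3⟩ := tubNbhd f hf hZ hreg
  have hN : ContDiff ℝ 1 (gradient f) := gradContDiff f hf
  have ht1 : ∀ᶠ p : ℝ × ℝ in 𝓝 (0, 0), ∀ x ∈ f ⁻¹' {0}, (p, x) ∈
      {q : (ℝ × ℝ) × E | (q.1.1, q.2, q.1.2) ∈ W} := by
    apply tube hZ
    intro x hx
    apply (hW.preimage (f := fun q : (ℝ × ℝ) × E => (q.1.1, q.2, q.1.2)) (by fun_prop)).mem_nhds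
    exact (h1 x hx).2.2
  rw [Metric.eventually_nhds_iff] at ht1
  obtain ⟨ε1, hε1, ht1⟩ := ht1
  obtain ⟨U0, hU0, hZU0, hU0'⟩ := g3 ε1 hε1
  obtain ⟨R, hR⟩ := hZ.isBounded.subset_ball (0 : E)
  have hscont : ∀ x ∈ f ⁻¹' {0}, ContinuousAt s (0, x) := fun x hx =>
    hs.continuousOn.continuousAt (hO.mem_nhds (h1 x hx).1)
  have e1 : ∀ᶠ t : ℝ in 𝓝 0, ∀ x ∈ f ⁻¹' {0}, (t, x) ∈ O :=
    tube hZ 0 O (fun x hx => hO.mem_nhds (h1 x hx).1)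
  have e2 : ∀ᶠ t : ℝ in 𝓝 0, ∀ x ∈ f ⁻¹' {0}, (t, x) ∈
      (fun q : ℝ × E => (q.2 + s q • gradient f q.2)) ⁻¹' (U0 ∩ Metric.ball 0 R) := by
    apply tube hZ
    intro x hx
    have hc : ContinuousAt (fun q : ℝ × E => (q.2 + s q • gradient f q.2)) (0, x) := by
      have := hscont x hx
      have := hN.continuous
      fun_prop
    apply hc.preimage_mem_nhds
    apply (hU0.inter Metric.isOpen_ball).mem_nhds
    simp only [(h1 x hx).2.1, zero_smul, add_zero]
    exact ⟨hZU0 hx, hR hx⟩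
  have e3 : ∀ᶠ t : ℝ in 𝓝 0, ∀ x ∈ f ⁻¹' {0}, (t, x) ∈
      (fun q : ℝ × E => (q.2, s q)) ⁻¹' W' := by
    apply tube hZ
    intro x hx
    have hc : ContinuousAt (fun q : ℝ × E => (q.2, s q)) (0, x) := by
      have := hscont x hx
      fun_prop
    apply hc.preimage_mem_nhds
    apply hW'.mem_nhds
    simp only [(h1 x hx).2.1]
    exact g1 x hx
  have e4 : ∀ᶠ t : ℝ in 𝓝 0, |t| < ε1 := by
    filter_upwards [Metric.ball_mem_nhds (0:ℝ) hε1] with t ht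
    simpa using ht
  obtain ⟨ε, hε, he⟩ := Metric.eventually_nhds_iff.1 (e1.and (e2.and (e3.and e4)))
  refine ⟨s, O, U0 ∩ Metric.ball 0 R, ε, hO, hε, hU0.inter Metric.isOpen_ball,
    Metric.isBounded_ball.subset inter_subset_right, subset_inter hZU0 hR, hs,
    fun x hx => (h1 x hx).2.1, ?_⟩
  intro t ht
  obtain ⟨a1, a2, a3, a4⟩ := he (y := t) (by simpa using ht)
  refine ⟨a1, ?_, ?_⟩
  · intro x hx y hy hxy
    exact g2 x hx y hy _ _ (a3 x hx) (a3 y hy) hxy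
  · ext y
    constructor
    · rintro ⟨hyU, hy0⟩
      obtain ⟨x, hx, r, hr, rfl⟩ := hU0' y hyU.1
      refine ⟨x, hx, ?_⟩
      have := ht1 (y := (t, r)) (by
        rw [Prod.dist_eq]; simp only [dist_zero_right, Real.norm_eq_abs]; exact max_lt a4 hr) x hx
      have h4 := h3 t x r this (by rw [hy0]; exact hx.symm)
      simp only [← h4]
    · rintro ⟨x, hx, rfl⟩
      refine ⟨a2 x hx, ?_⟩
      rw [h2 t x (a1 x hx)]; exact hx
end

section
variable {E : Type*} [NormedAddCommGroup E] [InnerProductSpace ℝ E] [FiniteDimensional ℝ E]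

theorem linBound {F : Type*} [NormedAddCommGroup F] [NormedSpace ℝ F] {Z : Set E} (hZ : IsCompact Z)
    (Q : ℝ × E → F) (hQ : ∀ z ∈ Z, ContDiffAt ℝ 1 Q (0, z)) (hQ0 : ∀ x ∈ Z, Q (0, x) = 0)
    (w : E → ℝ) (hw : Continuous w) (hw0 : ∀ x ∈ Z, 0 < w x) :
    ∀ᶠ t : ℝ in 𝓝 0, ∀ x ∈ Z, ‖Q (t, x)‖ ^ 2 ≤ |t| * w x := by
  have := tube hZ (0 : ℝ) {q : ℝ × E | q.2 ∈ Z → ‖Q q‖ ^ 2 ≤ |q.1| * w q.2} (by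
    intro z hz
    obtain ⟨K, T, hT, hL⟩ := (hQ z hz).exists_lipschitzOnWith
    have c1 : Tendsto (fun q : ℝ × E => ((0 : ℝ), q.2)) (𝓝 (0, z)) (𝓝 (0, z)) := by
      have : Continuous (fun q : ℝ × E => ((0 : ℝ), q.2)) := by fun_prop
      simpa using this.tendsto ((0:ℝ), z)
    have c2 : Tendsto (fun q : ℝ × E => (K:ℝ) ^ 2 * |q.1| - w q.2) (𝓝 (0, z)) (𝓝 (- w z)) := by
      have : Continuous (fun q : ℝ × E => (K:ℝ) ^ 2 * |q.1| - w q.2) := by fun_prop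
      simpa using this.tendsto ((0:ℝ), z)
    filter_upwards [hT, c1 hT, c2.eventually (gt_mem_nhds (neg_neg_of_pos (hw0 z hz)))]
      with q h1 h2 h3 hq
    have h4 := hL.dist_le_mul _ h1 _ h2
    rw [dist_eq_norm, hQ0 _ hq, sub_zero] at h4
    have h5 : dist q ((0:ℝ), q.2) = |q.1| := by
      rw [Prod.dist_eq]; simp
    rw [h5] at h4
    have : ‖Q q‖ ^ 2 ≤ (K * |q.1|) ^ 2 := by gcongr
    nlinarith [abs_nonneg q.1])
  filter_upwards [this] with t ht x hx
  exact ht x hx hx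

theorem sAsym (f h : E → ℝ) (hf : ContDiff ℝ 2 f) (hh : ContDiff ℝ 2 h)
    (hZ : IsCompact (f ⁻¹' {0})) (hreg : ∀ x ∈ f ⁻¹' {0}, gradient f x ≠ 0)
    (s : ℝ × E → ℝ) (hs : ∀ x ∈ f ⁻¹' {0}, ContDiffAt ℝ 1 s (0, x))
    (hs0 : ∀ x ∈ f ⁻¹' {0}, s (0, x) = 0)
    (heq : ∀ᶠ t : ℝ in 𝓝 0, ∀ x ∈ f ⁻¹' {0},
      f (x + s (t, x) • gradient f x) + t * h (x + s (t, x) • gradient f x) = 0)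
    (η : ℝ) (hη : 0 < η) :
    ∀ᶠ t : ℝ in 𝓝 0, ∀ x ∈ f ⁻¹' {0}, |s (t, x) + t * (h x / ‖gradient f x‖ ^ 2)| ≤ η * |t| := by
  have hN : ContDiff ℝ 1 (gradient f) := gradContDiff f hf
  have := tube hZ (0 : ℝ) {q : ℝ × E | q.2 ∈ f ⁻¹' {0} →
      |s q + q.1 * (h q.2 / ‖gradient f q.2‖ ^ 2)| ≤ η * |q.1|} (by
    intro z hz
    have hstr := (hs z hz).hasStrictFDerivAt (by norm_num)
    set D := fderiv ℝ s (0, z)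
    set a := D (1, 0) with ha
    have hN0 : ‖gradient f z‖ ≠ 0 := by simpa using hreg z hz
    have d1 : HasDerivAt (fun t : ℝ => s (t, z)) a 0 := by
      have : HasDerivAt (fun t : ℝ => (t, z)) ((1:ℝ), (0:E)) 0 :=
        (hasDerivAt_id (0:ℝ)).prodMk (hasDerivAt_const _ _)
      exact hstr.hasFDerivAt.comp_hasDerivAt (0:ℝ) this
    have d2 : HasDerivAt (fun t : ℝ => z + s (t, z) • gradient f z) (a • gradient f z) 0 :=
      (d1.smul_const _).const_add z
    have hz0 : z + s (0, z) • gradient f z = z := by simp [hs0 z hz]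
    have d3 : HasDerivAt (fun t : ℝ => f (z + s (t, z) • gradient f z))
        (fderiv ℝ f z (a • gradient f z)) 0 := by
      have hf' : HasFDerivAt f (fderiv ℝ f z) (z + s (0, z) • gradient f z) := by
        rw [hz0]; exact (hf.differentiable (by norm_num) z).hasFDerivAt
      exact hf'.comp_hasDerivAt (0:ℝ) d2
    have d4 : HasDerivAt (fun t : ℝ => h (z + s (t, z) • gradient f z))
        (fderiv ℝ h z (a • gradient f z)) 0 := by
      have hf' : HasFDerivAt h (fderiv ℝ h z) (z + s (0, z) • gradient f z) := by
        rw [hz0]; exact (hh.differentiable (by norm_num) z).hasFDerivAt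
      exact hf'.comp_hasDerivAt (0:ℝ) d2
    have d5 := d3.add ((hasDerivAt_id (0:ℝ)).mul d4)
    have d6 : HasDerivAt (fun _ : ℝ => (0:ℝ)) _ 0 := d5.congr_of_eventuallyEq (by
      filter_upwards [heq] with t ht
      exact (ht z hz).symm)
    have d7 := d6.unique (hasDerivAt_const _ _)
    have ha' : a = - (h z / ‖gradient f z‖ ^ 2) := by
      rw [map_smul, ← gradInner, real_inner_self_eq_norm_sq] at d7
      simp [hs0 z hz] at d7
      field_simp
      linarith
    have c1 : Tendsto (fun q : ℝ × E => (q, ((0 : ℝ), q.2))) (𝓝 (0, z)) (𝓝 ((0, z), (0, z))) := by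
      have : Continuous (fun q : ℝ × E => (q, ((0 : ℝ), q.2))) := by fun_prop
      simpa using this.tendsto ((0:ℝ), z)
    have c2 := c1.eventually ((hasStrictFDerivAt_iff_isLittleO.1 hstr).def (half_pos hη))
    have c3 : ContinuousAt (fun q : ℝ × E => |h q.2 / ‖gradient f q.2‖ ^ 2 - h z / ‖gradient f z‖ ^ 2|) (0, z) := by
      have i1 := hh.continuous
      have i2 := hN.continuous
      have i3 : ‖gradient f z‖ ^ 2 ≠ 0 := by positivity
      apply ContinuousAt.abs
      apply ContinuousAt.sub _ continuousAt_const
      apply ContinuousAt.div (by fun_prop) (by fun_prop)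
      exact i3
    have c4 := c3.tendsto.eventually (gt_mem_nhds (show |h z / ‖gradient f z‖ ^ 2 - h z / ‖gradient f z‖ ^ 2| < η / 2 by simpa using hη))
    filter_upwards [c2, c4] with q h2 h3 hq
    have e1 : q - ((0:ℝ), q.2) = q.1 • ((1:ℝ), (0:E)) := by
      ext <;> simp
    have e2 : ‖q.1 • ((1:ℝ), (0:E))‖ = |q.1| := by
      rw [norm_smul, Prod.norm_def]; simp
    rw [hs0 _ hq, e1, e2, map_smul, ← ha, ha', sub_zero, Real.norm_eq_abs, smul_eq_mul] at h2
    have e3 : s q + q.1 * (h q.2 / ‖gradient f q.2‖ ^ 2) =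
      (s q - q.1 * -(h z / ‖gradient f z‖ ^ 2)) +
        q.1 * (h q.2 / ‖gradient f q.2‖ ^ 2 - h z / ‖gradient f z‖ ^ 2) := by ring
    rw [e3]
    refine (abs_add_le _ _).trans ?_
    rw [abs_mul q.1]
    nlinarith [abs_nonneg q.1])
  filter_upwards [this] with t ht x hx
  exact ht x hx hx

theorem levelNormal (F : E → ℝ) (F' : E →L[ℝ] ℝ) (y0 : E) (hF : HasStrictFDerivAt F F' y0) (δ : ℝ)
    (hδ : 0 < δ) : ∃ V ∈ 𝓝 y0, ∀ x ∈ V, ∀ y ∈ V, F x = 0 → F y = 0 → |F' (x - y)| ≤ δ * ‖x - y‖ := by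
  have h := (hasStrictFDerivAt_iff_isLittleO.1 hF).def hδ
  rw [nhds_prod_eq] at h
  obtain ⟨V, hV, h⟩ := eventually_prod_self_iff'.1 h
  refine ⟨V, hV, fun x hx y hy h1 h2 => ?_⟩
  have := h x hx y hy
  simp only [h1, h2, sub_zero, zero_sub, norm_neg, Real.norm_eq_abs] at this
  exact this

variable [MeasurableSpace E] [BorelSpace E]

theorem hypA (f : E → ℝ) (hf : ContDiff ℝ 2 f) (x0 : E) (hreg : gradient f x0 ≠ 0) (δ : ℝ) (hδ : 0 < δ) :
    ∃ V ∈ 𝓝 x0, ∀ x ∈ f ⁻¹' {0} ∩ V, ∀ y ∈ f ⁻¹' {0} ∩ V,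
      ‖(x - y) - (ℝ ∙ gradient f x0)ᗮ.orthogonalProjectionOnto (x - y)‖ ≤ δ * ‖x - y‖ := by
  have hN0 : 0 < ‖gradient f x0‖ := by simpa using hreg
  obtain ⟨V, hV, h⟩ := levelNormal f _ x0 (hf.contDiffAt.hasStrictFDerivAt (by norm_num))
    (δ * ‖gradient f x0‖) (by positivity)
  refine ⟨V, hV, fun x hx y hy => ?_⟩
  have := h x hx.2 y hy.2 hx.1 hy.1
  rw [projN _ hreg, gradInner, div_le_iff₀ hN0]
  linarith

theorem finiteZ (n : ℕ) (hn : Module.finrank ℝ E = n + 1) (f : E → ℝ) (hf : ContDiff ℝ 2 f)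
    (hZ : IsCompact (f ⁻¹' {0})) (hreg : ∀ x ∈ f ⁻¹' {0}, gradient f x ≠ 0) :
    μH[(n : ℝ)] (f ⁻¹' {0}) < ∞ := by
  apply hZ.measure_lt_top_of_nhdsWithin
  intro x hx
  obtain ⟨V, hV, h⟩ := hypA f hf x (hreg x hx) (1/2) (by norm_num)
  have hP : Module.finrank ℝ (ℝ ∙ gradient f x)ᗮ = n := by
    have : Fact (Module.finrank ℝ E = n + 1) := ⟨hn⟩
    exact Submodule.finrank_orthogonal_span_singleton (hreg x hx)
  obtain ⟨V', hV', h'⟩ := finLoc n (f ⁻¹' {0}) x _ hP V hV (fun a ha b hb => by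
    have a1 := h a ha b hb
    set p := (ℝ ∙ gradient f x)ᗮ.orthogonalProjectionOnto
    have a2 : ‖a - b‖ ≤ ‖(a - b) - p (a - b)‖ + ‖(p (a - b) : E)‖ := by
      simpa using norm_add_le ((a - b) - p (a - b) : E) (p (a - b) : E)
    have a3 : ‖(p (a - b) : E)‖ = ‖p (a - b)‖ := rfl
    linarith)
  exact ⟨f ⁻¹' {0} ∩ V', inter_mem_nhdsWithin _ hV', h'⟩

theorem locT (n : ℕ) (hn : Module.finrank ℝ E = n + 1) (f h : E → ℝ) (hf : ContDiff ℝ 2 f)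
    (hh : ContDiff ℝ 2 h) (x0 : E) (hreg : gradient f x0 ≠ 0)
    (t : ℝ) (σ : E → ℝ) (hσ : ContDiffAt ℝ 1 σ x0)
    (hzero : ∀ x ∈ f ⁻¹' {0}, f (x + σ x • gradient f x) + t * h (x + σ x • gradient f x) = 0)
    (c : ℝ) (hc0 : 0 < c) (hc1 : c ^ 2 ≤ 1 / 2)
    (hc : ‖fderiv ℝ f x0 - (fderiv ℝ f (x0 + σ x0 • gradient f x0) +
      t • fderiv ℝ h (x0 + σ x0 • gradient f x0))‖ < c * ‖gradient f x0‖)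
    (hB : |σ x0| * ‖fderiv ℝ (gradient f) x0‖ ≤ 1 / 2) (κ : ℝ) (hκ : 1 < κ) 
    (P : Submodule ℝ E) (hPd : P = (ℝ ∙ gradient f x0)ᗮ) (B : P →L[ℝ] P)
    (hBdef : B = ContinuousLinearMap.id ℝ _ + σ x0 • (P.orthogonalProjectionOnto ∘L
      (fderiv ℝ (gradient f) x0) ∘L P.subtypeL)) :
    ∃ V ∈ 𝓝 x0, ∀ S ⊆ f ⁻¹' {0} ∩ V,
      μH[(n : ℝ)] ((fun x => x + σ x • gradient f x) '' S) ≤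
        ENNReal.ofReal (κ * (1 + c ^ 2) ^ n * |B.det|) * μH[(n : ℝ)] S ∧
      ENNReal.ofReal |B.det| * μH[(n : ℝ)] S ≤
        ENNReal.ofReal κ * μH[(n : ℝ)] ((fun x => x + σ x • gradient f x) '' S) := by
  have hN : ContDiff ℝ 1 (gradient f) := gradContDiff f hf
  have hP : Module.finrank ℝ P = n := by
    rw [hPd]
    have : Fact (Module.finrank ℝ E = n + 1) := ⟨hn⟩
    exact Submodule.finrank_orthogonal_span_singleton hreg
  have hN0 : 0 < ‖gradient f x0‖ := by simpa using hreg
  have hproj : ∀ w : E, ‖w - P.orthogonalProjectionOnto w‖ = |inner ℝ (gradient f x0) w| / ‖gradient f x0‖ := by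
    subst hPd; exact projN (gradient f x0) hreg
  have hpN : P.orthogonalProjectionOnto (gradient f x0) = 0 := by
    subst hPd
    rw [Submodule.orthogonalProjectionOnto_eq_zero_iff]
    apply Submodule.le_orthogonal_orthogonal
    exact Submodule.mem_span_singleton_self _
  have ha : ∀ δ > 0, ∃ V ∈ 𝓝 x0, ∀ x ∈ f ⁻¹' {0} ∩ V, ∀ y ∈ f ⁻¹' {0} ∩ V,
      ‖(x - y) - P.orthogonalProjectionOnto (x - y)‖ ≤ δ * ‖x - y‖ := by
    subst hPd; exact hypA f hf x0 hreg
  set N := gradient f with hNd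
  set p := P.orthogonalProjectionOnto with hp
  set H := fderiv ℝ N x0 with hH
  set Φ : E → E := fun x => x + σ x • N x with hΦ
  have hple : ∀ v, ‖p v‖ ≤ ‖v‖ := fun v => P.norm_orthogonalProjectionOnto_apply_le v
  have hpH : ∀ v : E, ‖σ x0 • p (H v)‖ ≤ 1 / 2 * ‖v‖ := by
    intro v
    rw [norm_smul, Real.norm_eq_abs]
    calc |σ x0| * ‖p (H v)‖ ≤ |σ x0| * (‖H‖ * ‖v‖) := by
          gcongr; exact (hple _).trans (H.le_opNorm _)
      _ = (|σ x0| * ‖H‖) * ‖v‖ := by ring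
      _ ≤ _ := by gcongr
  have hBv : ∀ v : P, B v = v + σ x0 • p (H v) := by
    intro v; rw [hBdef]; rfl
  have hstr : HasStrictFDerivAt Φ (ContinuousLinearMap.id ℝ E +
      (σ x0 • H + (fderiv ℝ σ x0).smulRight (N x0))) x0 :=
    (hasStrictFDerivAt_id x0).add ((hσ.hasStrictFDerivAt (by norm_num)).smul
      (hN.contDiffAt.hasStrictFDerivAt (by norm_num)))
  refine areaLoc n (f ⁻¹' {0}) x0 P hP Φ B (1 + c ^ 2) (by positivity) ?_ ha ?_ ?_ κ hκ
  · intro v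
    have h1 : ‖v‖ ≤ ‖B v‖ + ‖σ x0 • p (H v)‖ := by
      have := norm_sub_le (B v) (σ x0 • p (H v))
      rwa [hBv, add_sub_cancel_right, ← hBv] at this
    have := hpH v
    have e : ‖(v : E)‖ = ‖v‖ := rfl
    linarith
  · intro δ hδ
    obtain ⟨V1, hV1, h1⟩ := ha δ hδ
    have h2 := (hasStrictFDerivAt_iff_isLittleO.1 hstr).def (half_pos hδ)
    rw [nhds_prod_eq] at h2
    obtain ⟨V2, hV2, h2⟩ := eventually_prod_self_iff'.1 h2
    refine ⟨V1 ∩ V2, inter_mem hV1 hV2, fun x hx y hy => ?_⟩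
    have h3 := h1 x ⟨hx.1, hx.2.1⟩ y ⟨hy.1, hy.2.1⟩
    have h4 := h2 x hx.2.2 y hy.2.2
    simp only [add_apply, smul_apply,
      ContinuousLinearMap.smulRight_apply, ContinuousLinearMap.id_apply] at h4
    set w := x - y
    set u := Φ x - Φ y - (w + (σ x0 • H w + (fderiv ℝ σ x0) w • N x0)) with hu
    have h5 : p (Φ x - Φ y) - B (p w) = p u + σ x0 • p (H (w - p w)) := by
      rw [hBv, hu]
      simp only [map_sub, map_add, map_smul, hpN, smul_zero, add_zero, smul_sub]
      abel
    rw [h5]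
    calc _ ≤ ‖p u‖ + ‖σ x0 • p (H (w - p w))‖ := norm_add_le _ _
      _ ≤ δ / 2 * ‖w‖ + 1 / 2 * (δ * ‖w‖) := by
        gcongr
        · exact (hple _).trans h4
        · exact (hpH _).trans (by gcongr)
      _ = _ := by ring
  · set y0 := Φ x0 with hy0
    have hFs : HasStrictFDerivAt (fun y => f y + t * h y) (fderiv ℝ f y0 + t • fderiv ℝ h y0) y0 :=
      (hf.contDiffAt.hasStrictFDerivAt (by norm_num)).add
        ((hh.contDiffAt.hasStrictFDerivAt (by norm_num)).const_mul t)
    set T := fderiv ℝ f y0 + t • fderiv ℝ h y0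
    set δ := c * ‖N x0‖ - ‖fderiv ℝ f x0 - T‖ with hδ
    have hδ0 : 0 < δ := sub_pos.2 hc
    obtain ⟨V, hV, hv⟩ := levelNormal _ _ y0 hFs δ hδ0
    refine ⟨Φ ⁻¹' V, hstr.continuousAt.preimage_mem_nhds hV, fun x hx y hy => ?_⟩
    have h1 := hv (Φ x) hx.2 (Φ y) hy.2 (hzero x hx.1) (hzero y hy.1)
    set w := Φ x - Φ y
    have h2 : |fderiv ℝ f x0 w| ≤ c * ‖N x0‖ * ‖w‖ := by
      have : fderiv ℝ f x0 w = (fderiv ℝ f x0 - T) w + T w := by simp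
      rw [this]
      have h3 := (fderiv ℝ f x0 - T).le_opNorm w
      rw [Real.norm_eq_abs] at h3
      have := abs_add_le ((fderiv ℝ f x0 - T) w) (T w)
      nlinarith
    have h3 : ‖w - p w‖ ≤ c * ‖w‖ := by
      rw [hproj, gradInner, div_le_iff₀ hN0]
      linarith
    have h4 : ‖w‖ ^ 2 = ‖p w‖ ^ 2 + ‖w - p w‖ ^ 2 := by
      have h5 : inner ℝ (p w : E) (w - p w) = 0 := by
        rw [real_inner_comm]
        exact P.starProjection_inner_eq_zero w (p w : E) (p w).2
      have h6 := norm_add_sq_eq_norm_sq_add_norm_sq_of_inner_eq_zero (p w : E) (w - p w) h5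
      rw [add_sub_cancel] at h6
      have e : ‖(p w : E)‖ = ‖p w‖ := rfl
      rw [e] at h6
      nlinarith
    refine (sq_le_sq₀ (norm_nonneg _) (by positivity)).1 ?_
    have h5 : ‖w - p w‖ ^ 2 ≤ c ^ 2 * ‖w‖ ^ 2 := by
      rw [← mul_pow]; gcongr
    have h6 : (1 - c ^ 2) * ‖w‖ ^ 2 ≤ ‖p w‖ ^ 2 := by linarith
    have h7 : 1 ≤ (1 + c ^ 2) ^ 2 * (1 - c ^ 2) := by nlinarith [sq_nonneg c, sq_nonneg (c^2), mul_nonneg (sq_nonneg c) (sub_nonneg.2 hc1)]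
    calc ‖w‖ ^ 2 = 1 * ‖w‖ ^ 2 := by ring
      _ ≤ ((1 + c ^ 2) ^ 2 * (1 - c ^ 2)) * ‖w‖ ^ 2 := by gcongr
      _ = (1 + c ^ 2) ^ 2 * ((1 - c ^ 2) * ‖w‖ ^ 2) := by ring
      _ ≤ (1 + c ^ 2) ^ 2 * ‖p w‖ ^ 2 := by gcongr
      _ = _ := by ring
end

section
variable {E : Type*} [NormedAddCommGroup E] [InnerProductSpace ℝ E] [FiniteDimensional ℝ E]

theorem powBd (k : ℕ) (u : ℝ) (h0 : 0 ≤ u) (h1 : u ≤ 1) : (1 + u) ^ k ≤ 1 + (2 ^ k - 1) * u := by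
  induction k with
  | zero => simp
  | succ k ih =>
    have h2 : (1:ℝ) ≤ 2 ^ k := one_le_pow₀ (by norm_num)
    have h3 : (1 + u) ^ (k+1) ≤ (1 + (2 ^ k - 1) * u) * (1 + u) := by
      rw [pow_succ]; gcongr
    have h4 : (2 ^ k - 1) * u * u ≤ (2 ^ k - 1) * u * 1 := by
      have : 0 ≤ (2 ^ k - 1) * u := mul_nonneg (by linarith) h0
      gcongr
    have h5 : (2:ℝ) ^ (k+1) = 2 * 2 ^ k := pow_succ' _ _
    rw [h5]
    nlinarith

theorem smallT (M r : ℝ) (hr : 0 < r) : ∀ᶠ t : ℝ in 𝓝 0, |t| * M < r := by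
  have : Continuous (fun t : ℝ => |t| * M) := by fun_prop
  have := this.tendsto 0
  simp only [abs_zero, zero_mul] at this
  exact this.eventually (gt_mem_nhds hr)

/-- trace part -/
noncomputable def tauF (f : E → ℝ) (x : E) : ℝ :=
  LinearMap.trace ℝ E (fderiv ℝ (gradient f) x : E →ₗ[ℝ] E) -
    inner ℝ (‖gradient f x‖⁻¹ • gradient f x) (fderiv ℝ (gradient f) x (‖gradient f x‖⁻¹ • gradient f x))

theorem tauCont (f : E → ℝ) (hf : ContDiff ℝ 2 f) (hreg : ∀ x ∈ f ⁻¹' {0}, gradient f x ≠ 0) :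
    ContinuousOn (tauF f) (f ⁻¹' {0}) := by
  have hN := gradContDiff f hf
  have hN' : Continuous (fderiv ℝ (gradient f)) := hN.continuous_fderiv (by norm_num)
  have hNc := hN.continuous
  have hT : Continuous (fun L : E →L[ℝ] E => LinearMap.trace ℝ E (L : E →ₗ[ℝ] E)) :=
    LinearMap.continuous_of_finiteDimensional
      ((LinearMap.trace ℝ E) ∘ₗ (ContinuousLinearMap.coeLM ℝ : (E →L[ℝ] E) →ₗ[ℝ] (E →ₗ[ℝ] E)))
  have hν : ContinuousOn (fun x => ‖gradient f x‖⁻¹ • gradient f x) (f ⁻¹' {0}) := by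
    apply ContinuousOn.smul _ hNc.continuousOn
    apply ContinuousOn.inv₀ hNc.norm.continuousOn
    intro x hx
    simpa using hreg x hx
  unfold tauF
  apply ContinuousOn.sub (hT.comp hN').continuousOn
  exact hν.inner (hN'.continuousOn.clm_apply hν)

theorem kCont (f h : E → ℝ) (hf : ContDiff ℝ 2 f) (hh : ContDiff ℝ 2 h)
    (hreg : ∀ x ∈ f ⁻¹' {0}, gradient f x ≠ 0) :
    ContinuousOn (fun x => h x / ‖gradient f x‖ ^ 2) (f ⁻¹' {0}) := by
  have hN := (gradContDiff f hf).continuous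
  apply ContinuousOn.div hh.continuous.continuousOn (hN.norm.pow 2).continuousOn
  intro x hx
  simpa using hreg x hx

theorem ennCancel (a d κ : ℝ) (hκ : 0 < κ) (h : κ * a ≤ d) (x y : ℝ≥0∞)
    (hxy : ENNReal.ofReal d * x ≤ ENNReal.ofReal κ * y) : ENNReal.ofReal a * x ≤ y := by
  have h1 : ENNReal.ofReal κ * (ENNReal.ofReal a * x) ≤ ENNReal.ofReal κ * y := by
    rw [← mul_assoc, ← ENNReal.ofReal_mul hκ.le]
    exact le_trans (by gcongr) hxy
  exact (ENNReal.mul_le_mul_iff_right (by simpa using hκ) ENNReal.ofReal_ne_top).1 h1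

theorem arithU (n : ℕ) (η u d a : ℝ) (T : ℝ) (hT : 0 ≤ T) (hu0 : 0 ≤ u) (hu1 : u ≤ 1 / 4) (hd0 : 0 ≤ d)
    (hd : |d - 1 - a| ≤ u) (ha : |a| ≤ 1 / 4) (hη : (1 + 2 * 2 ^ (n+1)) * u ≤ η * T) :
    (1 + u) * (1 + u) ^ n * d ≤ 1 + a + η * T := by
  have h1 := powBd (n+1) u hu0 (by linarith)
  rw [abs_le] at hd ha
  have h2 : (1 + u) * (1 + u) ^ n * d ≤ (1 + (2 ^ (n+1) - 1) * u) * d := by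
    rw [pow_succ'] at h1; gcongr
  have h4 : (1:ℝ) ≤ 2 ^ (n+1) := one_le_pow₀ (by norm_num)
  have h3 : (2 ^ (n+1) - 1) * u * d ≤ (2 ^ (n+1) - 1) * u * 2 := by
    have : 0 ≤ (2 ^ (n+1) - 1) * u := mul_nonneg (by linarith) hu0
    gcongr; linarith
  nlinarith

theorem arithL (n : ℕ) (η u d a : ℝ) (T : ℝ) (hT : 0 ≤ T) (hu0 : 0 ≤ u) (hu1 : u ≤ 1 / 4) (hd0 : 0 ≤ d)
    (hd : |d - 1 - a| ≤ u) (ha : |a| ≤ 1 / 4) (hη : (1 + 2 * 2 ^ (n+1)) * u ≤ η * T) :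
    (1 + u) * (1 + a - η * T) ≤ d := by
  rw [abs_le] at hd ha
  have h4 : (1:ℝ) ≤ 2 ^ (n+1) := one_le_pow₀ (by norm_num)
  have h5 : 3 * u ≤ η * T := by nlinarith
  have h6 : (1 + u) * (1 + a - η * T) ≤ (1 + u) * (1 + a - 3 * u) := by gcongr
  nlinarith

variable [MeasurableSpace E] [BorelSpace E]

set_option maxHeartbeats 1000000 in
theorem unif (n : ℕ) (hn : Module.finrank ℝ E = n + 1) (f h : E → ℝ) (hf : ContDiff ℝ 2 f)
    (hh : ContDiff ℝ 2 h)
    (hZ : IsCompact (f ⁻¹' {0})) (hreg : ∀ x ∈ f ⁻¹' {0}, gradient f x ≠ 0)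
    (s : ℝ × E → ℝ) (O : Set (ℝ × E)) (hO : IsOpen O) (hs : ContDiffOn ℝ 1 s O)
    (hs0 : ∀ x ∈ f ⁻¹' {0}, s (0, x) = 0) (ε : ℝ) (hε : 0 < ε)
    (hOt : ∀ t : ℝ, |t| < ε → ∀ x ∈ f ⁻¹' {0}, (t, x) ∈ O)
    (hzero : ∀ t : ℝ, |t| < ε → ∀ x ∈ f ⁻¹' {0},
      f (x + s (t, x) • gradient f x) + t * h (x + s (t, x) • gradient f x) = 0)
    (η : ℝ) (hη : 0 < η) :
    ∀ᶠ t : ℝ in 𝓝 0, t ≠ 0 → ∀ x0 ∈ f ⁻¹' {0}, ∃ V ∈ 𝓝 x0, ∀ S ⊆ f ⁻¹' {0} ∩ V,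
      μH[(n : ℝ)] ((fun x => x + s (t, x) • gradient f x) '' S) ≤
        ENNReal.ofReal (1 + t * (-(h x0 / ‖gradient f x0‖ ^ 2) * tauF f x0) + η * |t|)
          * μH[(n : ℝ)] S ∧
      ENNReal.ofReal (1 + t * (-(h x0 / ‖gradient f x0‖ ^ 2) * tauF f x0) - η * |t|)
          * μH[(n : ℝ)] S ≤ μH[(n : ℝ)] ((fun x => x + s (t, x) • gradient f x) '' S) := by
  have hN := gradContDiff f hf
  have hN' : Continuous (fderiv ℝ (gradient f)) := hN.continuous_fderiv (by norm_num)
  obtain ⟨C, hC⟩ := hZ.exists_bound_of_continuousOn hN'.continuousOn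
  obtain ⟨Mk', hMk'⟩ := hZ.exists_bound_of_continuousOn (kCont f h hf hh hreg)
  obtain ⟨Mt', hMt'⟩ := hZ.exists_bound_of_continuousOn (tauCont f hf hreg)
  set Mk := max Mk' 0
  set Mt := max Mt' 0
  have hMk0 : 0 ≤ Mk := le_max_right _ _
  have hMt0 : 0 ≤ Mt := le_max_right _ _
  have hMk : ∀ x ∈ f ⁻¹' {0}, |h x / ‖gradient f x‖ ^ 2| ≤ Mk := fun x hx =>
    (hMk' x hx).trans (le_max_left _ _)
  have hMt : ∀ x ∈ f ⁻¹' {0}, |tauF f x| ≤ Mt := fun x hx =>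
    (hMt' x hx).trans (le_max_left _ _)
  have hD : (0:ℝ) < 1 + 2 * 2 ^ (n+1) := by positivity
  set η1 := min 1 (η / (1 + 2 * 2 ^ (n+1))) with hη1d
  have hη1 : 0 < η1 := lt_min one_pos (by positivity)
  have hη1' : η1 ≤ 1 := min_le_left _ _
  have hηD : (1 + 2 * 2 ^ (n+1)) * η1 ≤ η := by
    have := min_le_right 1 (η / (1 + 2 * 2 ^ (n+1)))
    rw [← hη1d, le_div_iff₀ hD] at this
    linarith
  have hden : 1 ≤ Mk + 1 + Mt := by linarith
  set η0 := η1 / (Mk + 1 + Mt) with hη0d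
  have hη0 : 0 < η0 := by positivity
  have hη0e : η0 * (Mk + 1 + Mt) = η1 := by rw [hη0d]; field_simp
  have hη0' : η0 ≤ 1 := by nlinarith
  obtain ⟨δ, hδ, hdet⟩ := detExp (E := E) n C η0 hη0
  have hsA : ∀ t : ℝ, |t| < ε → ∀ x ∈ f ⁻¹' {0}, ContDiffAt ℝ 1 s (t, x) := fun t ht x hx =>
    hs.contDiffAt (hO.mem_nhds (hOt t ht x hx))
  have hs00 : ∀ x ∈ f ⁻¹' {0}, ContDiffAt ℝ 1 s (0, x) := hsA 0 (by simpa using hε)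
  have eε : ∀ᶠ t : ℝ in 𝓝 0, |t| < ε := by simpa using smallT 1 ε hε
  have e1 := linBound hZ (fun q : ℝ × E => fderiv ℝ f q.2 -
      (fderiv ℝ f (q.2 + s q • gradient f q.2) + q.1 • fderiv ℝ h (q.2 + s q • gradient f q.2)))
    (by
      intro z hz
      have hs' := hs00 z hz
      have hfd : ContDiff ℝ 1 (fderiv ℝ f) := hf.fderiv_right (by norm_num)
      have hhd : ContDiff ℝ 1 (fderiv ℝ h) := hh.fderiv_right (by norm_num)
      have hΦ : ContDiffAt ℝ 1 (fun q : ℝ × E => q.2 + s q • gradient f q.2) (0, z) :=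
        contDiffAt_snd.add (hs'.smul (hN.contDiffAt.comp _ contDiffAt_snd))
      exact (hfd.contDiffAt.comp _ contDiffAt_snd).sub
        ((hfd.contDiffAt.comp _ hΦ).add (contDiffAt_fst.smul (hhd.contDiffAt.comp _ hΦ))))
    (by intro x hx; simp [hs0 x hx])
    (fun x => η1 * ‖gradient f x‖ ^ 2 / 4)
    (by have := hN.continuous; fun_prop)
    (by
      intro x hx
      have : 0 < ‖gradient f x‖ := by simpa using hreg x hx
      positivity)
  have e2 := sAsym f h hf hh hZ hreg s hs00 hs0 (by
    filter_upwards [eε] with t ht using hzero t ht) η0 hη0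
  filter_upwards [eε, e1, e2, smallT η1 (1/4) (by norm_num), smallT (Mk * Mt) (1/4) (by norm_num),
    smallT ((Mk+1) * max C 0) (1/2) (by norm_num), smallT (Mk + 1) δ hδ]
    with t ht h1 h2 h3 h4 h5 h6 ht0 x0 hx0
  have ht0' : 0 < |t| := abs_pos.2 ht0
  have hN0 : 0 < ‖gradient f x0‖ := by simpa using hreg x0 hx0
  specialize h1 x0 hx0
  specialize h2 x0 hx0
  have hk := hMk x0 hx0
  have hτ := hMt x0 hx0
  set k := h x0 / ‖gradient f x0‖ ^ 2
  set τ := tauF f x0 with hτd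
  set u := η1 * |t| with hu
  have hu0 : 0 < u := by positivity
  have hsb : |s (t, x0)| ≤ (Mk + 1) * |t| := by
    have e : s (t, x0) = (s (t, x0) + t * k) - t * k := by ring
    rw [e]
    refine (abs_sub _ _).trans ?_
    rw [abs_mul]
    nlinarith
  set P := (ℝ ∙ gradient f x0)ᗮ with hPd
  have hP : Module.finrank ℝ P = n := by
    have : Fact (Module.finrank ℝ E = n + 1) := ⟨hn⟩
    exact Submodule.finrank_orthogonal_span_singleton (hreg x0 hx0)
  set X : P →L[ℝ] P := P.orthogonalProjectionOnto ∘L (fderiv ℝ (gradient f) x0) ∘L P.subtypeL with hX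
  have htr : LinearMap.trace ℝ P X = τ := traceCompr _ _
  have hXn : ‖X‖ ≤ C := by
    refine le_trans ?_ (hC x0 hx0)
    refine X.opNorm_le_bound (norm_nonneg _) fun v => ?_
    exact (P.norm_orthogonalProjectionOnto_apply_le _).trans
      ((fderiv ℝ (gradient f) x0).le_opNorm _)
  have hd := hdet P hP X hXn (s (t, x0)) (by linarith)
  rw [htr] at hd
  set B := ContinuousLinearMap.id ℝ P + s (t, x0) • X with hBd
  have ha : |t * (-k * τ)| ≤ 1 / 4 := by
    rw [abs_mul, abs_mul, abs_neg]
    have : |k| * |τ| ≤ Mk * Mt := by gcongr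
    nlinarith
  have hd2 : |B.det - 1 - t * (-k * τ)| ≤ u := by
    have e : B.det - 1 - t * (-k * τ) = (B.det - 1 - s (t, x0) * τ) + (s (t, x0) + t * k) * τ := by ring
    rw [e]
    refine (abs_add_le _ _).trans ?_
    rw [abs_mul (s (t, x0) + t * k)]
    have b1 : |s (t, x0) + t * k| * |τ| ≤ η0 * |t| * Mt := by gcongr
    have b2 : η0 * |s (t, x0)| ≤ η0 * ((Mk + 1) * |t|) := by gcongr
    rw [hu, ← hη0e]
    nlinarith
  have hu1 : u ≤ 1 / 4 := by linarith
  have hdpos : 0 < B.det := by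
    rw [abs_le] at hd2 ha; linarith
  have hηu : (1 + 2 * 2 ^ (n+1)) * u ≤ η * |t| := by
    rw [hu, ← mul_assoc]; gcongr
  have hc2 : √u ^ 2 = u := Real.sq_sqrt hu0.le
  obtain ⟨V, hV, hVS⟩ := locT n hn f h hf hh x0 (hreg x0 hx0) t (fun x => s (t, x))
    ((hsA t ht x0 hx0).comp x0 (contDiffAt_const.prodMk contDiffAt_id))
    (hzero t ht) (√u) (Real.sqrt_pos.2 hu0) (by rw [hc2]; linarith)
    (by
      refine lt_of_pow_lt_pow_left₀ 2 (by positivity) (lt_of_le_of_lt h1 ?_)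
      rw [mul_pow, hc2, hu]
      have : 0 < η1 * |t| * ‖gradient f x0‖ ^ 2 := by positivity
      linarith)
    (by
      calc |s (t, x0)| * ‖fderiv ℝ (gradient f) x0‖ ≤ ((Mk + 1) * |t|) * max C 0 := by
            gcongr; exact (hC x0 hx0).trans (le_max_left _ _)
        _ ≤ 1 / 2 := by linarith)
    (1 + u) (by linarith) P hPd B rfl
  rw [hc2, abs_of_pos hdpos] at hVS
  refine ⟨V, hV, fun S hS => ⟨(hVS S hS).1.trans ?_, ?_⟩⟩
  · gcongr
    exact arithU n η u _ _ _ ht0'.le hu0.le hu1 hdpos.le hd2 ha hηu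
  · exact ennCancel _ _ (1 + u) (by linarith)
      (arithL n η u _ _ _ ht0'.le hu0.le hu1 hdpos.le hd2 ha hηu) _ _ (hVS S hS).2
end

section
variable {E : Type*} [NormedAddCommGroup E] [InnerProductSpace ℝ E] [FiniteDimensional ℝ E]
  [MeasurableSpace E] [BorelSpace E]

theorem integC (μ : Measure E) (Z : Set E) (hZ : IsCompact Z) (hμ : μ Z < ∞) (g : E → ℝ)
    (hg : ContinuousOn g Z) : IntegrableOn g Z μ := by
  obtain ⟨M, hM⟩ := hZ.exists_bound_of_continuousOn hg
  have : IsFiniteMeasure (μ.restrict Z) := ⟨by simpa using hμ⟩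
  exact Integrable.of_bound (hg.aestronglyMeasurable hZ.measurableSet) M
    (ae_restrict_of_forall_mem hZ.measurableSet hM)

theorem lintC (μ : Measure E) (Z : Set E) (hZ : IsCompact Z) (hμ : μ Z < ∞) (g : E → ℝ)
    (hg : ContinuousOn g Z) (t e : ℝ) (hpos : ∀ x ∈ Z, 0 ≤ 1 + t * g x + e) :
    ∫⁻ x in Z, ENNReal.ofReal (1 + t * g x + e) ∂μ =
      ENNReal.ofReal ((μ Z).toReal + t * (∫ x in Z, g x ∂μ) + e * (μ Z).toReal) := by
  have hc : ContinuousOn (fun x => 1 + t * g x + e) Z := by fun_prop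
  rw [← ofReal_integral_eq_lintegral_ofReal (integC μ Z hZ hμ _ hc)
    (ae_restrict_of_forall_mem hZ.measurableSet hpos)]
  have i1 := integC μ Z hZ hμ (fun x => t * g x) (by fun_prop)
  have i0 := integC μ Z hZ hμ (fun x => (1:ℝ)) (by fun_prop)
  have i2 := integC μ Z hZ hμ (fun x => e) (by fun_prop)
  congr 1
  have i3 := integC μ Z hZ hμ (fun x => 1 + t * g x) (by fun_prop)
  rw [integral_add i3 i2, integral_add i0 i1, integral_const_mul]
  simp [Measure.real]
  ring

theorem globT (μ : Measure E) (Z : Set E) (hZ : IsCompact Z) (hμ : μ Z < ∞) (g : E → ℝ)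
    (hg : ContinuousOn g Z) (Φ : E → E) (hΦ : ContinuousOn Φ Z) (hinj : InjOn Φ Z) (t η : ℝ)
    (hη : 0 < η)
    (hpos : ∀ x ∈ Z, 0 ≤ 1 + t * g x - 2 * η * |t|)
    (h : ∀ x0 ∈ Z, ∃ V ∈ 𝓝 x0, ∀ S ⊆ Z ∩ V,
      μ (Φ '' S) ≤ ENNReal.ofReal (1 + t * g x0 + η * |t|) * μ S ∧
      ENNReal.ofReal (1 + t * g x0 - η * |t|) * μ S ≤ μ (Φ '' S)) :
    μ (Φ '' Z) ≠ ∞ ∧ 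
    |(μ (Φ '' Z)).toReal - (μ Z).toReal - t * ∫ x in Z, g x ∂μ| ≤ 2 * η * |t| * (μ Z).toReal := by
  have hnb : ∀ x0 ∈ Z, ∃ V ∈ 𝓝 x0, ∀ x ∈ Z ∩ V, |t * g x - t * g x0| ≤ η * |t| := by
    intro x0 hx0
    have h1 := (hg x0 hx0).eventually (Metric.ball_mem_nhds (g x0) hη)
    rw [eventually_nhdsWithin_iff] at h1
    refine ⟨_, h1, fun x hx => ?_⟩
    have h2 : dist (g x) (g x0) < η := hx.2 hx.1
    rw [Real.dist_eq] at h2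
    rw [← mul_sub, abs_mul, mul_comm]
    gcongr
  have hU := glueUpper μ Z hZ Φ (fun x => ENNReal.ofReal (1 + t * g x + 2 * η * |t|)) (by
    intro x0 hx0
    obtain ⟨V, hV, h1⟩ := h x0 hx0
    obtain ⟨V', hV', h2⟩ := hnb x0 hx0
    refine ⟨V ∩ V', inter_mem hV hV', fun S hS hSm => ?_⟩
    refine (h1 S (fun x hx => ⟨(hS hx).1, (hS hx).2.1⟩)).1.trans ?_
    rw [← setLIntegral_const]
    refine setLIntegral_mono' hSm fun x hx => ENNReal.ofReal_le_ofReal ?_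
    have := abs_le.1 (h2 x ⟨(hS hx).1, (hS hx).2.2⟩)
    linarith)
  have hL := glueLower μ Z hZ Φ (fun x => ENNReal.ofReal (1 + t * g x + -(2 * η * |t|))) hΦ hinj (by
    intro x0 hx0
    obtain ⟨V, hV, h1⟩ := h x0 hx0
    obtain ⟨V', hV', h2⟩ := hnb x0 hx0
    refine ⟨V ∩ V', inter_mem hV hV', fun S hS hSm => ?_⟩
    refine le_trans ?_ (h1 S (fun x hx => ⟨(hS hx).1, (hS hx).2.1⟩)).2
    rw [← setLIntegral_const]
    refine setLIntegral_mono' hSm fun x hx => ENNReal.ofReal_le_ofReal ?_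
    have := abs_le.1 (h2 x ⟨(hS hx).1, (hS hx).2.2⟩)
    linarith)
  have hp : 0 ≤ 2 * η * |t| := by positivity
  rw [lintC μ Z hZ hμ g hg t _ (fun x hx => by linarith [hpos x hx])] at hU
  rw [lintC μ Z hZ hμ g hg t _ (fun x hx => by linarith [hpos x hx])] at hL
  have hfin : μ (Φ '' Z) ≠ ∞ := ne_top_of_le_ne_top ENNReal.ofReal_ne_top hU
  refine ⟨hfin, ?_⟩
  have hLr := (ENNReal.ofReal_le_iff_le_toReal hfin).1 hL
  have hUnn : 0 ≤ (μ Z).toReal + t * (∫ x in Z, g x ∂μ) + 2 * η * |t| * (μ Z).toReal := by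
    have i0 : 0 ≤ ∫ x in Z, (1 + t * g x + 2 * η * |t|) ∂μ :=
      setIntegral_nonneg hZ.measurableSet (fun x hx => by linarith [hpos x hx])
    have i1 := integC μ Z hZ hμ (fun x => t * g x) (by fun_prop)
    have i00 := integC μ Z hZ hμ (fun x => (1:ℝ)) (by fun_prop)
    have i2 := integC μ Z hZ hμ (fun x => 2 * η * |t|) (by fun_prop)
    have i3 := integC μ Z hZ hμ (fun x => 1 + t * g x) (by fun_prop)
    rw [integral_add i3 i2, integral_add i00 i1, integral_const_mul] at i0
    simp [Measure.real] at i0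
    linarith
  have hUr := ENNReal.toReal_le_of_le_ofReal hUnn hU
  rw [abs_le]
  constructor <;> linarith

theorem mainE (n : ℕ) (hn : Module.finrank ℝ E = n + 1) (f h : E → ℝ) (hf : ContDiff ℝ 2 f)
    (hh : ContDiff ℝ 2 h)
    (hZ : IsCompact (f ⁻¹' {0})) (hreg : ∀ x ∈ f ⁻¹' {0}, gradient f x ≠ 0) :
    ∃ ε > (0 : ℝ), ∃ U : Set E,
      IsOpen U ∧ Bornology.IsBounded U ∧ f ⁻¹' {0} ⊆ U ∧
      (∀ t : ℝ, |t| < ε → μH[(n : ℝ)] {x ∈ U | f x + t * h x = 0} ≠ ⊤) ∧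
      HasDerivAt
        (fun t : ℝ => (μH[(n : ℝ)] {x ∈ U | f x + t * h x = 0}).toReal)
        (∫ x in f ⁻¹' {0}, -(h x / ‖gradient f x‖ ^ 2) * tauF f x ∂μH[(n : ℝ)]) 0 := by
  obtain ⟨s, O, U, ε, hO, hε, hUo, hUb, hZU, hs, hs0, hgeo⟩ := geom f h hf hh hZ hreg
  have hfin := finiteZ n hn f hf hZ hreg
  set Z := f ⁻¹' {0} with hZd
  set g : E → ℝ := fun x => -(h x / ‖gradient f x‖ ^ 2) * tauF f x with hgd
  have hg : ContinuousOn g Z := (kCont f h hf hh hreg).neg.mul (tauCont f hf hreg)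
  obtain ⟨M, hM⟩ := hZ.exists_bound_of_continuousOn hg
  have hU0 : {x ∈ U | f x + 0 * h x = 0} = Z := by
    ext x
    simp only [zero_mul, add_zero, mem_ofPred_eq, hZd, mem_preimage, mem_singleton_iff]
    exact ⟨fun hx => hx.2, fun hx => ⟨hZU hx, hx⟩⟩
  have hzero : ∀ t : ℝ, |t| < ε → ∀ x ∈ Z,
      f (x + s (t, x) • gradient f x) + t * h (x + s (t, x) • gradient f x) = 0 := by
    intro t ht x hx
    have h1 : (fun x => x + s (t, x) • gradient f x) x ∈ {x ∈ U | f x + t * h x = 0} := by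
      rw [(hgeo t ht).2.2]; exact mem_image_of_mem _ hx
    exact h1.2
  have key : ∀ η > 0, ∀ᶠ t : ℝ in 𝓝 0,
      μH[(n : ℝ)] {x ∈ U | f x + t * h x = 0} ≠ ⊤ ∧
      |(μH[(n : ℝ)] {x ∈ U | f x + t * h x = 0}).toReal - (μH[(n : ℝ)] Z).toReal -
        t * ∫ x in Z, g x ∂μH[(n : ℝ)]| ≤ 2 * η * |t| * (μH[(n : ℝ)] Z).toReal := by
    intro η hη
    have e0 : ∀ᶠ t : ℝ in 𝓝 0, |t| < ε := by simpa using smallT 1 ε hε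
    filter_upwards [e0, smallT M (1/2) (by norm_num), smallT (2 * η) (1/2) (by norm_num),
      unif n hn f h hf hh hZ hreg s O hO hs hs0 ε hε (fun t ht => (hgeo t ht).1) hzero η hη]
      with t ht h1 h2 h3
    rcases eq_or_ne t 0 with rfl | ht0
    · rw [hU0]
      exact ⟨hfin.ne, by simp⟩
    · obtain ⟨g1, g2, g3⟩ := hgeo t ht
      rw [g3]
      refine globT _ Z hZ hfin g hg _ ?_ g2 t η hη ?_ (h3 ht0)
      · have c1 : ContinuousOn (fun x => s (t, x)) Z :=
          hs.continuousOn.comp (by fun_prop) g1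
        have c2 := (gradContDiff f hf).continuous
        exact continuousOn_id.add (c1.smul c2.continuousOn)
      · intro x hx
        have a1 := hM x hx
        rw [Real.norm_eq_abs] at a1
        have a2 : |t * g x| ≤ 1/2 := by
          rw [abs_mul]; nlinarith [abs_nonneg t]
        have := (abs_le.1 a2).1
        nlinarith
  obtain ⟨ε', hε', hk1⟩ := Metric.eventually_nhds_iff.1 (key 1 one_pos)
  refine ⟨ε', hε', U, hUo, hUb, hZU, fun t ht => (hk1 (by simpa using ht)).1, ?_⟩
  rw [hasDerivAt_iff_isLittleO, Asymptotics.isLittleO_iff]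
  intro c hc
  set m := (μH[(n : ℝ)] Z).toReal
  have hm : 0 ≤ m := ENNReal.toReal_nonneg
  filter_upwards [key (c / (2 * (m + 1))) (by positivity)] with t ht
  rw [hU0, sub_zero, smul_eq_mul, Real.norm_eq_abs, Real.norm_eq_abs]
  refine ht.2.trans ?_
  have : 2 * (c / (2 * (m + 1))) * |t| * m = c * |t| * (m / (m + 1)) := by field_simp
  rw [this]
  have h1 : m / (m + 1) ≤ 1 := by rw [div_le_one (by linarith)]; linarith
  have h2 : 0 ≤ c * |t| := by positivity
  nlinarith
end

theorem hessEq {m : ℕ} (f : EuclideanSpace ℝ (Fin m) → ℝ) (hf : ContDiff ℝ 2 f)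
    (x v w : EuclideanSpace ℝ (Fin m)) :
    hessianApply f x v w = inner ℝ w (fderiv ℝ (gradient f) x v) := by
  have hN := gradContDiff f hf
  have h2 : HasFDerivAt (fun y => (innerSL ℝ) (gradient f y))
      ((innerSL ℝ) ∘L (fderiv ℝ (gradient f) x)) x :=
    (innerSL ℝ).hasFDerivAt.comp x (hN.differentiable (by norm_num) x).hasFDerivAt
  have h3 : (fun y => fderiv ℝ f y) = fun y => (innerSL ℝ) (gradient f y) := by
    ext y u
    simp [gradient]
  unfold hessianApply
  rw [h3, h2.fderiv]
  change inner ℝ (fderiv ℝ (gradient f) x v) w = _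
  exact real_inner_comm _ _

theorem laplEq {m : ℕ} (f : EuclideanSpace ℝ (Fin m) → ℝ) (hf : ContDiff ℝ 2 f)
    (x : EuclideanSpace ℝ (Fin m)) :
    laplacianApply f x = LinearMap.trace ℝ _
      (fderiv ℝ (gradient f) x : EuclideanSpace ℝ (Fin m) →ₗ[ℝ] EuclideanSpace ℝ (Fin m)) := by
  unfold laplacianApply
  rw [LinearMap.trace_eq_sum_inner _ (EuclideanSpace.basisFun (Fin m) ℝ)]
  refine Finset.sum_congr rfl fun i _ => ?_
  rw [hessEq f hf]
  simp
end

/-- First variation of the nodal volume for `C²` functions `f, h : ℝ^m → ℝ`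
(`m ≥ 2`) with `Z = f⁻¹(0)` compact and `∇f ≠ 0` on `Z`: there are `ε > 0` and a bounded
open `U ⊇ Z` such that `φ(t) = ℋ^{m-1}({x ∈ U : f x + t h x = 0})` is finite for `|t| < ε`
and `φ'(0) = ∫_Z h ⬝ (Hess f(ν,ν) − Δf) / ‖∇f‖² dℋ^{m-1}` with `ν = ∇f/‖∇f‖`. -/
theorem stmt2 {m : ℕ} (hm : 2 ≤ m)
    (f h : EuclideanSpace ℝ (Fin m) → ℝ)
    (hf : ContDiff ℝ 2 f) (hh : ContDiff ℝ 2 h)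
    (hZ : IsCompact (f ⁻¹' {0}))
    (hreg : ∀ x ∈ f ⁻¹' {0}, gradient f x ≠ 0) :
    ∃ ε > (0 : ℝ), ∃ U : Set (EuclideanSpace ℝ (Fin m)),
      IsOpen U ∧ Bornology.IsBounded U ∧ f ⁻¹' {0} ⊆ U ∧
      (∀ t : ℝ, |t| < ε → μH[(m : ℝ) - 1] {x ∈ U | f x + t * h x = 0} ≠ ⊤) ∧
      HasDerivAt
        (fun t : ℝ => (μH[(m : ℝ) - 1] {x ∈ U | f x + t * h x = 0}).toReal)
        (∫ x in f ⁻¹' {0},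
          h x *
            (hessianApply f x (‖gradient f x‖⁻¹ • gradient f x)
                (‖gradient f x‖⁻¹ • gradient f x) -
              laplacianApply f x) / ‖gradient f x‖ ^ 2
          ∂μH[(m : ℝ) - 1]) 0 := by
  obtain ⟨n, rfl⟩ : ∃ n, m = n + 1 := ⟨m - 1, by omega⟩
  have e : ((n + 1 : ℕ) : ℝ) - 1 = (n : ℝ) := by push_cast; ring
  rw [e]
  obtain ⟨ε, hε, U, h1, h2, h3, h4, h5⟩ := mainE n (by simp) f h hf hh hZ hreg
  refine ⟨ε, hε, U, h1, h2, h3, h4, ?_⟩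
  convert h5 using 3 with x
  rw [hessEq f hf, laplEq f hf]
  unfold tauF
  ring
end

section
/- Let N₀, N₁, N₂ ∈ ℕ and let X = (X₀, X₁, X₂) be a centered Gaussian random vector in ℝ^{N₀} × ℝ^{N₁} × ℝ^{N₂} with covariance matrix K, whose diagonal blocks K₁₁ and K₂₂ are the covariance matrices of X₁ and X₂ respectively. Let a, b ∈ ℕ and let p, q ∈ (1, ∞) be conjugate exponents (1/p + 1/q = 1) with p·a < rank(K₁₁) and q·b < rank(K₂₂). Let D > 0 and let F : ℝ^{N₀+N₁+N₂} → ℝ be measurable with |F(x)| ≤ D(1 + ‖x‖^D) for all x. Then E[|F(X)| · ‖X₁‖^{−a} · ‖X₂‖^{−b}] < ∞. Moreover, for fixed N₀, N₁, N₂, a, b, p, q and D there exists a constant C > 0, depending only on these data, such that whenever additionally ‖K‖ ≤ D, K₁₁ and K₂₂ are invertible, p·a < N₁ and q·b < N₂, one has E[|F(X)| · ‖X₁‖^{−a} · ‖X₂‖^{−b}] ≤ C·(1 + det(K₁₁)^{−1/2} + det(K₂₂)^{−1/2}). -/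
open MeasureTheory ProbabilityTheory
open scoped RealInnerProductSpace

/-- The covariance matrix `K = E[X Xᵀ]` of a random vector `X : Ω → ℝⁿ`. -/
noncomputable def covMat {Ω : Type} [MeasurableSpace Ω] (P : Measure Ω) {n : ℕ}
    (X : Ω → EuclideanSpace ℝ (Fin n)) : Matrix (Fin n) (Fin n) ℝ :=
  Matrix.of fun i j => ∫ ω, X ω i * X ω j ∂P

/-- The coordinates of the concatenated random vector `(X₀, X₁, X₂)`. -/
def tripleCoord {Ω : Type} {N₀ N₁ N₂ : ℕ}
    (X₀ : Ω → EuclideanSpace ℝ (Fin N₀)) (X₁ : Ω → EuclideanSpace ℝ (Fin N₁))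
    (X₂ : Ω → EuclideanSpace ℝ (Fin N₂)) :
    (Fin N₀ ⊕ (Fin N₁ ⊕ Fin N₂)) → Ω → ℝ
  | Sum.inl i => fun ω => X₀ ω i
  | Sum.inr (Sum.inl i) => fun ω => X₁ ω i
  | Sum.inr (Sum.inr i) => fun ω => X₂ ω i

/-- The full covariance matrix of the concatenated vector `(X₀, X₁, X₂)`. -/
noncomputable def fullCov {Ω : Type} [MeasurableSpace Ω] (P : Measure Ω) {N₀ N₁ N₂ : ℕ}
    (X₀ : Ω → EuclideanSpace ℝ (Fin N₀)) (X₁ : Ω → EuclideanSpace ℝ (Fin N₁))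
    (X₂ : Ω → EuclideanSpace ℝ (Fin N₂)) :
    Matrix (Fin N₀ ⊕ (Fin N₁ ⊕ Fin N₂)) (Fin N₀ ⊕ (Fin N₁ ⊕ Fin N₂)) ℝ :=
  Matrix.of fun i j => ∫ ω, tripleCoord X₀ X₁ X₂ i ω * tripleCoord X₀ X₁ X₂ j ω ∂P

/-- `(X₀, X₁, X₂)` is a centered (possibly degenerate) Gaussian vector: every linear
functional of it has a centered normal distribution. -/
def IsCenteredGaussianTriple {Ω : Type} [MeasurableSpace Ω] (P : Measure Ω) {N₀ N₁ N₂ : ℕ}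
    (X₀ : Ω → EuclideanSpace ℝ (Fin N₀)) (X₁ : Ω → EuclideanSpace ℝ (Fin N₁))
    (X₂ : Ω → EuclideanSpace ℝ (Fin N₂)) : Prop :=
  ∀ (u₀ : EuclideanSpace ℝ (Fin N₀)) (u₁ : EuclideanSpace ℝ (Fin N₁))
    (u₂ : EuclideanSpace ℝ (Fin N₂)), ∃ v : NNReal,
      P.map (fun ω => ⟪u₀, X₀ ω⟫ + ⟪u₁, X₁ ω⟫ + ⟪u₂, X₂ ω⟫) = gaussianReal 0 v

open scoped ENNReal NNReal

lemma young3 (A U V : ℝ≥0∞) (s p q : ℝ) (hs : 0 < s) (hp : 0 < p) (hq : 0 < q)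
    (h : 1 / s + 1 / p + 1 / q = 1) : A * U * V ≤ A ^ s + U ^ p + V ^ q := by
  set M := max (A ^ s) (max (U ^ p) (V ^ q)) with hM
  have key : ∀ (B : ℝ≥0∞) (r : ℝ), 0 < r → B ^ r ≤ M → B ≤ M ^ (1 / r) := by
    intro B r hr hB
    have := ENNReal.rpow_le_rpow hB (by positivity : (0:ℝ) ≤ 1 / r)
    rwa [← ENNReal.rpow_mul, mul_one_div_cancel hr.ne', ENNReal.rpow_one] at this
  have hA := key A s hs (le_max_left _ _)
  have hU := key U p hp ((le_max_left _ _).trans (le_max_right _ _))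
  have hV := key V q hq ((le_max_right _ _).trans (le_max_right _ _))
  calc A * U * V ≤ M ^ (1 / s) * M ^ (1 / p) * M ^ (1 / q) := by gcongr
    _ = M := by
      rw [← ENNReal.rpow_add_of_nonneg _ _ (by positivity) (by positivity),
        ← ENNReal.rpow_add_of_nonneg _ _ (by positivity) (by positivity), h, ENNReal.rpow_one]
    _ ≤ _ := by
      rw [hM]
      refine max_le ?_ (max_le ?_ ?_)
      · exact (le_self_add).trans le_self_add
      · exact (le_add_self).trans le_self_add
      · exact le_add_self

lemma law_pi {Ω : Type} [MeasurableSpace Ω] (P : Measure Ω) [IsProbabilityMeasure P]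
    {ι : Type} [Fintype ι] (Y : Ω → ι → ℝ) (hY : Measurable Y) (v : ι → ℝ≥0)
    (h : ∀ u : ι → ℝ, ∀ w : ℝ≥0, (w : ℝ) = ∑ i, u i ^ 2 * v i →
      P.map (fun ω => ∑ i, u i * Y ω i) = gaussianReal 0 w) :
    P.map Y = Measure.pi fun i => gaussianReal 0 (v i) := by
  have : IsProbabilityMeasure (P.map Y) := Measure.isProbabilityMeasure_map hY.aemeasurable
  rw [← charFun_eq_pi_iff]
  intro t
  obtain ⟨w, hw⟩ : ∃ w : ℝ≥0, (w : ℝ) = ∑ i, t i ^ 2 * v i :=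
    ⟨Real.toNNReal (∑ i, t i ^ 2 * v i), Real.coe_toNNReal _ (by positivity)⟩
  have h1 := h (fun i => t i) w hw
  have hw' : (w : ℂ) = ∑ i, (t i : ℂ) ^ 2 * ((v i : ℝ) : ℂ) := by
    have := congrArg (fun x : ℝ => (x : ℂ)) hw
    push_cast at this
    exact this
  have e1 : charFun (((P.map Y)).map (WithLp.toLp 2)) t
      = charFun (P.map (fun ω => ∑ i, t i * Y ω i)) 1 := by
    rw [Measure.map_map (by fun_prop) hY, charFun_apply, charFun_apply,
      integral_map (by fun_prop) (by fun_prop), integral_map (by fun_prop) (by fun_prop)]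
    congr 1
    ext ω
    simp [PiLp.inner_apply, mul_comm]
  rw [e1, h1, charFun_gaussianReal]
  simp_rw [charFun_gaussianReal]
  rw [← Complex.exp_sum]
  congr 1
  simp [Finset.sum_div, mul_comm, hw']

lemma gauss_le (v : ℝ≥0) (hv : v ≠ 0) :
    gaussianReal 0 v ≤ (NNReal.sqrt v)⁻¹ • (volume : Measure ℝ) := by
  rw [gaussianReal_of_var_ne_zero _ hv]
  have : (NNReal.sqrt v)⁻¹ • (volume : Measure ℝ)
      = (volume : Measure ℝ).withDensity (fun _ => (((NNReal.sqrt v)⁻¹ : ℝ≥0) : ℝ≥0∞)) := by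
    rw [withDensity_const]; rfl
  rw [this]
  refine withDensity_mono (Filter.Eventually.of_forall fun x => ?_)
  rw [gaussianPDF]
  refine ENNReal.ofReal_le_of_le_toReal ?_
  simp only [ENNReal.coe_toReal, gaussianPDFReal]
  have hv' : (0:ℝ) < v := by positivity
  have h1 : Real.exp (-(x - 0) ^ 2 / (2 * v)) ≤ 1 := by
    rw [Real.exp_le_one_iff]
    apply div_nonpos_of_nonpos_of_nonneg <;> nlinarith [sq_nonneg (x - 0)]
  have h2 : (√(2 * Real.pi * v))⁻¹ ≤ (√(v:ℝ))⁻¹ := by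
    gcongr
    nlinarith [Real.pi_gt_three]
  push_cast
  calc _ ≤ (√(2 * Real.pi * v))⁻¹ * 1 := by gcongr
    _ ≤ _ := by simpa using h2

lemma pi_gauss_le {ι : Type} [Fintype ι] (v : ι → ℝ≥0) (hv : ∀ i, v i ≠ 0) :
    Measure.pi (fun i => gaussianReal 0 (v i)) ≤
      (∏ i, (NNReal.sqrt (v i))⁻¹) • (volume : Measure (ι → ℝ)) := by
  have e : Measure.pi (fun i => (NNReal.sqrt (v i))⁻¹ • (volume : Measure ℝ))
      = (∏ i, (NNReal.sqrt (v i))⁻¹) • (volume : Measure (ι → ℝ)) := by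
    refine Measure.pi_eq fun s hs => ?_
    rw [Measure.smul_apply, volume_pi_pi]
    simp only [Measure.smul_apply, ENNReal.smul_def, smul_eq_mul, Finset.prod_mul_distrib,
      ENNReal.ofNNReal_finsetProd]
  rw [← e]
  have key : (Measure.pi (fun i => gaussianReal 0 (v i))).toOuterMeasure ≤
      OuterMeasure.pi fun i => ((NNReal.sqrt (v i))⁻¹ • (volume : Measure ℝ)).toOuterMeasure := by
    rw [OuterMeasure.le_pi]
    intro s _
    simp only [Measure.coe_toOuterMeasure]
    rw [Measure.pi_pi]
    exact Finset.prod_le_prod' fun i _ => gauss_le (v i) (hv i) (s i)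
  refine Measure.le_iff.2 fun s hs => ?_
  conv_rhs => rw [Measure.pi, toMeasure_apply _ _ hs]
  exact key s

lemma pow_fin {ι : Type} [Fintype ι] (α : ℝ) (hι : 1 ≤ Fintype.card ι) (hα : α < Fintype.card ι) :
    ∫⁻ x in Metric.ball (0 : ι → ℝ) 1, ‖x‖ₑ ^ (-α) < ∞ := by
  have hn : Nonempty ι := Fintype.card_pos_iff.1 hι
  have h := integrableOn_ball_of_norm_le_rpow (μ := (volume : Measure (ι → ℝ)))
    (f := fun x : ι → ℝ => ‖x‖ ^ (-α)) (C := 1) (α := α) (r := 1) (by simpa using hι)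
    (by simpa using hα) (Filter.Eventually.of_forall fun x => by
      rw [one_mul, Real.norm_of_nonneg (by positivity)]) 
      (Measurable.aestronglyMeasurable (by fun_prop))
  refine lt_of_le_of_lt (le_of_eq ?_) h.2
  refine lintegral_congr_ae (ae_restrict_of_ae ?_)
  have : ∀ᵐ x : ι → ℝ, x ≠ 0 := by
    simp [ae_iff]
  filter_upwards [this] with x hx
  rw [← ofReal_norm, ← ofReal_norm, Real.norm_of_nonneg (by positivity),
    ENNReal.ofReal_rpow_of_pos (by positivity)]

lemma lemA {Ω : Type} [MeasurableSpace Ω] (P : Measure Ω) [IsProbabilityMeasure P]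
    {ι : Type} [Fintype ι] (Y : Ω → ι → ℝ) (hY : Measurable Y) (v : ι → ℝ≥0) (hv : ∀ i, v i ≠ 0)
    (h : ∀ u : ι → ℝ, ∀ w : ℝ≥0, (w : ℝ) = ∑ i, u i ^ 2 * v i →
      P.map (fun ω => ∑ i, u i * Y ω i) = gaussianReal 0 w) (α : ℝ) (hα : 0 ≤ α) :
    ∫⁻ ω, ‖Y ω‖ₑ ^ (-α) ∂P ≤ 1 + (∏ i, (NNReal.sqrt (v i))⁻¹ : ℝ≥0) *
      ∫⁻ x in Metric.ball (0 : ι → ℝ) 1, ‖x‖ₑ ^ (-α) := by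
  have : IsProbabilityMeasure (P.map Y) := Measure.isProbabilityMeasure_map hY.aemeasurable
  have hm : Measurable (fun x : ι → ℝ => ‖x‖ₑ ^ (-α)) := by fun_prop
  rw [← lintegral_map (f := fun x : ι → ℝ => ‖x‖ₑ ^ (-α)) hm hY,
    ← lintegral_add_compl _ (measurableSet_ball (x := (0 : ι → ℝ)) (ε := 1)), add_comm]
  gcongr
  · calc _ ≤ ∫⁻ x in (Metric.ball (0 : ι → ℝ) 1)ᶜ, 1 ∂(P.map Y) := by
          refine setLIntegral_mono measurable_const fun x hx => ?_
          have : 1 ≤ ‖x‖ := by simpa using hx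
          have : 1 ≤ ‖x‖ₑ := by rw [← ofReal_norm]; exact ENNReal.one_le_ofReal.2 this
          rw [ENNReal.rpow_neg, ENNReal.inv_le_one]
          simpa using ENNReal.rpow_le_rpow this hα
      _ ≤ 1 := by simpa using prob_le_one
  · rw [law_pi P Y hY v h]
    calc _ ≤ ∫⁻ x in (Metric.ball (0 : ι → ℝ) 1), ‖x‖ₑ ^ (-α)
          ∂((∏ i, (NNReal.sqrt (v i))⁻¹) • (volume : Measure (ι → ℝ))) :=
        lintegral_mono' (Measure.restrict_mono le_rfl (pi_gauss_le v hv)) le_rfl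
      _ = _ := by
        rw [Measure.restrict_smul, lintegral_smul_measure]; rfl

section vec
variable {Ω : Type} [MeasurableSpace Ω]

lemma var_eq (P : Measure Ω) [IsProbabilityMeasure P] (Z : Ω → ℝ) (hZ : Measurable Z)
    (v : ℝ≥0) (h : P.map Z = gaussianReal 0 v) : ∫ ω, Z ω * Z ω ∂P = v := by
  have h1 := variance_fun_id_gaussianReal (μ := 0) (v := v)
  rw [variance_of_integral_eq_zero (by fun_prop) (by simp), ← h,
    integral_map (by fun_prop) (by fun_prop)] at h1
  rw [← h1]; congr 1; ext; simp [sq]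

lemma memLp_of_map (P : Measure Ω) (Z : Ω → ℝ) (hZ : Measurable Z)
    (v : ℝ≥0) (h : P.map Z = gaussianReal 0 v) : MemLp Z 2 P := by
  have := memLp_id_gaussianReal (μ := 0) (v := v) 2
  rw [← h, memLp_map_measure_iff (by fun_prop) (by fun_prop)] at this
  simpa using! this

variable {N : ℕ}

lemma cov_eq (P : Measure Ω) [IsProbabilityMeasure P]
    (X : Ω → EuclideanSpace ℝ (Fin N)) (hX : Measurable X)
    (hG : ∀ u : EuclideanSpace ℝ (Fin N), ∃ v : ℝ≥0, P.map (fun ω => ⟪u, X ω⟫) = gaussianReal 0 v)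
    (u u' : EuclideanSpace ℝ (Fin N)) :
    ∫ ω, ⟪u, X ω⟫ * ⟪u', X ω⟫ ∂P = u.ofLp ⬝ᵥ ((covMat P X).mulVec u'.ofLp) := by
  have hmem : ∀ i, MemLp (fun ω => X ω i) 2 P := by
    intro i
    obtain ⟨v, hv⟩ := hG (EuclideanSpace.single i 1)
    simp only [EuclideanSpace.inner_single_left, map_one, one_mul] at hv
    exact memLp_of_map P _ (by fun_prop) v hv
  have hint : ∀ i j, Integrable (fun ω => X ω i * X ω j) P := fun i j =>
    (hmem i).integrable_mul (hmem j)
  have : ∀ ω, ⟪u, X ω⟫ * ⟪u', X ω⟫ = ∑ i, ∑ j, u i * u' j * (X ω i * X ω j) := by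
    intro ω
    simp only [PiLp.inner_apply, Finset.sum_mul_sum]
    refine Finset.sum_congr rfl fun i _ => Finset.sum_congr rfl fun j _ => ?_
    simp; ring
  simp_rw [this]
  rw [integral_finsetSum _ fun i _ => integrable_finsetSum _ fun j _ => (hint i j).const_mul _]
  simp only [dotProduct, Matrix.mulVec, Finset.mul_sum]
  refine Finset.sum_congr rfl fun i _ => ?_
  rw [integral_finsetSum _ fun j _ => (hint i j).const_mul _]
  refine Finset.sum_congr rfl fun j _ => ?_
  rw [integral_const_mul]
  simp [covMat]; ring

lemma covMat_herm (P : Measure Ω) (X : Ω → EuclideanSpace ℝ (Fin N)) :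
    (covMat P X).IsHermitian := by
  ext i j
  simp [covMat, mul_comm]

lemma lemB (P : Measure Ω) [IsProbabilityMeasure P]
    (X : Ω → EuclideanSpace ℝ (Fin N)) (hX : Measurable X)
    (hG : ∀ u : EuclideanSpace ℝ (Fin N), ∃ v : ℝ≥0, P.map (fun ω => ⟪u, X ω⟫) = gaussianReal 0 v)
    {ι : Type} [Fintype ι] (f : ι ↪ Fin N)
    (hf : ∀ i, (covMat_herm P X).eigenvalues (f i) ≠ 0) (α : ℝ) (hα : 0 ≤ α) :
    ∫⁻ ω, ‖X ω‖ₑ ^ (-α) ∂P ≤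
      1 + ENNReal.ofReal (∏ i, (√((covMat_herm P X).eigenvalues (f i)))⁻¹) *
      ∫⁻ x in Metric.ball (0 : ι → ℝ) 1, ‖x‖ₑ ^ (-α) := by
  classical
  set hK := covMat_herm P X
  set e := hK.eigenvectorBasis with he
  have hB : ∀ i j, ∫ ω, ⟪e i, X ω⟫ * ⟪e j, X ω⟫ ∂P = if i = j then hK.eigenvalues j else 0 := by
    intro i j
    rw [cov_eq P X hX hG, hK.mulVec_eigenvectorBasis, dotProduct_smul]
    have h1 : (e i).ofLp ⬝ᵥ (e j).ofLp = ⟪e i, e j⟫ := by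
      simp [PiLp.inner_apply, dotProduct, mul_comm]
    have h2 := orthonormal_iff_ite.1 e.orthonormal i j
    rw [← he, h1, h2]
    simp
  have hnn : ∀ i, 0 ≤ hK.eigenvalues i := by
    intro i
    have := hB i i
    rw [if_pos rfl] at this
    rw [← this]
    exact integral_nonneg fun ω => mul_self_nonneg _
  set v : ι → ℝ≥0 := fun i => (hK.eigenvalues (f i)).toNNReal with hv
  have hvc : ∀ i, (v i : ℝ) = hK.eigenvalues (f i) := fun i => Real.coe_toNNReal _ (hnn _)
  set Y : Ω → ι → ℝ := fun ω i => ⟪e (f i), X ω⟫ with hY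
  have hYm : Measurable Y := by
    rw [hY]; fun_prop
  have hmem : ∀ i, MemLp (fun ω => Y ω i) 2 P := by
    intro i
    obtain ⟨v, hv⟩ := hG (e (f i))
    exact memLp_of_map P _ (by fun_prop) v hv
  have hlaw : ∀ u : ι → ℝ, ∀ w : ℝ≥0, (w : ℝ) = ∑ i, u i ^ 2 * v i →
      P.map (fun ω => ∑ i, u i * Y ω i) = gaussianReal 0 w := by
    intro u w hw
    obtain ⟨w', hw'⟩ := hG (∑ i, u i • e (f i))
    simp only [sum_inner, real_inner_smul_left] at hw'
    have h1 := var_eq P _ (by fun_prop) w' hw'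
    have h2 : ∀ ω, (∑ i, u i * ⟪e (f i), X ω⟫) * (∑ i, u i * ⟪e (f i), X ω⟫)
        = ∑ i, ∑ j, u i * u j * (Y ω i * Y ω j) := by
      intro ω
      rw [Finset.sum_mul_sum]
      refine Finset.sum_congr rfl fun i _ => Finset.sum_congr rfl fun j _ => ?_
      simp only [hY]; ring
    have hint : ∀ i j, Integrable (fun ω => Y ω i * Y ω j) P := fun i j =>
      (hmem i).integrable_mul (hmem j)
    simp_rw [h2] at h1
    rw [integral_finsetSum _ fun i _ => integrable_finsetSum _ fun j _ => (hint i j).const_mul _]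
      at h1
    have : w = w' := by
      apply NNReal.coe_injective
      rw [hw, ← h1]
      refine Finset.sum_congr rfl fun i _ => ?_
      rw [integral_finsetSum _ fun j _ => (hint i j).const_mul _]
      simp_rw [integral_const_mul, hY, hB, f.injective.eq_iff]
      simp [hvc, sq]
    rw [this]
    exact hw'
  have key := lemA P Y hYm v (fun i h0 => hf i (by rw [← hvc, h0]; rfl)) hlaw α hα
  have hle : ∀ ω, ‖Y ω‖ₑ ≤ ‖X ω‖ₑ := by
    intro ω
    rw [enorm_le_iff_norm_le, pi_norm_le_iff_of_nonneg (norm_nonneg _)]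
    intro i
    have := norm_inner_le_norm (𝕜 := ℝ) (e (f i)) (X ω)
    rwa [e.orthonormal.1, one_mul] at this
  calc _ ≤ ∫⁻ ω, ‖Y ω‖ₑ ^ (-α) ∂P := by
        refine lintegral_mono fun ω => ?_
        simp only [ENNReal.rpow_neg]
        have := ENNReal.rpow_le_rpow (hle ω) hα
        gcongr
    _ ≤ _ := key
    _ = _ := by
      congr 2
      rw [ENNReal.ofReal, ENNReal.coe_inj]
      apply NNReal.coe_injective
      rw [Real.coe_toNNReal _ (by positivity)]
      push_cast
      simp [hvc]

lemma moment (P : Measure Ω) (Z : Ω → ℝ) (hZ : Measurable Z)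
    (v : ℝ≥0) (h : P.map Z = gaussianReal 0 v) (t : ℝ) (ht : 0 ≤ t) :
    ∫⁻ ω, ‖Z ω‖ₑ ^ t ∂P = ENNReal.ofReal (√v) ^ t * ∫⁻ x, ‖x‖ₑ ^ t ∂(gaussianReal 0 1) := by
  have h1 : gaussianReal 0 v = (gaussianReal 0 1).map (√v * ·) := by
    rw [gaussianReal_map_const_mul]
    congr 1
    · simp
    · apply NNReal.coe_injective; simp
  rw [← lintegral_map (f := fun x : ℝ => ‖x‖ₑ ^ t) (by fun_prop) hZ, h, h1,
    lintegral_map (by fun_prop) (by fun_prop), ← lintegral_const_mul _ (by fun_prop)]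
  refine lintegral_congr fun x => ?_
  rw [enorm_mul, ENNReal.mul_rpow_of_nonneg _ _ ht, Real.enorm_of_nonneg (by positivity)]

lemma moment_fin (t : ℝ) (ht : 0 < t) : ∫⁻ x, ‖x‖ₑ ^ t ∂(gaussianReal 0 1) < ∞ := by
  have := (memLp_id_gaussianReal (μ := 0) (v := 1) t.toNNReal)
  have h := lintegral_rpow_enorm_lt_top_of_eLpNorm_lt_top (by simpa using ht) (by simp) this.2
  simpa [ht.le] using h

lemma sum_rpow {κ : Type} (S : Finset κ) (x : κ → ℝ≥0∞) (t : ℝ) (ht : 0 < t) :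
    (∑ k ∈ S, x k) ^ t ≤ (S.card : ℝ≥0∞) ^ t * ∑ k ∈ S, x k ^ t := by
  rcases S.eq_empty_or_nonempty with rfl | hS
  · simp [ht]
  obtain ⟨m, hm, hmax⟩ := S.exists_max_image x hS
  calc _ ≤ ((S.card : ℝ≥0∞) * x m) ^ t := by
        refine ENNReal.rpow_le_rpow ?_ ht.le
        simpa using Finset.sum_le_card_nsmul S x (x m) hmax
    _ = (S.card : ℝ≥0∞) ^ t * x m ^ t := ENNReal.mul_rpow_of_nonneg _ _ ht.le
    _ ≤ _ := by
      gcongr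
      exact Finset.single_le_sum (f := fun k => x k ^ t) (fun _ _ => zero_le) hm

end vec

lemma exists_exp (a : ℕ) (p n : ℝ) (h : p * a < n) : ∃ p' > p, p' * a < n := by
  rcases Nat.eq_zero_or_pos a with rfl | ha
  · exact ⟨p + 1, by linarith, by simpa using h⟩
  · have ha' : (0:ℝ) < a := by exact_mod_cast ha
    obtain ⟨p', h1, h2⟩ := exists_between ((lt_div_iff₀ ha').2 h)
    exact ⟨p', h1, (lt_div_iff₀ ha').1 h2⟩

lemma norm_triple {N₀ N₁ N₂ : ℕ} {Ω : Type}
    (X₀ : Ω → EuclideanSpace ℝ (Fin N₀)) (X₁ : Ω → EuclideanSpace ℝ (Fin N₁))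
    (X₂ : Ω → EuclideanSpace ℝ (Fin N₂)) (ω : Ω) :
    ENNReal.ofReal (√(‖X₀ ω‖ ^ 2 + ‖X₁ ω‖ ^ 2 + ‖X₂ ω‖ ^ 2)) ≤
      ∑ k, ‖tripleCoord X₀ X₁ X₂ k ω‖ₑ := by
  have h : √(‖X₀ ω‖ ^ 2 + ‖X₁ ω‖ ^ 2 + ‖X₂ ω‖ ^ 2) ≤ ∑ k, ‖tripleCoord X₀ X₁ X₂ k ω‖ := by
    refine Real.sqrt_le_iff.2 ⟨by positivity, ?_⟩
    refine le_trans (le_of_eq ?_) (Finset.sum_sq_le_sq_sum_of_nonneg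
      (s := Finset.univ) (f := fun k => ‖tripleCoord X₀ X₁ X₂ k ω‖) (fun _ _ => norm_nonneg _))
    simp only [EuclideanSpace.norm_sq_eq, Fintype.sum_sum_type, tripleCoord]
    ring
  refine (ENNReal.ofReal_le_ofReal h).trans ?_
  rw [ENNReal.ofReal_sum_of_nonneg fun _ _ => norm_nonneg _]
  simp only [ofReal_norm]
  exact le_rfl

lemma F_bound {N₀ N₁ N₂ : ℕ} {Ω : Type}
    (X₀ : Ω → EuclideanSpace ℝ (Fin N₀)) (X₁ : Ω → EuclideanSpace ℝ (Fin N₁))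
    (X₂ : Ω → EuclideanSpace ℝ (Fin N₂)) (ω : Ω) (D s y : ℝ) (hD : 0 < D) (hs : 0 < s)
    (hy : y ≤ D * (1 + √(‖X₀ ω‖ ^ 2 + ‖X₁ ω‖ ^ 2 + ‖X₂ ω‖ ^ 2) ^ D)) :
    ENNReal.ofReal y ^ s ≤ ENNReal.ofReal D ^ s * (2 ^ s * (1 +
      (Fintype.card (Fin N₀ ⊕ (Fin N₁ ⊕ Fin N₂)) : ℝ≥0∞) ^ (D * s) *
        ∑ k, ‖tripleCoord X₀ X₁ X₂ k ω‖ₑ ^ (D * s))) := by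
  set R := √(‖X₀ ω‖ ^ 2 + ‖X₁ ω‖ ^ 2 + ‖X₂ ω‖ ^ 2) with hR
  have hR0 : 0 ≤ R := Real.sqrt_nonneg _
  have h1 : ENNReal.ofReal y ≤ ENNReal.ofReal D * (1 + ENNReal.ofReal R ^ D) := by
    refine (ENNReal.ofReal_le_ofReal hy).trans ?_
    rw [ENNReal.ofReal_mul hD.le, ENNReal.ofReal_add zero_le_one (by positivity),
      ENNReal.ofReal_one, ENNReal.ofReal_rpow_of_nonneg hR0 hD.le]
  have h2 : (1 + ENNReal.ofReal R ^ D) ^ s ≤ 2 ^ s * (1 + ENNReal.ofReal R ^ (D * s)) := by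
    have := sum_rpow (Finset.univ : Finset (Fin 2)) ![1, ENNReal.ofReal R ^ D] s hs
    simpa [Fin.sum_univ_two, ENNReal.rpow_mul] using this
  calc _ ≤ (ENNReal.ofReal D * (1 + ENNReal.ofReal R ^ D)) ^ s := ENNReal.rpow_le_rpow h1 hs.le
    _ = ENNReal.ofReal D ^ s * (1 + ENNReal.ofReal R ^ D) ^ s :=
      ENNReal.mul_rpow_of_nonneg _ _ hs.le
    _ ≤ ENNReal.ofReal D ^ s * (2 ^ s * (1 + ENNReal.ofReal R ^ (D * s))) := by gcongr
    _ ≤ _ := by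
      gcongr
      refine (ENNReal.rpow_le_rpow (norm_triple X₀ X₁ X₂ ω) (by positivity)).trans ?_
      exact sum_rpow _ _ _ (by positivity)

lemma neg_bound {E : Type} [NormedAddCommGroup E] (x : E) (a : ℕ) (p : ℝ) (hp : 0 ≤ p) :
    ENNReal.ofReal ((‖x‖ ^ a)⁻¹) ^ p ≤ ‖x‖ₑ ^ (-(p * a)) := by
  have : ENNReal.ofReal ((‖x‖ ^ a)⁻¹) ≤ (‖x‖ₑ ^ a)⁻¹ := by
    rw [← ofReal_norm, ← ENNReal.ofReal_pow (norm_nonneg _)]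
    exact ENNReal.ofReal_inv_le
  refine (ENNReal.rpow_le_rpow this hp).trans (le_of_eq ?_)
  rw [ENNReal.inv_rpow, ← ENNReal.rpow_natCast, ← ENNReal.rpow_mul, ENNReal.rpow_neg, mul_comm]

lemma core (N₀ N₁ N₂ : ℕ) (a b : ℕ) (p q : ℝ)
    (hp : 1 < p) (hq : 1 < q) (hpq : 1 / p + 1 / q = 1)
    (D : ℝ) (hD : 0 < D) (D' : ℝ) (ι₁ ι₂ : Type) [Fintype ι₁] [Fintype ι₂]
    (h₁ : p * a < Fintype.card ι₁) (h₂ : q * b < Fintype.card ι₂) :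
    ∃ C > (0 : ℝ),
      ∀ (Ω : Type) [MeasurableSpace Ω] (P : Measure Ω) [IsProbabilityMeasure P]
        (X₀ : Ω → EuclideanSpace ℝ (Fin N₀)) (X₁ : Ω → EuclideanSpace ℝ (Fin N₁))
        (X₂ : Ω → EuclideanSpace ℝ (Fin N₂)),
        Measurable X₀ → Measurable X₁ → Measurable X₂ →
        IsCenteredGaussianTriple P X₀ X₁ X₂ →
        ∀ F : EuclideanSpace ℝ (Fin N₀) × EuclideanSpace ℝ (Fin N₁) ×
            EuclideanSpace ℝ (Fin N₂) → ℝ,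
        Measurable F →
        (∀ x₀ x₁ x₂, |F (x₀, x₁, x₂)| ≤
          D * (1 + Real.sqrt (‖x₀‖ ^ 2 + ‖x₁‖ ^ 2 + ‖x₂‖ ^ 2) ^ D)) →
        (∀ i, fullCov P X₀ X₁ X₂ i i ≤ D') →
        ∀ (f₁ : ι₁ ↪ Fin N₁) (f₂ : ι₂ ↪ Fin N₂),
        (∀ i, (covMat_herm P X₁).eigenvalues (f₁ i) ≠ 0) →
        (∀ i, (covMat_herm P X₂).eigenvalues (f₂ i) ≠ 0) →
        ∫⁻ ω, ENNReal.ofReal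
            (|F (X₀ ω, X₁ ω, X₂ ω)| * (‖X₁ ω‖ ^ a)⁻¹ * (‖X₂ ω‖ ^ b)⁻¹) ∂P ≤
          ENNReal.ofReal (C * (1 + (∏ i, (√((covMat_herm P X₁).eigenvalues (f₁ i)))⁻¹) +
            (∏ i, (√((covMat_herm P X₂).eigenvalues (f₂ i)))⁻¹))) := by
  obtain ⟨p', hp', h₁'⟩ := exists_exp a p _ h₁
  obtain ⟨q', hq', h₂'⟩ := exists_exp b q _ h₂
  have hp0 : 0 < p' := by linarith
  have hq0 : 0 < q' := by linarith
  have hlt : 1 / p' + 1 / q' < 1 := by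
    have e1 := one_div_lt_one_div_of_lt (by linarith : 0 < p) hp'
    have e2 := one_div_lt_one_div_of_lt (by linarith : 0 < q) hq'
    linarith
  set s := 1 / (1 - (1 / p' + 1 / q')) with hs
  have hs0 : 0 < s := by rw [hs]; apply one_div_pos.2; linarith
  have hsum : 1 / s + 1 / p' + 1 / q' = 1 := by rw [hs, one_div_one_div]; ring
  have hpa : 0 ≤ p' * a := by positivity
  have hqb : 0 ≤ q' * b := by positivity
  have hc₁ : 1 ≤ Fintype.card ι₁ := by
    have : (0:ℝ) < Fintype.card ι₁ := by linarith
    exact_mod_cast this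
  have hc₂ : 1 ≤ Fintype.card ι₂ := by
    have : (0:ℝ) < Fintype.card ι₂ := by linarith
    exact_mod_cast this
  have hI₁ := pow_fin (ι := ι₁) (p' * a) hc₁ h₁'
  have hI₂ := pow_fin (ι := ι₂) (q' * b) hc₂ h₂'
  set I₁ := ∫⁻ x in Metric.ball (0 : ι₁ → ℝ) 1, ‖x‖ₑ ^ (-(p' * a))
  set I₂ := ∫⁻ x in Metric.ball (0 : ι₂ → ℝ) 1, ‖x‖ₑ ^ (-(q' * b))
  have ht : 0 < D * s := by positivity
  have hM := moment_fin (D * s) ht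
  set M := ∫⁻ x, ‖x‖ₑ ^ (D * s) ∂(gaussianReal 0 1)
  set n : ℝ≥0∞ := (Fintype.card (Fin N₀ ⊕ (Fin N₁ ⊕ Fin N₂)) : ℝ≥0∞) with hn
  set B : ℝ≥0∞ := ENNReal.ofReal D ^ s * (2 ^ s * (1 + n ^ (D * s) *
    (n * (ENNReal.ofReal (√D') ^ (D * s) * M)))) with hB
  have hn' : n ≠ ∞ := ENNReal.natCast_ne_top _
  have hBt : B ≠ ∞ := by
    have e1 : ENNReal.ofReal D ^ s ≠ ∞ := ENNReal.rpow_ne_top_of_nonneg hs0.le (by simp)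
    have e2 : (2 : ℝ≥0∞) ^ s ≠ ∞ := ENNReal.rpow_ne_top_of_nonneg hs0.le (by simp)
    have e3 : n ^ (D * s) ≠ ∞ := ENNReal.rpow_ne_top_of_nonneg ht.le hn'
    have e4 : ENNReal.ofReal (√D') ^ (D * s) ≠ ∞ := ENNReal.rpow_ne_top_of_nonneg ht.le (by simp)
    rw [hB]
    exact ENNReal.mul_ne_top e1 (ENNReal.mul_ne_top e2 (ENNReal.add_ne_top.2 ⟨by simp,
      ENNReal.mul_ne_top e3 (ENNReal.mul_ne_top hn' (ENNReal.mul_ne_top e4 hM.ne))⟩))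
  refine ⟨B.toReal + 2 + I₁.toReal + I₂.toReal, by positivity, ?_⟩
  intro Ω _ P _ X₀ X₁ X₂ hX₀ hX₁ hX₂ hG F hF hFb hcov f₁ f₂ hf₁ hf₂
  have hG₁ : ∀ u : EuclideanSpace ℝ (Fin N₁), ∃ v : ℝ≥0,
      P.map (fun ω => ⟪u, X₁ ω⟫) = gaussianReal 0 v := by
    intro u
    simpa using hG 0 u 0
  have hG₂ : ∀ u : EuclideanSpace ℝ (Fin N₂), ∃ v : ℝ≥0,
      P.map (fun ω => ⟪u, X₂ ω⟫) = gaussianReal 0 v := by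
    intro u
    simpa using hG 0 0 u
  have hTm : ∀ k, Measurable (tripleCoord X₀ X₁ X₂ k) := by
    rintro (k | k | k) <;> simp only [tripleCoord] <;> fun_prop
  have hGk : ∀ k, ∃ v : ℝ≥0, P.map (tripleCoord X₀ X₁ X₂ k) = gaussianReal 0 v := by
    rintro (k | k | k)
    · simpa [EuclideanSpace.inner_single_left, tripleCoord] using hG (EuclideanSpace.single k 1) 0 0
    · simpa [EuclideanSpace.inner_single_left, tripleCoord] using hG 0 (EuclideanSpace.single k 1) 0
    · simpa [EuclideanSpace.inner_single_left, tripleCoord] using hG 0 0 (EuclideanSpace.single k 1)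
  have hmom : ∀ k, ∫⁻ ω, ‖tripleCoord X₀ X₁ X₂ k ω‖ₑ ^ (D * s) ∂P ≤
      ENNReal.ofReal (√D') ^ (D * s) * M := by
    intro k
    obtain ⟨v, hv⟩ := hGk k
    rw [moment P _ (hTm k) v hv _ ht.le]
    have h1 : (v : ℝ) ≤ D' := by
      rw [← var_eq P _ (hTm k) v hv]
      exact hcov k
    gcongr
  have hFint : ∫⁻ ω, ENNReal.ofReal |F (X₀ ω, X₁ ω, X₂ ω)| ^ s ∂P ≤ B := by
    calc _ ≤ ∫⁻ ω, ENNReal.ofReal D ^ s * (2 ^ s * (1 + n ^ (D * s) *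
        ∑ k, ‖tripleCoord X₀ X₁ X₂ k ω‖ₑ ^ (D * s))) ∂P :=
          lintegral_mono fun ω => F_bound X₀ X₁ X₂ ω D s _ hD hs0 (hFb _ _ _)
      _ = ENNReal.ofReal D ^ s * (2 ^ s * (1 + n ^ (D * s) *
        ∑ k, ∫⁻ ω, ‖tripleCoord X₀ X₁ X₂ k ω‖ₑ ^ (D * s) ∂P)) := by
          rw [lintegral_const_mul _ (by fun_prop), lintegral_const_mul _ (by fun_prop),
            lintegral_add_left (by fun_prop), lintegral_const_mul _ (by fun_prop),
            lintegral_finsetSum _ (fun k _ => by fun_prop)]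
          simp
      _ ≤ B := by
          rw [hB]
          gcongr
          refine (Finset.sum_le_card_nsmul _ _ _ fun k _ => hmom k).trans ?_
          rw [Finset.card_univ, nsmul_eq_mul]
  have hb₁ := lemB P X₁ hX₁ hG₁ f₁ hf₁ (p' * a) hpa
  have hb₂ := lemB P X₂ hX₂ hG₂ f₂ hf₂ (q' * b) hqb
  set d₁ := ∏ i, (√((covMat_herm P X₁).eigenvalues (f₁ i)))⁻¹
  set d₂ := ∏ i, (√((covMat_herm P X₂).eigenvalues (f₂ i)))⁻¹
  have hd₁ : 0 ≤ d₁ := by positivity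
  have hd₂ : 0 ≤ d₂ := by positivity
  calc _ ≤ ∫⁻ ω, (ENNReal.ofReal |F (X₀ ω, X₁ ω, X₂ ω)| ^ s + ‖X₁ ω‖ₑ ^ (-(p' * a))
          + ‖X₂ ω‖ₑ ^ (-(q' * b))) ∂P := by
        refine lintegral_mono fun ω => ?_
        simp only
        rw [ENNReal.ofReal_mul (by positivity), ENNReal.ofReal_mul (by positivity)]
        refine (young3 _ _ _ s p' q' hs0 hp0 hq0 hsum).trans ?_
        gcongr
        · exact neg_bound _ _ _ hp0.le
        · exact neg_bound _ _ _ hq0.le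
    _ = ∫⁻ ω, ENNReal.ofReal |F (X₀ ω, X₁ ω, X₂ ω)| ^ s ∂P + ∫⁻ ω, ‖X₁ ω‖ₑ ^ (-(p' * a)) ∂P
          + ∫⁻ ω, ‖X₂ ω‖ₑ ^ (-(q' * b)) ∂P := by
        rw [lintegral_add_right _ (by fun_prop), lintegral_add_right _ (by fun_prop)]
    _ ≤ B + (1 + ENNReal.ofReal d₁ * I₁) + (1 + ENNReal.ofReal d₂ * I₂) := by gcongr
    _ = ENNReal.ofReal (B.toReal + (1 + d₁ * I₁.toReal) + (1 + d₂ * I₂.toReal)) := by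
        rw [ENNReal.ofReal_add (by positivity) (by positivity),
          ENNReal.ofReal_add (by positivity) (by positivity),
          ENNReal.ofReal_add (by positivity) (by positivity),
          ENNReal.ofReal_add (by positivity) (by positivity),
          ENNReal.ofReal_mul hd₁, ENNReal.ofReal_mul hd₂, ENNReal.ofReal_toReal hBt,
          ENNReal.ofReal_toReal hI₁.ne, ENNReal.ofReal_toReal hI₂.ne, ENNReal.ofReal_one]
    _ ≤ _ := by
        apply ENNReal.ofReal_le_ofReal
        have hb0 : 0 ≤ B.toReal := by positivity
        have i1 : 0 ≤ I₁.toReal := by positivity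
        have i2 : 0 ≤ I₂.toReal := by positivity
        nlinarith [mul_nonneg hb0 hd₁, mul_nonneg hb0 hd₂, mul_nonneg i1 hd₂, mul_nonneg i2 hd₁,
          mul_nonneg i1 hd₁, mul_nonneg i2 hd₂]

lemma prod_det {N : ℕ} {Ω : Type} [MeasurableSpace Ω] (P : Measure Ω) [IsProbabilityMeasure P]
    (X : Ω → EuclideanSpace ℝ (Fin N)) (hX : Measurable X)
    (hG : ∀ u : EuclideanSpace ℝ (Fin N), ∃ v : ℝ≥0, P.map (fun ω => ⟪u, X ω⟫) = gaussianReal 0 v) :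
    ∏ i, (√((covMat_herm P X).eigenvalues i))⁻¹ = (√(covMat P X).det)⁻¹ := by
  have hps : (covMat P X).PosSemidef := by
    refine Matrix.PosSemidef.of_dotProduct_mulVec_nonneg (covMat_herm P X) fun x => ?_
    have := cov_eq P X hX hG (WithLp.toLp 2 x) (WithLp.toLp 2 x)
    simp only [star_trivial]
    rw [← this]
    exact integral_nonneg fun ω => mul_self_nonneg _
  rw [(covMat_herm P X).det_eq_prod_eigenvalues, Finset.prod_inv_distrib]
  simp only [RCLike.ofReal_real_eq_id, id]
  rw [Real.sqrt_prod _ fun i _ => hps.eigenvalues_nonneg i]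

lemma eig_ne {N : ℕ} {Ω : Type} [MeasurableSpace Ω] (P : Measure Ω)
    (X : Ω → EuclideanSpace ℝ (Fin N)) (h : IsUnit (covMat P X)) (i : Fin N) :
    (covMat_herm P X).eigenvalues i ≠ 0 := by
  have h1 := ((Matrix.isUnit_iff_isUnit_det _).1 h).ne_zero
  rw [(covMat_herm P X).det_eq_prod_eigenvalues] at h1
  simpa using Finset.prod_ne_zero_iff.1 h1 i (Finset.mem_univ _)

/-- Uniform integrability of rational functions of Gaussian vectors: if
`X = (X₀, X₁, X₂)` is a centered Gaussian vector, `1/p + 1/q = 1`, `p·a < rank K₁₁`,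
`q·b < rank K₂₂`, and `|F(x)| ≤ D(1 + ‖x‖^D)`, then `E[|F(X)| ‖X₁‖⁻ᵃ ‖X₂‖⁻ᵇ] < ∞`;
moreover, for fixed `N₀, N₁, N₂, a, b, p, q, D` there is `C > 0` such that whenever in
addition `‖K‖ ≤ D`, `K₁₁, K₂₂` are invertible, `p·a < N₁` and `q·b < N₂`, one has
`E[|F(X)| ‖X₁‖⁻ᵃ ‖X₂‖⁻ᵇ] ≤ C (1 + det(K₁₁)^{-1/2} + det(K₂₂)^{-1/2})`. -/
theorem stmt3 (N₀ N₁ N₂ : ℕ) (a b : ℕ) (p q : ℝ)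
    (hp : 1 < p) (hq : 1 < q) (hpq : 1 / p + 1 / q = 1)
    (D : ℝ) (hD : 0 < D) :
    (∀ (Ω : Type) [MeasurableSpace Ω] (P : Measure Ω) [IsProbabilityMeasure P]
        (X₀ : Ω → EuclideanSpace ℝ (Fin N₀)) (X₁ : Ω → EuclideanSpace ℝ (Fin N₁))
        (X₂ : Ω → EuclideanSpace ℝ (Fin N₂)),
        Measurable X₀ → Measurable X₁ → Measurable X₂ →
        IsCenteredGaussianTriple P X₀ X₁ X₂ →
        ∀ F : EuclideanSpace ℝ (Fin N₀) × EuclideanSpace ℝ (Fin N₁) ×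
            EuclideanSpace ℝ (Fin N₂) → ℝ,
        Measurable F →
        (∀ x₀ x₁ x₂, |F (x₀, x₁, x₂)| ≤
          D * (1 + Real.sqrt (‖x₀‖ ^ 2 + ‖x₁‖ ^ 2 + ‖x₂‖ ^ 2) ^ D)) →
        p * (a : ℝ) < ((covMat P X₁).rank : ℝ) →
        q * (b : ℝ) < ((covMat P X₂).rank : ℝ) →
        ∫⁻ ω, ENNReal.ofReal
            (|F (X₀ ω, X₁ ω, X₂ ω)| * (‖X₁ ω‖ ^ a)⁻¹ * (‖X₂ ω‖ ^ b)⁻¹) ∂P < ⊤) ∧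
    ∃ C > (0 : ℝ),
      ∀ (Ω : Type) [MeasurableSpace Ω] (P : Measure Ω) [IsProbabilityMeasure P]
        (X₀ : Ω → EuclideanSpace ℝ (Fin N₀)) (X₁ : Ω → EuclideanSpace ℝ (Fin N₁))
        (X₂ : Ω → EuclideanSpace ℝ (Fin N₂)),
        Measurable X₀ → Measurable X₁ → Measurable X₂ →
        IsCenteredGaussianTriple P X₀ X₁ X₂ →
        ∀ F : EuclideanSpace ℝ (Fin N₀) × EuclideanSpace ℝ (Fin N₁) ×
            EuclideanSpace ℝ (Fin N₂) → ℝ,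
        Measurable F →
        (∀ x₀ x₁ x₂, |F (x₀, x₁, x₂)| ≤
          D * (1 + Real.sqrt (‖x₀‖ ^ 2 + ‖x₁‖ ^ 2 + ‖x₂‖ ^ 2) ^ D)) →
        (∀ i j, |fullCov P X₀ X₁ X₂ i j| ≤ D) →
        IsUnit (covMat P X₁) → IsUnit (covMat P X₂) →
        p * (a : ℝ) < (N₁ : ℝ) → q * (b : ℝ) < (N₂ : ℝ) →
        ∫⁻ ω, ENNReal.ofReal
            (|F (X₀ ω, X₁ ω, X₂ ω)| * (‖X₁ ω‖ ^ a)⁻¹ * (‖X₂ ω‖ ^ b)⁻¹) ∂P ≤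
          ENNReal.ofReal (C * (1 + (Real.sqrt (covMat P X₁).det)⁻¹ +
            (Real.sqrt (covMat P X₂).det)⁻¹)) := by
  constructor
  · intro Ω _ P _ X₀ X₁ X₂ hX₀ hX₁ hX₂ hG F hF hFb h₁ h₂
    rw [(covMat_herm P X₁).rank_eq_card_non_zero_eigs] at h₁
    rw [(covMat_herm P X₂).rank_eq_card_non_zero_eigs] at h₂
    obtain ⟨C, hC, h⟩ := core N₀ N₁ N₂ a b p q hp hq hpq D hD
      (∑ i, |fullCov P X₀ X₁ X₂ i i|) _ _ h₁ h₂
    refine (h Ω P X₀ X₁ X₂ hX₀ hX₁ hX₂ hG F hF hFb (fun i => ?_)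
      (Function.Embedding.subtype _) (Function.Embedding.subtype _)
      (fun i => i.2) (fun i => i.2)).trans_lt ENNReal.ofReal_lt_top
    exact (le_abs_self _).trans (Finset.single_le_sum
      (f := fun i => |fullCov P X₀ X₁ X₂ i i|) (fun _ _ => abs_nonneg _) (Finset.mem_univ i))
  · by_cases hc : p * (a : ℝ) < (N₁ : ℝ) ∧ q * (b : ℝ) < (N₂ : ℝ)
    · obtain ⟨C, hC, h⟩ := core N₀ N₁ N₂ a b p q hp hq hpq D hD D (Fin N₁) (Fin N₂)
        (by simpa using hc.1) (by simpa using hc.2)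
      refine ⟨C, hC, ?_⟩
      intro Ω _ P _ X₀ X₁ X₂ hX₀ hX₁ hX₂ hG F hF hFb hcov hu₁ hu₂ _ _
      have := h Ω P X₀ X₁ X₂ hX₀ hX₁ hX₂ hG F hF hFb
        (fun i => (le_abs_self _).trans (hcov i i))
        (Function.Embedding.refl _) (Function.Embedding.refl _)
        (fun i => eig_ne P X₁ hu₁ i) (fun i => eig_ne P X₂ hu₂ i)
      simp only [Function.Embedding.refl_apply] at this
      rwa [prod_det P X₁ hX₁ (fun u => by simpa using hG 0 u 0),
        prod_det P X₂ hX₂ (fun u => by simpa using hG 0 0 u)] at this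
    · refine ⟨1, one_pos, ?_⟩
      intro Ω _ P _ X₀ X₁ X₂ hX₀ hX₁ hX₂ hG F hF hFb hcov hu₁ hu₂ h₁ h₂
      exact absurd ⟨h₁, h₂⟩ hc
end

section
/- Fix m ≥ 2, let n₊, n₋ ∈ ℕ with n₊ + n₋ = m, and define T : ℝ^{n₊} × ℝ^{n₋} → ℝ by T(x₊, x₋) = ‖x₊‖² − ‖x₋‖². Fix ρ > 0 and k ∈ ℕ. Then there exists a constant A > 0 such that for every t ∈ (0, 1/2] the integral ∫ ‖x‖^{−k} dℋ^{m−1}(x), taken over the level set {x ∈ ℝ^m : ‖x‖ ≤ ρ, T(x) = t}, is at most: A, if k ≤ m − 2; A·log(1/t), if k = m − 1; and A·t^{−(1+k−m)/2}, if k ≥ m. -/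
open MeasureTheory

/-- The standard quadratic Morse model `T(x₊, x₋) = ‖x₊‖² − ‖x₋‖²` on
`ℝ^{np} × ℝ^{nm}`, realized on `EuclideanSpace ℝ (Fin np ⊕ Fin nm)`. -/
noncomputable def quadMorseModel (np nm : ℕ)
    (x : EuclideanSpace ℝ (Fin np ⊕ Fin nm)) : ℝ :=
  (∑ i : Fin np, x (Sum.inl i) ^ 2) - ∑ j : Fin nm, x (Sum.inr j) ^ 2

lemma qm_piece {ι : Type*} [Fintype ι] [DecidableEq ι] (i : ι) (m : ℕ) (hcard : Fintype.card ι = m)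
    (hm : 2 ≤ m) (E : Set (EuclideanSpace ℝ ι)) (K : NNReal) (r : ℝ) (hr : 0 ≤ r)
    (hE : ∀ x ∈ E, ‖x‖ ≤ r)
    (hK : ∀ x ∈ E, ∀ y ∈ E, dist x y ≤ K * dist (fun j : {j // j ≠ i} => x j) (fun j => y j)) :
    μH[(m : ℝ) - 1] E ≤ ENNReal.ofReal ((K * 2) ^ (m - 1) * r ^ (m - 1)) := by
  classical
  let p : EuclideanSpace ℝ ι → ({j // j ≠ i} → ℝ) := fun x j => x j
  have hc : Fintype.card {j // j ≠ i} = m - 1 := by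
    rw [Fintype.card_subtype_compl, hcard]; simp
  have hd : ((m : ℝ) - 1) = ((m - 1 : ℕ) : ℝ) := by
    rw [Nat.cast_sub (by omega)]; simp
  let g := Function.invFunOn p E
  have hg : ∀ y ∈ p '' E, g y ∈ E ∧ p (g y) = y := fun y hy =>
    ⟨Function.invFunOn_mem hy, Function.invFunOn_eq hy⟩
  have hlip : LipschitzOnWith K g (p '' E) := by
    apply LipschitzOnWith.of_dist_le_mul
    intro y hy z hz
    have h := hK _ (hg y hy).1 _ (hg z hz).1
    have e1 := (hg y hy).2
    have e2 := (hg z hz).2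
    change _ ≤ K * dist (p (g y)) (p (g z)) at h
    rwa [e1, e2] at h
  have hsub : E ⊆ g '' (p '' E) := by
    intro x hx
    refine ⟨p x, ⟨x, hx, rfl⟩, ?_⟩
    have h1 := hg (p x) ⟨x, hx, rfl⟩
    have h := hK _ h1.1 _ hx
    change _ ≤ K * dist (p (g (p x))) (p x) at h
    rw [h1.2, dist_self, mul_zero] at h
    exact dist_le_zero.1 h
  have hball : p '' E ⊆ Metric.closedBall 0 r := by
    rintro _ ⟨x, hx, rfl⟩
    rw [mem_closedBall_zero_iff, pi_norm_le_iff_of_nonneg hr]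
    intro j
    exact (PiLp.norm_apply_le x j.1).trans (hE x hx)
  have hvol : μH[(m : ℝ) - 1] (p '' E) ≤ ENNReal.ofReal ((2 * r) ^ (m - 1)) := by
    have : (μH[(m : ℝ) - 1] : Measure ({j // j ≠ i} → ℝ)) = volume := by
      rw [hd, ← hc, hausdorffMeasure_pi_real]
    rw [this]
    refine (measure_mono hball).trans ?_
    rw [Real.volume_pi_closedBall _ hr, hc]
  calc μH[(m : ℝ) - 1] E ≤ μH[(m : ℝ) - 1] (g '' (p '' E)) := measure_mono hsub
    _ ≤ (K : ENNReal) ^ ((m : ℝ) - 1) * μH[(m : ℝ) - 1] (p '' E) :=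
        hlip.hausdorffMeasure_image_le (by rw [hd]; positivity)
    _ ≤ (K : ENNReal) ^ ((m : ℝ) - 1) * ENNReal.ofReal ((2 * r) ^ (m - 1)) := by gcongr
    _ = _ := by
      rw [hd, ENNReal.rpow_natCast, mul_pow, mul_pow, mul_assoc, ENNReal.ofReal_mul (by positivity),
        ENNReal.ofReal_mul (by positivity), ENNReal.ofReal_mul (by positivity),
        ENNReal.ofReal_pow (p := (K : ℝ)) (by positivity), ENNReal.ofReal_coe_nnreal]

lemma qm_lip {np nm : ℕ} (m : ℕ) (hsum : np + nm = m) (hm : 2 ≤ m) (i : Fin np) (t : ℝ)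
    (x y : EuclideanSpace ℝ (Fin np ⊕ Fin nm))
    (hx : quadMorseModel np nm x = t) (hy : quadMorseModel np nm y = t)
    (hxi : ∀ j, |x j| ≤ m * |x (Sum.inl i)|) (hyi : ∀ j, |y j| ≤ m * |y (Sum.inl i)|)
    (hs : 0 ≤ x (Sum.inl i) * y (Sum.inl i)) :
    dist x y ≤ (m : ℝ) ^ 3 *
      dist (fun j : {j // j ≠ (Sum.inl i : Fin np ⊕ Fin nm)} => x j) (fun j => y j) := by
  set D := dist (fun j : {j // j ≠ (Sum.inl i : Fin np ⊕ Fin nm)} => x j) (fun j => y j) with hD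
  have hD0 : 0 ≤ D := dist_nonneg
  have hm1 : (1 : ℝ) ≤ m := by exact_mod_cast (by omega : 1 ≤ m)
  have hj : ∀ j, j ≠ Sum.inl i → |x j - y j| ≤ D := by
    intro j hj
    have := dist_le_pi_dist (fun j : {j // j ≠ (Sum.inl i : Fin np ⊕ Fin nm)} => x j)
      (fun j => y j) ⟨j, hj⟩
    rwa [Real.dist_eq] at this
  set S := |x (Sum.inl i)| + |y (Sum.inl i)| with hS
  have habs : |x (Sum.inl i) + y (Sum.inl i)| = S := by
    rw [hS]
    exact (abs_add_eq_add_abs_iff _ _).2 (by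
      rcases mul_nonneg_iff.1 hs with h | h <;> tauto)
  have hS0 : 0 ≤ S := by positivity
  have hprod : ∀ j, j ≠ Sum.inl i → |x j ^ 2 - y j ^ 2| ≤ D * (m * S) := by
    intro j h
    have : x j ^ 2 - y j ^ 2 = (x j - y j) * (x j + y j) := by ring
    rw [this, abs_mul]
    apply mul_le_mul (hj j h) _ (abs_nonneg _) hD0
    refine (abs_add_le _ _).trans ?_
    rw [hS, mul_add]
    exact add_le_add (hxi j) (hyi j)
  have hi : |x (Sum.inl i) - y (Sum.inl i)| ≤ (m : ℝ) ^ 2 * D := by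
    rcases eq_or_lt_of_le hS0 with h0 | hpos
    · have h1 : |x (Sum.inl i)| = 0 := by
        have := abs_nonneg (x (Sum.inl i)); have := abs_nonneg (y (Sum.inl i)); linarith
      have h2 : |y (Sum.inl i)| = 0 := by
        have := abs_nonneg (x (Sum.inl i)); have := abs_nonneg (y (Sum.inl i)); linarith
      rw [abs_eq_zero.1 h1, abs_eq_zero.1 h2]; simp; positivity
    · have key : x (Sum.inl i) ^ 2 - y (Sum.inl i) ^ 2 =
          (∑ j : Fin nm, (x (Sum.inr j) ^ 2 - y (Sum.inr j) ^ 2)) -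
          ∑ j ∈ Finset.univ.erase i, (x (Sum.inl j) ^ 2 - y (Sum.inl j) ^ 2) := by
        have h1 := hx.trans hy.symm
        unfold quadMorseModel at h1
        rw [← Finset.add_sum_erase _ _ (Finset.mem_univ i),
          ← Finset.add_sum_erase (a := i) (f := fun i => y (Sum.inl i) ^ 2) _ (Finset.mem_univ i)] at h1
        simp only [Finset.sum_sub_distrib]
        linarith
      have hb : |x (Sum.inl i) ^ 2 - y (Sum.inl i) ^ 2| ≤ m * (D * (m * S)) := by
        rw [key]
        refine (abs_sub _ _).trans ?_
        have h1 : |∑ j : Fin nm, (x (Sum.inr j) ^ 2 - y (Sum.inr j) ^ 2)| ≤ nm * (D * (m * S)) := by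
          refine (Finset.abs_sum_le_sum_abs _ _).trans ?_
          refine (Finset.sum_le_card_nsmul _ _ (D * (m * S)) fun j _ => hprod _ (by simp)).trans ?_
          simp
        have h2 : |∑ j ∈ Finset.univ.erase i, (x (Sum.inl j) ^ 2 - y (Sum.inl j) ^ 2)|
            ≤ np * (D * (m * S)) := by
          refine (Finset.abs_sum_le_sum_abs _ _).trans ?_
          refine (Finset.sum_le_card_nsmul _ _ (D * (m * S)) fun j hj' => hprod _ (by
            simpa using (Finset.mem_erase.1 hj').1)).trans ?_
          rw [nsmul_eq_mul]
          apply mul_le_mul_of_nonneg_right _ (by positivity)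
          have : (Finset.univ.erase i).card ≤ np := by
            simp
          exact_mod_cast this
        have h3 : (m : ℝ) = np + nm := by rw [← hsum]; push_cast; ring
        calc _ ≤ nm * (D * (m * S)) + np * (D * (m * S)) := add_le_add h1 h2
          _ = (np + nm) * (D * (m * S)) := by ring
          _ = _ := by rw [← h3]
      have : x (Sum.inl i) ^ 2 - y (Sum.inl i) ^ 2 =
        (x (Sum.inl i) - y (Sum.inl i)) * (x (Sum.inl i) + y (Sum.inl i)) := by ring
      rw [this, abs_mul, habs] at hb
      refine le_of_mul_le_mul_right ?_ hpos
      linarith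
  have hall : ∀ j, |x j - y j| ≤ (m : ℝ) ^ 2 * D := by
    intro j
    by_cases h : j = Sum.inl i
    · rw [h]; exact hi
    · refine (hj j h).trans ?_
      nlinarith [one_le_pow₀ hm1 (n := 2)]
  rw [EuclideanSpace.dist_eq]
  apply Real.sqrt_le_iff.2 ⟨by positivity, ?_⟩
  have h : ∑ j, dist (x j) (y j) ^ 2 ≤ m * ((m : ℝ) ^ 2 * D) ^ 2 := by
    refine (Finset.sum_le_card_nsmul _ _ (((m : ℝ) ^ 2 * D) ^ 2) fun j _ => ?_).trans ?_
    · rw [Real.dist_eq]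
      exact pow_le_pow_left₀ (abs_nonneg _) (hall j) 2
    · simp [← hsum]
  refine h.trans ?_
  have : (m : ℝ) ≤ m ^ 2 := by nlinarith
  calc (m : ℝ) * ((m : ℝ) ^ 2 * D) ^ 2 ≤ m ^ 2 * ((m : ℝ) ^ 2 * D) ^ 2 := by gcongr
    _ = _ := by ring

lemma qm_area (m np nm : ℕ) (hm : 2 ≤ m) (hsum : np + nm = m) :
    ∃ C > (0 : ℝ), ∀ t > (0 : ℝ), ∀ r ≥ (0 : ℝ),
      μH[(m : ℝ) - 1] {x : EuclideanSpace ℝ (Fin np ⊕ Fin nm) |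
            ‖x‖ ≤ r ∧ quadMorseModel np nm x = t} ≤ ENNReal.ofReal (C * r ^ (m - 1)) := by
  classical
  have hm1 : (1 : ℝ) ≤ m := by exact_mod_cast (by omega : 1 ≤ m)
  let K : NNReal := (m : NNReal) ^ 3
  have hKc : (K : ℝ) = (m : ℝ) ^ 3 := by simp [K]
  refine ⟨(2 * m) * (K * 2) ^ (m - 1), by rw [hKc]; positivity, fun t ht r hr => ?_⟩
  let E : Fin np × Bool → Set (EuclideanSpace ℝ (Fin np ⊕ Fin nm)) := fun q =>
    {x | (‖x‖ ≤ r ∧ quadMorseModel np nm x = t) ∧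
      (∀ j, |x j| ≤ m * |x (Sum.inl q.1)|) ∧ 0 ≤ (if q.2 then (1 : ℝ) else -1) * x (Sum.inl q.1)}
  have hcov : {x : EuclideanSpace ℝ (Fin np ⊕ Fin nm) |
            ‖x‖ ≤ r ∧ quadMorseModel np nm x = t} ⊆ ⋃ q, E q := by
    intro x hx
    have hT : (∑ i : Fin np, x (Sum.inl i) ^ 2) - ∑ j : Fin nm, x (Sum.inr j) ^ 2 = t := hx.2
    have hne : Nonempty (Fin np) := by
      by_contra h
      rw [not_nonempty_iff] at h
      have : 0 ≤ ∑ j : Fin nm, x (Sum.inr j) ^ 2 := Finset.sum_nonneg fun _ _ => sq_nonneg _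
      rw [Finset.univ_eq_empty, Finset.sum_empty] at hT
      linarith
    obtain ⟨i, hi⟩ := Finite.exists_max (fun i : Fin np => |x (Sum.inl i)|)
    have hall : ∀ j, |x j| ≤ m * |x (Sum.inl i)| := by
      rintro (j | j)
      · exact (hi j).trans (by nlinarith [abs_nonneg (x (Sum.inl i))])
      · have h1 : x (Sum.inr j) ^ 2 ≤ ∑ j : Fin nm, x (Sum.inr j) ^ 2 :=
          Finset.single_le_sum (f := fun j => x (Sum.inr j) ^ 2) (fun _ _ => sq_nonneg _) (Finset.mem_univ j)
        have h2 : ∑ i : Fin np, x (Sum.inl i) ^ 2 ≤ np * |x (Sum.inl i)| ^ 2 := by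
          refine (Finset.sum_le_card_nsmul _ _ (|x (Sum.inl i)| ^ 2) fun j _ => ?_).trans ?_
          · rw [← sq_abs]; exact pow_le_pow_left₀ (abs_nonneg _) (hi j) 2
          · simp
        have h3 : (np : ℝ) ≤ m := by exact_mod_cast (by omega : np ≤ m)
        have h4 : (np : ℝ) * |x (Sum.inl i)| ^ 2 ≤ m ^ 2 * |x (Sum.inl i)| ^ 2 := by
          apply mul_le_mul_of_nonneg_right _ (by positivity)
          nlinarith
        apply abs_le_of_sq_le_sq' _ (by positivity) |> abs_le.2
        nlinarith
    rw [Set.mem_iUnion]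
    rcases le_total 0 (x (Sum.inl i)) with h | h
    · exact ⟨(i, true), hx, hall, by simpa using h⟩
    · exact ⟨(i, false), hx, hall, by simpa using h⟩
  have hpiece : ∀ q, μH[(m : ℝ) - 1] (E q) ≤
      ENNReal.ofReal ((K * 2) ^ (m - 1) * r ^ (m - 1)) := by
    rintro ⟨i, b⟩
    refine qm_piece (Sum.inl i) m (by simp [hsum]) hm _ K r hr (fun x hx => hx.1.1) ?_
    intro x hx y hy
    rw [hKc]
    refine qm_lip m hsum hm i t x y hx.1.2 hy.1.2 hx.2.1 hy.2.1 ?_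
    have h := mul_nonneg hx.2.2 hy.2.2
    cases b <;> simpa using h
  calc _ ≤ μH[(m : ℝ) - 1] (⋃ q, E q) := measure_mono hcov
    _ ≤ ∑ q, μH[(m : ℝ) - 1] (E q) := measure_iUnion_fintype_le _ _
    _ ≤ ∑ q : Fin np × Bool, ENNReal.ofReal ((K * 2) ^ (m - 1) * r ^ (m - 1)) :=
        Finset.sum_le_sum fun q _ => hpiece q
    _ = (np * 2 : ℕ) * ENNReal.ofReal ((K * 2) ^ (m - 1) * r ^ (m - 1)) := by simp
    _ ≤ _ := by
      rw [← ENNReal.ofReal_natCast, ← ENNReal.ofReal_mul (by positivity)]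
      apply ENNReal.ofReal_le_ofReal
      rw [mul_assoc]
      apply mul_le_mul_of_nonneg_right _ (by positivity)
      push_cast
      have h3 : (np : ℝ) ≤ m := by exact_mod_cast (by omega : np ≤ m)
      linarith

lemma qm_shell (m np nm : ℕ) (hm : 2 ≤ m) (hsum : np + nm = m) :
    ∃ C > (0 : ℝ), ∀ k : ℕ, ∀ t > (0 : ℝ), ∀ a > (0 : ℝ),
      ∫⁻ x in {x : EuclideanSpace ℝ (Fin np ⊕ Fin nm) |
            (a ≤ ‖x‖ ∧ ‖x‖ ≤ 2 * a) ∧ quadMorseModel np nm x = t},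
          ENNReal.ofReal (‖x‖⁻¹ ^ k) ∂μH[(m : ℝ) - 1] ≤
        ENNReal.ofReal (C * a ^ (m - 1) * a⁻¹ ^ k) := by
  obtain ⟨C, hC, h⟩ := qm_area m np nm hm hsum
  refine ⟨C * 2 ^ (m - 1), by positivity, fun k t ht a ha => ?_⟩
  have hcont : Continuous (quadMorseModel np nm) := by
    unfold quadMorseModel; fun_prop
  have hmeas : MeasurableSet {x : EuclideanSpace ℝ (Fin np ⊕ Fin nm) |
            (a ≤ ‖x‖ ∧ ‖x‖ ≤ 2 * a) ∧ quadMorseModel np nm x = t} := by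
    apply IsClosed.measurableSet
    exact ((isClosed_le continuous_const continuous_norm).inter
      (isClosed_le continuous_norm continuous_const)).inter (isClosed_eq hcont continuous_const)
  calc _ ≤ ∫⁻ x in {x : EuclideanSpace ℝ (Fin np ⊕ Fin nm) |
            (a ≤ ‖x‖ ∧ ‖x‖ ≤ 2 * a) ∧ quadMorseModel np nm x = t},
          ENNReal.ofReal (a⁻¹ ^ k) ∂μH[(m : ℝ) - 1] := by
        apply setLIntegral_mono' hmeas
        intro x hx
        apply ENNReal.ofReal_le_ofReal
        have := hx.1.1
        gcongr
    _ = ENNReal.ofReal (a⁻¹ ^ k) * μH[(m : ℝ) - 1] {x : EuclideanSpace ℝ (Fin np ⊕ Fin nm) |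
            (a ≤ ‖x‖ ∧ ‖x‖ ≤ 2 * a) ∧ quadMorseModel np nm x = t} := setLIntegral_const _ _
    _ ≤ ENNReal.ofReal (a⁻¹ ^ k) * ENNReal.ofReal (C * (2 * a) ^ (m - 1)) := by
        gcongr
        refine (measure_mono ?_).trans (h t ht (2 * a) (by positivity))
        exact fun x hx => ⟨hx.1.2, hx.2⟩
    _ = _ := by
        rw [← ENNReal.ofReal_mul (by positivity)]
        congr 1
        rw [mul_pow]; ring

lemma qm_norm {np nm : ℕ} {t : ℝ} (x : EuclideanSpace ℝ (Fin np ⊕ Fin nm))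
    (hx : quadMorseModel np nm x = t) : √t ≤ ‖x‖ := by
  rw [EuclideanSpace.norm_eq]
  apply Real.sqrt_le_sqrt
  rw [← hx, quadMorseModel, Fintype.sum_sum_type]
  simp only [Real.norm_eq_abs, sq_abs]
  have : 0 ≤ ∑ j : Fin nm, x (Sum.inr j) ^ 2 := Finset.sum_nonneg fun _ _ => sq_nonneg _
  linarith

/-- geometric sum -/
lemma qm_geo (B : ℝ) (hB : 0 ≤ B) (f : ℕ → ℝ) (hf : ∀ j, f j ≤ B * (1 / 2) ^ j) :
    ∑' j, ENNReal.ofReal (f j) ≤ ENNReal.ofReal (B * 2) := by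
  calc _ ≤ ∑' j : ℕ, ENNReal.ofReal (B * (1 / 2) ^ j) :=
        ENNReal.tsum_le_tsum fun j => ENNReal.ofReal_le_ofReal (hf j)
    _ = ENNReal.ofReal (∑' j : ℕ, B * (1 / 2) ^ j) :=
        (ENNReal.ofReal_tsum_of_nonneg (fun j => by positivity)
          (summable_geometric_two.mul_left B)).symm
    _ = _ := by rw [tsum_mul_left, tsum_geometric_two]

lemma qm_cover {ι : Type*} [Countable ι] (m np nm k : ℕ) (t C : ℝ) (a : ι → ℝ)
    (S : Set (EuclideanSpace ℝ (Fin np ⊕ Fin nm)))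
    (hS : ∀ x ∈ S, quadMorseModel np nm x = t ∧ ∃ j, a j ≤ ‖x‖ ∧ ‖x‖ ≤ 2 * a j)
    (hC : ∀ j, ∫⁻ x in {x : EuclideanSpace ℝ (Fin np ⊕ Fin nm) |
            (a j ≤ ‖x‖ ∧ ‖x‖ ≤ 2 * a j) ∧ quadMorseModel np nm x = t},
          ENNReal.ofReal (‖x‖⁻¹ ^ k) ∂μH[(m : ℝ) - 1] ≤
        ENNReal.ofReal (C * a j ^ (m - 1) * (a j)⁻¹ ^ k)) :
    ∫⁻ x in S, ENNReal.ofReal (‖x‖⁻¹ ^ k) ∂μH[(m : ℝ) - 1] ≤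
      ∑' j, ENNReal.ofReal (C * a j ^ (m - 1) * (a j)⁻¹ ^ k) := by
  refine le_trans ?_ (ENNReal.tsum_le_tsum hC)
  refine le_trans ?_ (lintegral_iUnion_le _ _)
  apply lintegral_mono_set
  intro x hx
  obtain ⟨h, j, hj⟩ := hS x hx
  exact Set.mem_iUnion.2 ⟨j, hj, h⟩

/-- Integration along the level sets of the quadratic Morse model:
for `m = np + nm ≥ 2`, `ρ > 0` and `k ∈ ℕ` there is `A > 0` such that, for every
`t ∈ (0, 1/2]`, the integral of `‖x‖^{-k}` over `{‖x‖ ≤ ρ, T x = t}` with respect to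
`ℋ^{m-1}` is at most `A` if `k ≤ m − 2`, at most `A log(1/t)` if `k = m − 1`, and
at most `A t^{−(1+k−m)/2}` if `k ≥ m`. -/
theorem stmt7 (m np nm : ℕ) (hm : 2 ≤ m) (hsum : np + nm = m)
    (ρ : ℝ) (hρ : 0 < ρ) (k : ℕ) :
    ∃ A > (0 : ℝ), ∀ t : ℝ, t ∈ Set.Ioc (0 : ℝ) (1 / 2 : ℝ) →
      (k ≤ m - 2 →
        ∫⁻ x in {x : EuclideanSpace ℝ (Fin np ⊕ Fin nm) |
            ‖x‖ ≤ ρ ∧ quadMorseModel np nm x = t},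
          ENNReal.ofReal (‖x‖⁻¹ ^ k) ∂μH[(m : ℝ) - 1] ≤ ENNReal.ofReal A) ∧
      (k = m - 1 →
        ∫⁻ x in {x : EuclideanSpace ℝ (Fin np ⊕ Fin nm) |
            ‖x‖ ≤ ρ ∧ quadMorseModel np nm x = t},
          ENNReal.ofReal (‖x‖⁻¹ ^ k) ∂μH[(m : ℝ) - 1] ≤
          ENNReal.ofReal (A * Real.log (1 / t))) ∧
      (m ≤ k →
        ∫⁻ x in {x : EuclideanSpace ℝ (Fin np ⊕ Fin nm) |
            ‖x‖ ≤ ρ ∧ quadMorseModel np nm x = t},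
          ENNReal.ofReal (‖x‖⁻¹ ^ k) ∂μH[(m : ℝ) - 1] ≤
          ENNReal.ofReal (A * t ^ (-((1 + (k : ℝ) - (m : ℝ)) / 2)))) := by
  obtain ⟨C, hC, hsh⟩ := qm_shell m np nm hm hsum
  rcases (by omega : k + 2 ≤ m ∨ k = m - 1 ∨ m ≤ k) with hk | hk | hk
  · refine ⟨C * ρ ^ (m - 1 - k) * 2, by positivity, fun t ht =>
      ⟨fun _ => ?_, fun h => by omega, fun h => by omega⟩⟩
    have ht0 : 0 < t := ht.1
    refine (qm_cover m np nm k t C (fun j : ℕ => ρ * (1 / 2) ^ (j + 1)) _ ?_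
      fun j => hsh k t ht0 _ (by positivity)).trans ?_
    · rintro x ⟨hx, hT⟩
      refine ⟨hT, ?_⟩
      have hpos : 0 < ‖x‖ := (Real.sqrt_pos.2 ht0).trans_le (qm_norm x hT)
      obtain ⟨j, h1, h2⟩ := exists_nat_pow_near_of_lt_one (x := ‖x‖ / ρ) (y := (1 / 2 : ℝ))
        (by positivity) ((div_le_one hρ).2 hx) (by norm_num) (by norm_num)
      rw [lt_div_iff₀ hρ] at h1
      rw [div_le_iff₀ hρ] at h2
      refine ⟨j, by linarith, ?_⟩
      rw [pow_succ]
      linarith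
    · apply qm_geo _ (by positivity)
      intro j
      set a : ℝ := ρ * (1 / 2) ^ (j + 1) with ha
      have ha0 : 0 < a := by positivity
      have e : a ^ (m - 1) * a⁻¹ ^ k = a ^ (m - 1 - k) := by
        rw [show m - 1 = (m - 1 - k) + k by omega, pow_add, mul_assoc, ← mul_pow,
          mul_inv_cancel₀ ha0.ne']
        simp
      rw [mul_assoc, e, ha, mul_pow, ← mul_assoc]
      gcongr
      rw [← pow_mul]
      apply pow_le_pow_of_le_one (by norm_num) (by norm_num)
      have : 1 ≤ m - 1 - k := by omega
      nlinarith
  · set L2 := Real.log 2 with hL2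
    have hL2p : 0 < L2 := Real.log_pos (by norm_num)
    refine ⟨C * (|Real.log ρ| / L2 ^ 2 + 1 / (2 * L2) + 1 / L2), by positivity, fun t ht =>
      ⟨fun h => by omega, fun _ => ?_, fun h => by omega⟩⟩
    have ht0 : 0 < t := ht.1
    have hst : 0 < √t := Real.sqrt_pos.2 ht0
    set L := Real.log (1 / t) with hL
    have hLL : L2 ≤ L := by
      apply Real.log_le_log (by norm_num)
      rw [le_div_iff₀ ht0]
      linarith [ht.2]
    set N : ℕ := ⌊|Real.log ρ| / L2 + L / (2 * L2)⌋₊ + 1 with hN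
    have hNle : (N : ℝ) ≤ (|Real.log ρ| / L2 ^ 2 + 1 / (2 * L2) + 1 / L2) * L := by
      have h1 : (N : ℝ) ≤ |Real.log ρ| / L2 + L / (2 * L2) + 1 := by
        rw [hN]; push_cast
        gcongr
        exact Nat.floor_le (by have : 0 ≤ L := by linarith
                               positivity)
      have h2 : 1 ≤ L / L2 := (one_le_div hL2p).2 hLL
      have h3 : |Real.log ρ| / L2 ≤ |Real.log ρ| / L2 * (L / L2) :=
        le_mul_of_one_le_right (by positivity) h2
      have h4 : (|Real.log ρ| / L2 ^ 2 + 1 / (2 * L2) + 1 / L2) * L =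
        |Real.log ρ| / L2 * (L / L2) + L / (2 * L2) + L / L2 := by field_simp
      linarith
    refine (qm_cover m np nm k t C (fun j : Fin N => √t * 2 ^ (j : ℕ)) _ ?_
      fun j => hsh k t ht0 _ (by positivity)).trans ?_
    · rintro x ⟨hx, hT⟩
      refine ⟨hT, ?_⟩
      have hx1 := qm_norm x hT
      have hpos : 0 < ‖x‖ := hst.trans_le hx1
      obtain ⟨j, h1, h2⟩ := exists_nat_pow_near (x := ‖x‖ / √t) (y := (2 : ℝ))
        ((one_le_div hst).2 hx1) (by norm_num)
      rw [le_div_iff₀ hst] at h1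
      rw [div_lt_iff₀ hst] at h2
      have hj : j < N := by
        rw [hN, Nat.lt_succ_iff]
        apply Nat.le_floor
        have h3 : (2 : ℝ) ^ j * √t ≤ ρ := h1.trans hx
        have h4 := Real.log_le_log (by positivity) h3
        rw [Real.log_mul (by positivity) hst.ne', Real.log_pow, Real.log_sqrt ht0.le] at h4
        have h5 : Real.log t = - L := by rw [hL, one_div, Real.log_inv]; ring
        rw [h5] at h4
        have h6 : (|Real.log ρ| / L2 + L / (2 * L2)) = (|Real.log ρ| + L / 2) / L2 := by field_simp
        rw [h6, le_div_iff₀ hL2p]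
        linarith [le_abs_self (Real.log ρ)]
      refine ⟨⟨j, hj⟩, by simp only; linarith, ?_⟩
      rw [pow_succ] at h2
      simp only
      linarith
    · have : ∀ j : Fin N, C * (√t * 2 ^ (j : ℕ)) ^ (m - 1) * (√t * 2 ^ (j : ℕ))⁻¹ ^ k = C := by
        intro j
        rw [hk, mul_assoc, ← mul_pow, mul_inv_cancel₀ (by positivity)]
        simp
      simp only [this]
      rw [tsum_fintype, Finset.sum_const, Finset.card_univ, Fintype.card_fin, nsmul_eq_mul,
        ← ENNReal.ofReal_natCast, ← ENNReal.ofReal_mul (by positivity)]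
      apply ENNReal.ofReal_le_ofReal
      rw [mul_comm, mul_assoc]
      exact mul_le_mul_of_nonneg_left hNle hC.le
  · refine ⟨C * 2, by positivity, fun t ht =>
      ⟨fun h => by omega, fun h => by omega, fun _ => ?_⟩⟩
    have ht0 : 0 < t := ht.1
    have hst : 0 < √t := Real.sqrt_pos.2 ht0
    have hpw : t ^ (-((1 + (k : ℝ) - (m : ℝ)) / 2)) = (√t)⁻¹ ^ (k + 1 - m) := by
      rw [inv_pow, ← Real.rpow_natCast, Real.sqrt_eq_rpow, ← Real.rpow_mul ht0.le,
        ← Real.rpow_neg ht0.le, Nat.cast_sub (by omega)]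
      congr 1
      push_cast
      ring
    rw [hpw, show C * 2 * (√t)⁻¹ ^ (k + 1 - m) = (C * (√t)⁻¹ ^ (k + 1 - m)) * 2 by ring]
    refine (qm_cover m np nm k t C (fun j : ℕ => √t * 2 ^ j) _ ?_
      fun j => hsh k t ht0 _ (by positivity)).trans ?_
    · rintro x ⟨hx, hT⟩
      refine ⟨hT, ?_⟩
      have hx1 := qm_norm x hT
      obtain ⟨j, h1, h2⟩ := exists_nat_pow_near (x := ‖x‖ / √t) (y := (2 : ℝ))
        ((one_le_div hst).2 hx1) (by norm_num)
      rw [le_div_iff₀ hst] at h1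
      rw [div_lt_iff₀ hst] at h2
      refine ⟨j, by linarith, ?_⟩
      rw [pow_succ] at h2
      linarith
    · apply qm_geo _ (by positivity)
      intro j
      set a : ℝ := √t * 2 ^ j with ha
      have ha0 : 0 < a := by positivity
      have e : a ^ (m - 1) * a⁻¹ ^ k = a⁻¹ ^ (k + 1 - m) := by
        conv_lhs => rw [show k = (m - 1) + (k + 1 - m) by omega, pow_add, ← mul_assoc, ← mul_pow,
          mul_inv_cancel₀ ha0.ne']
        simp
      rw [mul_assoc, e, ha, mul_inv, mul_pow, ← mul_assoc]
      gcongr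
      rw [← inv_pow, ← pow_mul, ← one_div]
      apply pow_le_pow_of_le_one (by norm_num) (by norm_num)
      have : 1 ≤ k + 1 - m := by omega
      nlinarith
end
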